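/- arXiv:math/0503505 — 4 statements merged into one kernel-verified Lean document; each statement's English description precedes it below -/
import Mathlib

section
/- Let n ≥ 1, let k ≥ 2 be an even integer, and let f : ℝⁿ → ℝ be smooth with f(0) = 0, f(x) = f_k(x) + O(‖x‖^{k+1}) as x → 0, where f_k is homogeneous of degree k and f_k(x) > 0 for all x ≠ 0 (so 0 is a local minimum of f). Then there exists ε > 0 such that for every smooth compactly supported cut-off Θ with support in the ball B(0,ε), Θ = 1 near 0 and 0 ≤ Θ ≤ 1, the integral I_s(z) = ∫_{ℝⁿ} g(z f(x), x) Θ(x) dx admits a full asymptotic expansion as z → ∞: there exist real coefficients c_j, j ∈ ℕ, such that for every N ∈ ℕ, I_s(z) = Σ_{j=0}^{N} c_j z^{-j/k} + O(z^{-(N+1)/k}). -/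
open MeasureTheory Filter Asymptotics

open Set Topology

theorem contDiff_nat_parametric_intervalIntegral {P F : Type} [NormedAddCommGroup P]
    [NormedSpace ℝ P] [ProperSpace P] [NormedAddCommGroup F] [NormedSpace ℝ F] [CompleteSpace F]
    (m : ℕ) {φ : P × ℝ → F} (hφ : ContDiff ℝ m φ) (a b : ℝ) :
    ContDiff ℝ m fun p => ∫ t in a..b, φ (p, t) := by
  induction m generalizing F with
  | zero =>
    rw [Nat.cast_zero, contDiff_zero] at hφ ⊢
    exact intervalIntegral.continuous_parametric_intervalIntegral_of_continuous' (by exact hφ) a b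
  | succ m ih =>
    have hd : ContDiff ℝ m fun q : P × ℝ =>
        (fderiv ℝ φ q).comp (ContinuousLinearMap.inl ℝ P ℝ) :=
      (hφ.fderiv_right (m := m) (by norm_cast)).clm_comp contDiff_const
    have hdiff : Differentiable ℝ φ := hφ.differentiable (by positivity)
    push_cast
    rw [contDiff_succ_iff_hasFDerivAt]
    refine ⟨_, ih hd, fun x => ?_⟩
    obtain ⟨C, hC⟩ :=
      ((isCompact_closedBall x 1).prod isCompact_uIcc).exists_bound_of_continuousOn
      hd.continuous.continuousOn
    refine intervalIntegral.hasFDerivAt_integral_of_dominated_of_fderiv_le (𝕜 := ℝ)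
      (bound := fun _ => C)
      (F := fun p t => φ (p, t))
      (F' := fun p t => (fderiv ℝ φ (p, t)).comp (ContinuousLinearMap.inl ℝ P ℝ))
      (Metric.ball_mem_nhds x one_pos) ?_ ?_ ?_ ?_ ?_ ?_
    · exact .of_forall fun p => (hφ.continuous.comp (by fun_prop)).aestronglyMeasurable
    · exact (hφ.continuous.comp (by fun_prop)).intervalIntegrable _ _
    · exact (hd.continuous.comp (Continuous.prodMk_right x)).aestronglyMeasurable
    · refine .of_forall fun t ht p hp => hC (p, t) ⟨Metric.ball_subset_closedBall hp, ?_⟩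
      exact uIoc_subset_uIcc ht
    · exact intervalIntegrable_const
    · refine .of_forall fun t ht p hp => ?_
      exact (hdiff (p, t)).hasFDerivAt.comp p (hasFDerivAt_prodMk_left p t)

/-- A smooth function of `(r, ω)` vanishing at `r = 0` is divisible by `r`. -/
theorem exists_contDiff_eq_mul {E : Type} [NormedAddCommGroup E] [NormedSpace ℝ E]
    [ProperSpace E] {φ : ℝ × E → ℝ} (hφ : ContDiff ℝ (⊤ : ℕ∞) φ) (h0 : ∀ ω, φ (0, ω) = 0) :
    ∃ ψ : ℝ × E → ℝ, ContDiff ℝ (⊤ : ℕ∞) ψ ∧ ∀ r ω, φ (r, ω) = r * ψ (r, ω) := by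
  have hd : ContDiff ℝ (⊤ : ℕ∞) fun q => fderiv ℝ φ q (1, 0) :=
    (hφ.fderiv_right (m := (⊤ : ℕ∞)) le_rfl).clm_apply contDiff_const
  refine ⟨fun q => ∫ t in (0 : ℝ)..1, fderiv ℝ φ (t * q.1, q.2) (1, 0), ?_, fun r ω => ?_⟩
  · rw [contDiff_infty]
    intro m
    refine contDiff_nat_parametric_intervalIntegral m
      (φ := fun p : (ℝ × E) × ℝ => fderiv ℝ φ (p.2 * p.1.1, p.1.2) (1, 0)) ?_ 0 1
    exact (hd.of_le (by exact_mod_cast le_top)).comp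
      (by fun_prop : ContDiff ℝ m fun p : (ℝ × E) × ℝ => (p.2 * p.1.1, p.1.2))
  · have key : ∀ t ∈ uIcc (0 : ℝ) 1, HasDerivAt (fun t => φ (t * r, ω))
        (r * fderiv ℝ φ (t * r, ω) (1, 0)) t := fun t _ => by
      have h1 := (hφ.differentiable (by simp) (t * r, ω)).hasFDerivAt.comp_hasDerivAt t
        (((hasDerivAt_id t).mul_const r).prodMk (hasDerivAt_const t ω))
      have h2 : ((1 * r, 0) : ℝ × E) = r • (1, 0) := by simp
      rw [h2, map_smul] at h1
      exact h1
    have hc : Continuous fun t => r * fderiv ℝ φ (t * r, ω) (1, 0) :=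
      continuous_const.mul (hd.continuous.comp (by fun_prop : Continuous fun t : ℝ => (t * r, ω)))
    have := intervalIntegral.integral_eq_sub_of_hasDerivAt key (hc.intervalIntegrable _ _)
    rw [intervalIntegral.integral_const_mul] at this
    simp [h0] at this
    exact this.symm

theorem exists_contDiff_eq_pow_mul {E : Type} [NormedAddCommGroup E] [NormedSpace ℝ E]
    [ProperSpace E] (k : ℕ) {φ : ℝ × E → ℝ} (hφ : ContDiff ℝ (⊤ : ℕ∞) φ)
    (h0 : ∀ ω, (fun r => φ (r, ω)) =O[𝓝[>] 0] fun r => r ^ k) :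
    ∃ ψ : ℝ × E → ℝ, ContDiff ℝ (⊤ : ℕ∞) ψ ∧ ∀ r ω, φ (r, ω) = r ^ k * ψ (r, ω) := by
  induction k generalizing φ with
  | zero => exact ⟨φ, hφ, by simp⟩
  | succ k ih =>
    obtain ⟨ψ, hψ, h⟩ := exists_contDiff_eq_mul hφ fun ω => by
      have h1 : Tendsto (fun r => φ (r, ω)) (𝓝[>] 0) (𝓝 0) := by
        refine (h0 ω).trans_tendsto ?_
        have : Tendsto (fun r : ℝ => r ^ (k + 1)) (𝓝 0) (𝓝 (0 ^ (k + 1))) :=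
          (continuous_pow (k + 1)).tendsto 0
        simpa using this.mono_left nhdsWithin_le_nhds
      have h2 : Tendsto (fun r => φ (r, ω)) (𝓝[>] 0) (𝓝 (φ (0, ω))) :=
        ((hφ.continuous.comp (by fun_prop : Continuous fun r : ℝ => (r, ω))).tendsto 0).mono_left
          nhdsWithin_le_nhds
      exact tendsto_nhds_unique h2 h1
    obtain ⟨χ, hχ, h'⟩ := ih hψ fun ω => by
      have h1 : (fun r : ℝ => r⁻¹ * φ (r, ω)) =O[𝓝[>] 0] fun r => r⁻¹ * r ^ (k + 1) :=
        (isBigO_refl _ _).mul (h0 ω)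
      refine h1.congr' ?_ ?_
      · filter_upwards [self_mem_nhdsWithin] with r (hr : 0 < r)
        rw [h, inv_mul_cancel_left₀ hr.ne']
      · filter_upwards [self_mem_nhdsWithin] with r (hr : 0 < r)
        rw [pow_succ', inv_mul_cancel_left₀ hr.ne']
    exact ⟨χ, hχ, fun r ω => by rw [h, h', pow_succ']; ring⟩

/-- Finite sums of functions `(τ, r, ω) ↦ A (r, ω) * G (τ * h (r, ω), r • ω)`, `A` smooth on `U`
and `G` Schwartz. -/
inductive ConeSymbol {E : Type} [NormedAddCommGroup E] [NormedSpace ℝ E] (h : ℝ × E → ℝ)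
    (U : Set (ℝ × E)) : (ℝ → ℝ × E → ℝ) → Prop
  | mul (A : ℝ × E → ℝ) (hA : ContDiffOn ℝ (⊤ : ℕ∞) A U) (G : SchwartzMap (ℝ × E) ℝ) :
      ConeSymbol h U fun τ q => A q * G (τ * h q, q.1 • q.2)
  | add {p₁ p₂ : ℝ → ℝ × E → ℝ} (h₁ : ConeSymbol h U p₁) (h₂ : ConeSymbol h U p₂) :
      ConeSymbol h U fun τ q => p₁ τ q + p₂ τ q

namespace ConeSymbol

section

variable {E : Type} [NormedAddCommGroup E] [NormedSpace ℝ E] {h : ℝ × E → ℝ} {U : Set (ℝ × E)}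
  {p : ℝ → ℝ × E → ℝ}

theorem sum {ι : Type*} (s : Finset ι) {p : ι → ℝ → ℝ × E → ℝ} (hp : ∀ i, ConeSymbol h U (p i)) :
    ConeSymbol h U fun τ q => ∑ i ∈ s, p i τ q := by
  classical
  induction s using Finset.induction_on with
  | empty => simpa using ConeSymbol.mul (h := h) (U := U) (fun _ => 0) contDiffOn_const 0
  | insert i s hi ih =>
    simp only [Finset.sum_insert hi]
    exact (hp i).add ih

theorem continuousOn (hp : ConeSymbol h U p) (hh : Continuous h) :
    ContinuousOn (fun x : ℝ × (ℝ × E) => p x.1 x.2) (univ ×ˢ U) := by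
  induction hp with
  | mul A hA G =>
    refine ContinuousOn.mul (hA.continuousOn.comp continuousOn_snd fun x hx => hx.2) ?_
    exact (G.continuous.comp (by fun_prop)).continuousOn
  | add _ _ ih₁ ih₂ => exact ih₁.add ih₂

/-- Cone symbols decay rapidly in `τ`, uniformly on compact sets on which `h` is positive. -/
theorem exists_abs_le (hp : ConeSymbol h U p) (hh : Continuous h) (hU : ∀ q ∈ U, 0 < h q)
    {K : Set (ℝ × E)} (hK : IsCompact K) (hKU : K ⊆ U) (M : ℕ) :
    ∃ C, 0 ≤ C ∧ ∀ τ, 0 ≤ τ → ∀ q ∈ K, |p τ q| ≤ C / (1 + τ) ^ M := by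
  induction hp with
  | mul A hA G =>
    obtain ⟨a, ha⟩ := hK.exists_bound_of_continuousOn (hA.continuousOn.mono hKU)
    obtain ⟨c, hc, hc1, hch⟩ : ∃ c : ℝ, 0 < c ∧ c ≤ 1 ∧ ∀ q ∈ K, c ≤ h q := by
      rcases K.eq_empty_or_nonempty with rfl | hne
      · exact ⟨1, one_pos, le_rfl, by simp⟩
      · obtain ⟨q₀, hq₀, hmin⟩ := hK.exists_isMinOn hne hh.continuousOn
        exact ⟨min 1 (h q₀), lt_min one_pos (hU _ (hKU hq₀)), min_le_left _ _,
          fun q hq => (min_le_right _ _).trans (hmin hq)⟩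
    obtain ⟨B, hB⟩ : ∃ B, ∀ x, (1 + ‖x‖) ^ M * ‖G x‖ ≤ B :=
      ⟨_, fun x => by
        simpa using SchwartzMap.one_add_le_sup_seminorm_apply (𝕜 := ℝ) (m := (M, 0)) (k := M)
          (n := 0) le_rfl le_rfl G x⟩
    have hB0 : 0 ≤ B := le_trans (by positivity) (hB 0)
    refine ⟨|a| * (B / c ^ M), by positivity, fun τ hτ q hq => ?_⟩
    rw [abs_mul, mul_div_assoc]
    refine mul_le_mul ((ha q hq).trans (le_abs_self a)) ?_ (abs_nonneg _) (abs_nonneg _)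
    rw [div_div, le_div_iff₀ (by positivity), ← mul_pow, mul_comm]
    refine le_trans (mul_le_mul_of_nonneg_right (pow_le_pow_left₀ (by positivity) ?_ M)
      (abs_nonneg _)) (hB _)
    have h1 : τ * h q ≤ ‖(τ * h q, q.1 • q.2)‖ :=
      (le_abs_self _).trans (norm_fst_le (τ * h q, q.1 • q.2))
    have h2 : τ * c ≤ τ * h q := mul_le_mul_of_nonneg_left (hch q hq) hτ
    linarith
  | add _ _ ih₁ ih₂ =>
    obtain ⟨C₁, hC₁, H₁⟩ := ih₁
    obtain ⟨C₂, hC₂, H₂⟩ := ih₂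
    refine ⟨C₁ + C₂, by positivity, fun τ hτ q hq => ?_⟩
    rw [add_div]
    exact (abs_add_le _ _).trans (add_le_add (H₁ τ hτ q hq) (H₂ τ hτ q hq))

end

variable {E : Type} [NormedAddCommGroup E] [InnerProductSpace ℝ E] [FiniteDimensional ℝ E]
  {h : ℝ × E → ℝ} {U : Set (ℝ × E)} {p : ℝ → ℝ × E → ℝ}

/-- Cone symbols are stable under differentiation in `r`, because
`∂ᵣ G(τh, rω) = (∂ᵣh / h) • (u ∂ᵤG)(τh, rω) + ∂_ω G(τh, rω)`. -/
theorem exists_hasDerivAt (hp : ConeSymbol h U p) (hh : ContDiff ℝ (⊤ : ℕ∞) h) (hUo : IsOpen U)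
    (hU : ∀ q ∈ U, 0 < h q) :
    ∃ p', ConeSymbol h U p' ∧
      ∀ τ r ω, (r, ω) ∈ U → HasDerivAt (fun r => p τ (r, ω)) (p' τ (r, ω)) r := by
  induction hp with
  | mul A hA G =>
    have hA' : ContDiffOn ℝ (⊤ : ℕ∞) (fun q => fderiv ℝ A q (1, 0)) U :=
      (hA.fderiv_of_isOpen hUo (m := (⊤ : ℕ∞)) le_rfl).clm_apply contDiffOn_const
    have hh' : ContDiff ℝ (⊤ : ℕ∞) fun q => fderiv ℝ h q (1, 0) :=
      (hh.fderiv_right (m := (⊤ : ℕ∞)) le_rfl).clm_apply contDiff_const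
    have hlog : ContDiffOn ℝ (⊤ : ℕ∞) (fun q => A q * (fderiv ℝ h q (1, 0) / h q)) U :=
      hA.mul (hh'.contDiffOn.div hh.contDiffOn fun q hq => (hU q hq).ne')
    have hfst : Function.HasTemperateGrowth (fun x : ℝ × E => x.1) :=
      (ContinuousLinearMap.fst ℝ ℝ E).hasTemperateGrowth
    let b := stdOrthonormalBasis ℝ E
    let D (v : ℝ × E) : SchwartzMap (ℝ × E) ℝ := LineDeriv.lineDerivOp v G
    refine ⟨_, (ConeSymbol.mul _ hA' G).add ((ConeSymbol.mul _ hlog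
      (SchwartzMap.smulLeftCLM ℝ (fun x : ℝ × E => x.1) (D (1, 0)))).add
      (ConeSymbol.sum Finset.univ fun i => ConeSymbol.mul (fun q => A q * inner ℝ (b i) q.2)
        (hA.mul (contDiff_const.inner ℝ contDiff_snd).contDiffOn) (D (0, b i)))), fun τ r ω hq => ?_⟩
    have hcurve : HasDerivAt (fun r : ℝ => (r, ω)) (1, 0) r :=
      (hasDerivAt_id r).prodMk (hasDerivAt_const r ω)
    have h1 := ((hA.contDiffAt (hUo.mem_nhds hq)).differentiableAt
      (by simp)).hasFDerivAt.comp_hasDerivAt r hcurve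
    have h2 := ((hh.differentiable (by simp)) (r, ω)).hasFDerivAt.comp_hasDerivAt r hcurve
    have h3 := (G.differentiableAt (x := (τ * h (r, ω), r • ω))).hasFDerivAt.comp_hasDerivAt r
      ((h2.const_mul τ).prodMk ((hasDerivAt_id r).smul_const ω))
    refine (h1.mul h3).congr_deriv ?_
    have hne := (hU _ hq).ne'
    have hω : ∑ i, inner ℝ (b i) ω • b i = ω := b.sum_repr' ω
    have hvec : ((τ * fderiv ℝ h (r, ω) (1, 0), (1 : ℝ) • ω) : ℝ × E) =
        (τ * fderiv ℝ h (r, ω) (1, 0)) • ((1 : ℝ), (0 : E)) +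
          ∑ i, inner ℝ (b i) ω • ((0 : ℝ), b i) := by
      ext1
      · simp [Prod.fst_sum]
      · simp [Prod.snd_sum, hω]
    simp only [Function.comp_apply, hvec, map_add, map_sum, map_smul, D, id,
      SchwartzMap.smulLeftCLM_apply_apply hfst, SchwartzMap.lineDerivOp_apply_eq_fderiv,
      smul_eq_mul, mul_add, Finset.mul_sum]
    congr 2
    · field_simp
    · exact Finset.sum_congr rfl fun i _ => by ring
  | add _ _ ih₁ ih₂ =>
    obtain ⟨p₁', h₁, H₁⟩ := ih₁
    obtain ⟨p₂', h₂, H₂⟩ := ih₂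
    exact ⟨_, h₁.add h₂, fun τ r ω hq => (H₁ τ r ω hq).add (H₂ τ r ω hq)⟩

end ConeSymbol

/-- Taylor's inequality for a function given with its successive derivatives. -/
theorem abs_sub_taylor_le {u : ℕ → ℝ → ℝ} {ε C : ℝ}
    (hu : ∀ j, ∀ r ∈ Icc 0 ε, HasDerivAt (u j) (u (j + 1) r) r) (m : ℕ)
    (hC : ∀ r ∈ Icc 0 ε, |u m r| ≤ C) {r : ℝ} (hr : r ∈ Icc 0 ε) :
    |u 0 r - ∑ j ∈ Finset.range m, r ^ j * (u j 0 / j.factorial)| ≤ C * r ^ m := by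
  induction m generalizing u r with
  | zero => simpa using hC r hr
  | succ m ih =>
    have hr0 : (0 : ℝ) ≤ r := hr.1
    have hC0 : 0 ≤ C := (abs_nonneg _).trans (hC r hr)
    have hsub : ∀ x ∈ Icc 0 r, x ∈ Icc 0 ε := fun x hx => ⟨hx.1, hx.2.trans hr.2⟩
    have hd : ∀ x ∈ Icc 0 r, HasDerivWithinAt
        (fun x => u 0 x - ∑ j ∈ Finset.range (m + 1), x ^ j * (u j 0 / j.factorial))
        (u 1 x - ∑ j ∈ Finset.range m, x ^ j * (u (j + 1) 0 / j.factorial)) (Icc 0 r) x := by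
      intro x hx
      refine ((hu 0 x (hsub x hx)).sub ?_).hasDerivWithinAt
      have := HasDerivAt.fun_sum (u := Finset.range (m + 1)) fun j _ =>
        (hasDerivAt_pow j x).mul_const (u j 0 / (j.factorial : ℝ))
      refine this.congr_deriv ?_
      rw [Finset.sum_range_succ']
      simp only [Nat.cast_zero, zero_mul, add_zero]
      refine Finset.sum_congr rfl fun j _ => ?_
      rw [Nat.factorial_succ, Nat.add_sub_cancel]
      push_cast
      field_simp
    have hb : ∀ x ∈ Icc 0 r,
        ‖u 1 x - ∑ j ∈ Finset.range m, x ^ j * (u (j + 1) 0 / j.factorial)‖ ≤ C * r ^ m := by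
      intro x hx
      refine (ih (u := fun j => u (j + 1)) (fun j => hu (j + 1)) hC (hsub x hx)).trans ?_
      exact mul_le_mul_of_nonneg_left (pow_le_pow_left₀ hx.1 hx.2 m) hC0
    have := (convex_Icc 0 r).norm_image_sub_le_of_norm_hasDerivWithin_le hd hb
      (left_mem_Icc.2 hr0) (right_mem_Icc.2 hr0)
    have hz : ∑ j ∈ Finset.range (m + 1), (0 : ℝ) ^ j * (u j 0 / j.factorial) = u 0 0 := by
      rw [Finset.sum_range_succ']
      simp
    rw [hz, sub_self, sub_zero, sub_zero, Real.norm_eq_abs, Real.norm_of_nonneg hr0] at this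
    rw [pow_succ, ← mul_assoc]
    exact this

namespace ConeSymbol

variable {E : Type} [NormedAddCommGroup E] [InnerProductSpace ℝ E] [FiniteDimensional ℝ E]
  {h : ℝ × E → ℝ} {U : Set (ℝ × E)} {p : ℝ → ℝ × E → ℝ}

theorem exists_iterated_derivatives (hp : ConeSymbol h U p) (hh : ContDiff ℝ (⊤ : ℕ∞) h)
    (hUo : IsOpen U) (hU : ∀ q ∈ U, 0 < h q) :
    ∃ u : ℕ → ℝ → ℝ × E → ℝ, u 0 = p ∧ (∀ j, ConeSymbol h U (u j)) ∧
      ∀ j τ r ω, (r, ω) ∈ U → HasDerivAt (fun r => u j τ (r, ω)) (u (j + 1) τ (r, ω)) r := by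
  choose d hd hd' using fun p : {p // ConeSymbol h U p} => p.2.exists_hasDerivAt hh hUo hU
  let v : ℕ → {p // ConeSymbol h U p} := Nat.rec ⟨p, hp⟩ fun _ q => ⟨d q, hd q⟩
  exact ⟨fun j => (v j).1, rfl, fun j => (v j).2, fun j => hd' (v j)⟩

/-- Taylor's inequality in `r` for a function that agrees with a cone symbol for `r ≤ ε` and
vanishes for `r > ε`. -/
theorem exists_abs_sub_taylor_le {u : ℕ → ℝ → ℝ × E → ℝ} (hu : ∀ j, ConeSymbol h U (u j))
    (hh : Continuous h) (hU : ∀ q ∈ U, 0 < h q)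
    (hd : ∀ j τ r ω, (r, ω) ∈ U → HasDerivAt (fun r => u j τ (r, ω)) (u (j + 1) τ (r, ω)) r)
    {ε : ℝ} (hε : 0 < ε) (hKU : Icc 0 ε ×ˢ Metric.sphere (0 : E) 1 ⊆ U) (m M : ℕ) :
    ∃ C, 0 ≤ C ∧ ∀ τ, 0 ≤ τ → ∀ r, 0 ≤ r → ∀ ω ∈ Metric.sphere (0 : E) 1, ∀ v,
      (r ≤ ε → v = u 0 τ (r, ω)) → (ε < r → v = 0) →
      |v - ∑ j ∈ Finset.range m, r ^ j * (u j τ (0, ω) / j.factorial)| ≤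
        C * r ^ m / (1 + τ) ^ M := by
  have hK : IsCompact (Icc 0 ε ×ˢ Metric.sphere (0 : E) 1) :=
    isCompact_Icc.prod (isCompact_sphere _ _)
  choose C hC0 hC using fun j => (hu j).exists_abs_le hh hU hK hKU M
  refine ⟨C m + ∑ j ∈ Finset.range m, C j / ε ^ (m - j), add_nonneg (hC0 m)
    (Finset.sum_nonneg fun j _ => div_nonneg (hC0 j) (by positivity)),
    fun τ hτ r hr ω hω v hv hv0 => ?_⟩
  have hsum : 0 ≤ ∑ j ∈ Finset.range m, C j / ε ^ (m - j) :=
    Finset.sum_nonneg fun j _ => div_nonneg (hC0 j) (by positivity)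
  rcases le_or_gt r ε with hrε | hrε
  · rw [hv hrε]
    refine (abs_sub_taylor_le (u := fun j r => u j τ (r, ω)) (ε := ε)
      (fun j r hr => hd j τ r ω (hKU ⟨hr, hω⟩)) m
      (fun r hr => hC m τ hτ (r, ω) ⟨hr, hω⟩) ⟨hr, hrε⟩).trans ?_
    rw [div_mul_eq_mul_div]
    gcongr
    linarith
  · rw [hv0 hrε, zero_sub, abs_neg]
    have hterm : ∀ j ∈ Finset.range m, |r ^ j * (u j τ (0, ω) / j.factorial)| ≤
        C j / ε ^ (m - j) * (r ^ m / (1 + τ) ^ M) := by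
      intro j hj
      have hjm : j + (m - j) = m := Nat.add_sub_cancel' (Finset.mem_range.1 hj).le
      have h1 : |u j τ (0, ω) / j.factorial| ≤ C j / (1 + τ) ^ M := by
        rw [abs_div, Nat.abs_cast]
        refine (div_le_self (abs_nonneg _) ?_).trans
          (hC j τ hτ (0, ω) ⟨⟨le_rfl, hε.le⟩, hω⟩)
        exact_mod_cast Nat.one_le_iff_ne_zero.2 j.factorial_ne_zero
      have h2 : r ^ j * ε ^ (m - j) ≤ r ^ m := by
        rw [← hjm, pow_add, hjm]
        gcongr
      rw [abs_mul, abs_of_nonneg (by positivity : 0 ≤ r ^ j)]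
      calc r ^ j * |u j τ (0, ω) / j.factorial| ≤ r ^ m / ε ^ (m - j) * (C j / (1 + τ) ^ M) := by
            refine mul_le_mul ?_ h1 (abs_nonneg _) (by positivity)
            rwa [le_div_iff₀ (by positivity)]
        _ = _ := by ring
    refine (Finset.abs_sum_le_sum_abs _ _).trans ((Finset.sum_le_sum hterm).trans ?_)
    rw [← Finset.sum_mul, mul_div_assoc]
    gcongr
    linarith [hC0 m]

end ConeSymbol

theorem integrable_norm_pow_div_one_add_norm_pow {E : Type} [NormedAddCommGroup E]
    [NormedSpace ℝ E] [FiniteDimensional ℝ E] [MeasurableSpace E] [BorelSpace E] (μ : Measure E)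
    [μ.IsAddHaarMeasure] {k : ℕ} (hk : k ≠ 0) (m : ℕ) :
    Integrable (fun y : E => ‖y‖ ^ m / (1 + ‖y‖ ^ k) ^ (m + Module.finrank ℝ E + 1)) μ := by
  set d := Module.finrank ℝ E
  have h_int := (integrable_one_add_norm (E := E) (μ := μ) (r := (d + 1 : ℕ))
    (by push_cast; linarith)).const_mul (2 ^ (m + d + 1))
  refine h_int.mono' ?_ (.of_forall fun y => ?_)
  · refine Continuous.aestronglyMeasurable (Continuous.div (by fun_prop) (by fun_prop) fun y => ?_)
    positivity
  · have ht : 0 ≤ ‖y‖ := norm_nonneg y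
    have h1 : 1 + ‖y‖ ≤ 2 * (1 + ‖y‖ ^ k) := by
      rcases le_total ‖y‖ 1 with h | h
      · have : 0 ≤ ‖y‖ ^ k := by positivity
        linarith
      · have := le_self_pow₀ h hk
        linarith
    rw [Real.norm_of_nonneg (by positivity), Real.rpow_neg (by positivity), Real.rpow_natCast,
      ← div_eq_mul_inv, div_le_div_iff₀ (by positivity) (by positivity)]
    calc ‖y‖ ^ m * (1 + ‖y‖) ^ (d + 1) ≤ (1 + ‖y‖) ^ m * (1 + ‖y‖) ^ (d + 1) := by
          gcongr
          linarith
      _ = (1 + ‖y‖) ^ (m + d + 1) := by ring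
      _ ≤ (2 * (1 + ‖y‖ ^ k)) ^ (m + d + 1) := by gcongr
      _ = _ := mul_pow _ _ _

/-- Expansion of the rescaled integral `∫ g(z f(sy), sy) Θ(sy) dy`, where `z * s ^ k = 1`. -/
theorem exists_expansion_rescaled_integral {E : Type} [NormedAddCommGroup E]
    [InnerProductSpace ℝ E] [FiniteDimensional ℝ E] [Nontrivial E] [MeasurableSpace E]
    [BorelSpace E] (μ : Measure E) [μ.IsAddHaarMeasure] {k : ℕ} (hk : k ≠ 0)
    {f : E → ℝ} (hf : Continuous f) {h : ℝ × E → ℝ} (hh : ContDiff ℝ (⊤ : ℕ∞) h)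
    (hfh : ∀ r ω, f (r • ω) = r ^ k * h (r, ω)) {ε : ℝ} (hε : 0 < ε)
    (hpos : ∀ q ∈ Icc 0 ε ×ˢ Metric.sphere (0 : E) 1, 0 < h q)
    (g : SchwartzMap (ℝ × E) ℝ) {Θ : E → ℝ} (hΘ : ContDiff ℝ (⊤ : ℕ∞) Θ)
    (hΘc : HasCompactSupport Θ) (hΘε : tsupport Θ ⊆ Metric.ball 0 ε) :
    ∃ c : ℕ → ℝ, ∀ m : ℕ, ∃ C, ∀ z s : ℝ, 0 < s → z * s ^ k = 1 →
      |(∫ y, g (z * f (s • y), s • y) * Θ (s • y) ∂μ) - ∑ j ∈ Finset.range m, c j * s ^ j| ≤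
        C * s ^ m := by
  set U : Set (ℝ × E) := {q | 0 < h q}
  have hUo : IsOpen U := isOpen_lt continuous_const hh.continuous
  have hU : ∀ q ∈ U, 0 < h q := fun q hq => hq
  obtain ⟨u, hu0, hu, hd⟩ := (ConeSymbol.mul (h := h) (U := U) (fun q => Θ (q.1 • q.2))
    (hΘ.comp (contDiff_fst.smul contDiff_snd)).contDiffOn g).exists_iterated_derivatives hh hUo hU
  have htaylor := ConeSymbol.exists_abs_sub_taylor_le hu hh.continuous hU hd hε hpos
  have hsphere : ∀ y : E, y ≠ 0 → ‖y‖⁻¹ • y ∈ Metric.sphere (0 : E) 1 := fun y hy => by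
    simp [norm_smul, hy]
  have hae : ∀ᵐ y ∂μ, y ≠ 0 := by simp [ae_iff]
  let J (j : ℕ) (y : E) : ℝ := ‖y‖ ^ j * (u j (‖y‖ ^ k) (0, ‖y‖⁻¹ • y) / j.factorial)
  have hJ : ∀ j, Integrable (J j) μ := by
    intro j
    obtain ⟨C, -, hC⟩ := (hu j).exists_abs_le hh.continuous hU
      (isCompact_Icc.prod (isCompact_sphere (0 : E) 1)) hpos (j + Module.finrank ℝ E + 1)
    refine ((integrable_norm_pow_div_one_add_norm_pow μ hk j).const_mul C).mono' ?_ ?_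
    · have hcont : ContinuousOn (J j) {0}ᶜ := by
        refine ContinuousOn.mul (by fun_prop) (ContinuousOn.div_const ?_ _)
        refine ((hu j).continuousOn hh.continuous).comp
          (f := fun y : E => (‖y‖ ^ k, ((0 : ℝ), ‖y‖⁻¹ • y))) ?_ fun y hy =>
            ⟨mem_univ _, hpos _ ⟨⟨le_rfl, hε.le⟩, hsphere y hy⟩⟩
        refine ContinuousOn.prodMk (by fun_prop) (continuousOn_const.prodMk ?_)
        exact (continuous_norm.continuousOn.inv₀ fun y hy => norm_ne_zero_iff.2 hy).smul
          continuousOn_id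
      have := hcont.aestronglyMeasurable (μ := μ) (measurableSet_singleton 0).compl
      rwa [Measure.restrict_eq_self_of_ae_mem (s := {0}ᶜ) hae] at this
    · filter_upwards [hae] with y hy
      have h1 := hC (‖y‖ ^ k) (by positivity) (0, ‖y‖⁻¹ • y) ⟨⟨le_rfl, hε.le⟩, hsphere y hy⟩
      have h2 : |u j (‖y‖ ^ k) (0, ‖y‖⁻¹ • y) / j.factorial| ≤
          |u j (‖y‖ ^ k) (0, ‖y‖⁻¹ • y)| := by
        rw [abs_div, Nat.abs_cast]
        refine div_le_self (abs_nonneg _) ?_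
        exact_mod_cast Nat.one_le_iff_ne_zero.2 j.factorial_ne_zero
      rw [norm_mul, norm_pow, norm_norm, Real.norm_eq_abs]
      refine (mul_le_mul_of_nonneg_left (h2.trans h1) (by positivity)).trans_eq ?_
      ring
  refine ⟨fun j => ∫ y, J j y ∂μ, fun m => ?_⟩
  set M := m + Module.finrank ℝ E + 1
  obtain ⟨C, hC0, hC⟩ := htaylor m M
  refine ⟨C * ∫ y, ‖y‖ ^ m / (1 + ‖y‖ ^ k) ^ M ∂μ, fun z s hs hzs => ?_⟩
  have hΦ : Integrable (fun y => g (z * f (s • y), s • y) * Θ (s • y)) μ := by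
    refine Continuous.integrable_of_hasCompactSupport ?_ ?_
    · exact (g.continuous.comp (by fun_prop)).mul (hΘ.continuous.comp (by fun_prop))
    · exact (hΘc.comp_smul hs.ne').mul_left
  have hsum : ∑ j ∈ Finset.range m, (∫ y, J j y ∂μ) * s ^ j =
      ∫ y, ∑ j ∈ Finset.range m, J j y * s ^ j ∂μ := by
    rw [integral_finsetSum _ fun j _ => (hJ j).mul_const _]
    simp only [integral_mul_const]
  rw [hsum, ← integral_sub hΦ (integrable_finsetSum _ fun j _ => (hJ j).mul_const _),
    ← Real.norm_eq_abs, mul_right_comm, ← integral_const_mul]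
  refine norm_integral_le_of_norm_le
    ((integrable_norm_pow_div_one_add_norm_pow μ hk m).const_mul _) ?_
  filter_upwards [hae] with y hy
  have hy' : ‖y‖ ≠ 0 := norm_ne_zero_iff.2 hy
  have hr : (s * ‖y‖) • ‖y‖⁻¹ • y = s • y := by
    rw [smul_smul, mul_assoc, mul_inv_cancel₀ hy', mul_one]
  have key := hC (‖y‖ ^ k) (by positivity) (s * ‖y‖) (by positivity) _ (hsphere y hy)
    (g (z * f (s • y), s • y) * Θ (s • y)) ?_ ?_
  · rw [Real.norm_eq_abs]
    convert key using 1
    · congr 2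
      exact Finset.sum_congr rfl fun j _ => by simp only [J]; ring
    · ring
  · intro _
    have hz : z * f (s • y) = ‖y‖ ^ k * h (s * ‖y‖, ‖y‖⁻¹ • y) := by
      rw [← hr, hfh, mul_pow]
      linear_combination (‖y‖ ^ k * h (s * ‖y‖, ‖y‖⁻¹ • y)) * hzs
    simp only [hu0, hr, hz]
    ring
  · intro hlt
    have : s • y ∉ tsupport Θ := fun hmem => by
      have := mem_ball_zero_iff.1 (hΘε hmem)
      rw [norm_smul, Real.norm_of_nonneg hs.le] at this
      linarith
    rw [image_eq_zero_of_notMem_tsupport this, mul_zero]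

/-- Theorem 1.2 (existence of the expansion for a local extremum): if `f` vanishes at `0` with
homogeneous positive-definite `k`-jet `f_k` (`k` even), then for every admissible cut-off `Θ`
supported near `0`, `I_s(z) = ∫ g(zf(x),x) Θ(x) dx` has a full expansion in powers `z^{-j/k}`. -/
theorem extremum_full_expansion
    (n k : ℕ) (hn : 1 ≤ n) (hk : 2 ≤ k) (hke : Even k)
    (f fk : EuclideanSpace ℝ (Fin n) → ℝ)
    (hf : ContDiff ℝ (⊤ : ℕ∞) f) (hf0 : f 0 = 0)
    (hfk_hom : ∀ c : ℝ, 0 < c → ∀ x, fk (c • x) = c ^ k * fk x)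
    (hfk_pos : ∀ x : EuclideanSpace ℝ (Fin n), x ≠ 0 → 0 < fk x)
    (hjet : ∃ C δ : ℝ, 0 < C ∧ 0 < δ ∧ ∀ x : EuclideanSpace ℝ (Fin n),
      ‖x‖ < δ → |f x - fk x| ≤ C * ‖x‖ ^ (k + 1))
    (g : SchwartzMap (ℝ × EuclideanSpace ℝ (Fin n)) ℝ) :
    ∃ ε : ℝ, 0 < ε ∧ ∀ Θ : EuclideanSpace ℝ (Fin n) → ℝ,
      ContDiff ℝ (⊤ : ℕ∞) Θ → HasCompactSupport Θ →
      tsupport Θ ⊆ Metric.ball 0 ε → (∀ᶠ x in nhds 0, Θ x = 1) →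
      (∀ x, 0 ≤ Θ x ∧ Θ x ≤ 1) →
      ∃ c : ℕ → ℝ, ∀ N : ℕ,
        (fun z : ℝ =>
            (∫ x, g (z * f x, x) * Θ x) -
            ∑ j ∈ Finset.range (N + 1), c j * z ^ (-(j : ℝ) / k))
          =O[atTop] fun z : ℝ => z ^ (-((N : ℝ) + 1) / k) := by
  obtain ⟨C₀, δ, hC₀, hδ, hjet⟩ := hjet
  have : Nonempty (Fin n) := ⟨⟨0, hn⟩⟩
  have hk0 : k ≠ 0 := by omega
  have hsmall : ∀ ω : EuclideanSpace ℝ (Fin n), ∀ᶠ r : ℝ in 𝓝[>] 0,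
      |f (r • ω) - r ^ k * fk ω| ≤ C₀ * ‖ω‖ ^ (k + 1) * r ^ (k + 1) := by
    intro ω
    have hlim : Tendsto (fun r : ℝ => ‖r • ω‖) (𝓝[>] 0) (𝓝 0) := by
      have : Continuous fun r : ℝ => ‖r • ω‖ := by fun_prop
      simpa using (this.tendsto 0).mono_left nhdsWithin_le_nhds
    filter_upwards [hlim.eventually_lt_const hδ, self_mem_nhdsWithin] with r hr (hr0 : 0 < r)
    have h1 := hjet _ hr
    rw [hfk_hom r hr0, norm_smul, Real.norm_of_nonneg hr0.le, mul_pow] at h1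
    linarith
  obtain ⟨h, hh, hfh⟩ := exists_contDiff_eq_pow_mul k
    (φ := fun q : ℝ × EuclideanSpace ℝ (Fin n) => f (q.1 • q.2))
    (hf.comp (contDiff_fst.smul contDiff_snd)) fun ω => by
      have h1 : (fun r : ℝ => f (r • ω) - r ^ k * fk ω) =O[𝓝[>] 0] fun r => r ^ k := by
        refine IsBigO.of_bound (C₀ * ‖ω‖ ^ (k + 1)) ?_
        filter_upwards [hsmall ω, Ioo_mem_nhdsGT one_pos] with r hr hr1
        refine hr.trans ?_
        rw [Real.norm_of_nonneg (pow_nonneg hr1.1.le k)]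
        exact mul_le_mul_of_nonneg_left (pow_le_pow_of_le_one hr1.1.le hr1.2.le (by omega))
          (by positivity)
      have h2 : (fun r : ℝ => r ^ k * fk ω) =O[𝓝[>] 0] fun r => r ^ k := by
        simpa only [mul_comm] using
          (isBigO_refl (fun r : ℝ => r ^ k) (𝓝[>] 0)).const_mul_left (fk ω)
      simpa using h1.add h2
  have hh0 : ∀ ω, h (0, ω) = fk ω := by
    intro ω
    have h1 : Tendsto (fun r => h (r, ω)) (𝓝[>] 0) (𝓝 (h (0, ω))) :=
      ((hh.continuous.comp (by fun_prop : Continuous fun r : ℝ => (r, ω))).tendsto 0).mono_left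
        nhdsWithin_le_nhds
    refine tendsto_nhds_unique h1 (tendsto_iff_norm_sub_tendsto_zero.2 ?_)
    refine squeeze_zero' (g := fun r => C₀ * ‖ω‖ ^ (k + 1) * r)
      (.of_forall fun r => norm_nonneg _) ?_ ?_
    · filter_upwards [hsmall ω, self_mem_nhdsWithin] with r hr (hr0 : 0 < r)
      have h2 : f (r • ω) - r ^ k * fk ω = r ^ k * (h (r, ω) - fk ω) := by
        rw [hfh r ω]
        ring
      rw [h2, abs_mul, abs_of_pos (pow_pos hr0 k)] at hr
      refine le_of_mul_le_mul_left (hr.trans_eq ?_) (pow_pos hr0 k)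
      ring
    · have : Continuous fun r : ℝ => C₀ * ‖ω‖ ^ (k + 1) * r := by fun_prop
      simpa using (this.tendsto 0).mono_left nhdsWithin_le_nhds
  obtain ⟨ε, hε, hpos⟩ : ∃ ε : ℝ, 0 < ε ∧
      ∀ q ∈ Icc 0 ε ×ˢ Metric.sphere (0 : EuclideanSpace ℝ (Fin n)) 1, 0 < h q := by
    obtain ⟨u, v, huo, -, hu, hv, huv⟩ := generalized_tube_lemma
      (isCompact_singleton (x := (0 : ℝ)))
      (isCompact_sphere (0 : EuclideanSpace ℝ (Fin n)) 1)
      (isOpen_lt continuous_const hh.continuous : IsOpen {q | 0 < h q}) (by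
        rintro ⟨r, ω⟩ ⟨hr : r = 0, hω⟩
        subst hr
        show 0 < h (0, ω)
        rw [hh0]
        exact hfk_pos ω (ne_zero_of_mem_unit_sphere ⟨ω, hω⟩))
    obtain ⟨η, hη, hball⟩ := Metric.isOpen_iff.1 huo 0 (hu rfl)
    refine ⟨η / 2, by positivity, fun q hq => huv ⟨hball ?_, hv hq.2⟩⟩
    rw [mem_ball_zero_iff, Real.norm_of_nonneg hq.1.1]
    linarith [hq.1.2]
  refine ⟨ε, hε, fun Θ hΘ hΘc hΘε _ _ => ?_⟩
  obtain ⟨c, hc⟩ := exists_expansion_rescaled_integral volume hk0 hf.continuous hh hfh hε hpos g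
    hΘ hΘc hΘε
  refine ⟨fun i => if i < n then 0 else c (i - n), fun N => ?_⟩
  obtain ⟨C, hC⟩ := hc (N + 1 - n)
  refine IsBigO.of_bound |C| ?_
  filter_upwards [eventually_ge_atTop 1] with z hz
  have hz0 : 0 < z := by linarith
  have hkR : (k : ℝ) ≠ 0 := by exact_mod_cast hk0
  set s : ℝ := z ^ (-1 / k : ℝ) with hs
  have hs0 : 0 < s := Real.rpow_pos_of_pos hz0 _
  have hs1 : s ≤ 1 := Real.rpow_le_one_of_one_le_of_nonpos hz
    (div_nonpos_of_nonpos_of_nonneg (by norm_num) (by positivity))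
  have hpow : ∀ j : ℕ, z ^ (-(j : ℝ) / k) = s ^ j := fun j => by
    rw [hs, ← Real.rpow_natCast, ← Real.rpow_mul hz0.le]
    congr 1
    ring
  have hzs : z * s ^ k = 1 := by
    rw [← hpow k, neg_div, div_self hkR, Real.rpow_neg_one, mul_inv_cancel₀ hz0.ne']
  have h_int : ∫ x, g (z * f x, x) * Θ x = s ^ n * ∫ y, g (z * f (s • y), s • y) * Θ (s • y) := by
    have := Measure.integral_comp_smul (volume : Measure (EuclideanSpace ℝ (Fin n)))
      (fun x => g (z * f x, x) * Θ x) s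
    rw [this, finrank_euclideanSpace_fin, abs_of_pos (by positivity), smul_eq_mul,
      mul_inv_cancel_left₀ (by positivity)]
  have hsum : ∑ j ∈ Finset.range (N + 1), (if j < n then 0 else c (j - n)) * s ^ j =
      s ^ n * ∑ j ∈ Finset.range (N + 1 - n), c j * s ^ j := by
    rw [Finset.mul_sum]
    rcases le_total (N + 1) n with hN | hN
    · rw [Nat.sub_eq_zero_of_le hN, Finset.range_zero, Finset.sum_empty]
      refine Finset.sum_eq_zero fun j hj => ?_
      rw [if_pos ((Finset.mem_range.1 hj).trans_le hN), zero_mul]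
    · conv_lhs => rw [← Nat.add_sub_cancel' hN, Finset.sum_range_add]
      rw [Finset.sum_eq_zero fun j hj => by rw [if_pos (Finset.mem_range.1 hj), zero_mul], zero_add]
      refine Finset.sum_congr rfl fun j _ => ?_
      rw [if_neg (by omega), Nat.add_sub_cancel_left, pow_add]
      ring
  have hN1 : z ^ (-((N : ℝ) + 1) / k) = s ^ (N + 1) := by
    rw [← hpow (N + 1)]
    push_cast
    rfl
  simp only [hpow]
  rw [hN1, h_int, hsum, ← mul_sub, norm_mul, Real.norm_of_nonneg (by positivity : 0 ≤ s ^ n),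
    Real.norm_of_nonneg (by positivity : 0 ≤ s ^ (N + 1)), Real.norm_eq_abs]
  calc s ^ n * _ ≤ s ^ n * (|C| * s ^ (N + 1 - n)) := by
        gcongr
        exact (hC z s hs0 hzs).trans (by gcongr; exact le_abs_self C)
    _ = |C| * s ^ (n + (N + 1 - n)) := by ring
    _ ≤ |C| * s ^ (N + 1) :=
        mul_le_mul_of_nonneg_left (pow_le_pow_of_le_one hs0.le hs1 (by omega)) (abs_nonneg C)
end

section
/- Let n ≥ 1, k ≥ 2 an integer, and let f : ℝⁿ → ℝ be smooth with f(0) = 0, ∇f(0) = 0, and f(x) = f_k(x) + O(‖x‖^{k+1}) as x → 0, where f_k is a nonzero function homogeneous of degree k satisfying the principal-type condition (H1): ∇f_k(x) ≠ 0 for every x ≠ 0 with f_k(x) = 0. Then there exists ε > 0 such that for every smooth compactly supported cut-off Θ with support in B(0,ε), Θ = 1 near 0 and 0 ≤ Θ ≤ 1, the integral I_s(z) = ∫_{ℝⁿ} g(z f(x), x) Θ(x) dx admits a full asymptotic expansion with logarithms: there exist real coefficients c_j (j ∈ ℕ) and d_j (j ∈ ℕ) such that for every N ∈ ℕ, I_s(z)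 = Σ_{j=0}^{N} c_j z^{-j/k} + Σ_{j ∈ ℕ, j ≤ N/k} d_j z^{-j} log z + O(z^{-(N+1)/k} log z) as z → ∞. -/
open MeasureTheory Filter Asymptotics

namespace PrincipalType

open scoped ContDiff

/-- The Euclidean space `ℝⁿ`. -/
abbrev Space (n : ℕ) := EuclideanSpace ℝ (Fin n)

variable {n : ℕ}

/-! ### Partial derivatives of functions of temperate growth -/

/-- The `i`-th partial derivative. -/
noncomputable def partialDeriv (i : Fin n) (h : Space n → ℝ) : Space n → ℝ :=
  fun x => fderiv ℝ h x (EuclideanSpace.single i 1)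

theorem hasTemperateGrowth_partialDeriv {h : Space n → ℝ} (hh : h.HasTemperateGrowth)
    (i : Fin n) : (partialDeriv i h).HasTemperateGrowth := by
  have hfd : (fderiv ℝ h).HasTemperateGrowth := by
    refine ⟨hh.1.fderiv_right (by simp), fun m => ?_⟩
    obtain ⟨k, C, hC⟩ := hh.2 (m + 1)
    refine ⟨k, C, fun x => ?_⟩
    rw [norm_iteratedFDeriv_fderiv]
    exact hC x
  exact (ContinuousLinearMap.apply ℝ ℝ
    (EuclideanSpace.single i (1 : ℝ) : Space n)).hasTemperateGrowth.comp hfd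

theorem differentiableAt_of_hasTemperateGrowth {h : Space n → ℝ} (hh : h.HasTemperateGrowth)
    (x : Space n) : DifferentiableAt ℝ h x :=
  (hh.1.differentiable (by simp)) x

theorem hasTemperateGrowth_coord (i : Fin n) :
    (fun x : Space n => x i).HasTemperateGrowth :=
  (EuclideanSpace.proj i : Space n →L[ℝ] ℝ).hasTemperateGrowth

theorem partialDeriv_add {h₁ h₂ : Space n → ℝ} (hh₁ : h₁.HasTemperateGrowth)
    (hh₂ : h₂.HasTemperateGrowth) (i : Fin n) :
    partialDeriv i (fun x => h₁ x + h₂ x)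
      = fun x => partialDeriv i h₁ x + partialDeriv i h₂ x := by
  ext x
  simp only [partialDeriv]
  rw [fderiv_fun_add (differentiableAt_of_hasTemperateGrowth hh₁ x)
    (differentiableAt_of_hasTemperateGrowth hh₂ x)]
  simp

theorem partialDeriv_mul {h₁ h₂ : Space n → ℝ} (hh₁ : h₁.HasTemperateGrowth)
    (hh₂ : h₂.HasTemperateGrowth) (i : Fin n) :
    partialDeriv i (fun x => h₁ x * h₂ x)
      = fun x => partialDeriv i h₁ x * h₂ x + h₁ x * partialDeriv i h₂ x := by
  ext x
  simp only [partialDeriv]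
  rw [fderiv_fun_mul (differentiableAt_of_hasTemperateGrowth hh₁ x)
    (differentiableAt_of_hasTemperateGrowth hh₂ x)]
  simp
  ring

theorem partialDeriv_const_mul {h : Space n → ℝ} (hh : h.HasTemperateGrowth) (c : ℝ)
    (i : Fin n) : partialDeriv i (fun x => c * h x) = fun x => c * partialDeriv i h x := by
  ext x
  simp only [partialDeriv]
  rw [fderiv_const_mul (differentiableAt_of_hasTemperateGrowth hh x)]
  simp

theorem partialDeriv_sub {h₁ h₂ : Space n → ℝ} (hh₁ : h₁.HasTemperateGrowth)
    (hh₂ : h₂.HasTemperateGrowth) (i : Fin n) :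
    partialDeriv i (fun x => h₁ x - h₂ x)
      = fun x => partialDeriv i h₁ x - partialDeriv i h₂ x := by
  ext x
  simp only [partialDeriv]
  rw [fderiv_fun_sub (differentiableAt_of_hasTemperateGrowth hh₁ x)
    (differentiableAt_of_hasTemperateGrowth hh₂ x)]
  simp

theorem partialDeriv_sum {ι : Type*} (s : Finset ι) {h : ι → Space n → ℝ}
    (hh : ∀ j, (h j).HasTemperateGrowth) (i : Fin n) :
    partialDeriv i (fun x => ∑ j ∈ s, h j x) = fun x => ∑ j ∈ s, partialDeriv i (h j) x := by
  ext x
  simp only [partialDeriv]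
  rw [fderiv_fun_sum fun j _ => differentiableAt_of_hasTemperateGrowth (hh j) x]
  simp

theorem partialDeriv_coord (i j : Fin n) :
    partialDeriv i (fun x : Space n => x j) = fun _ => if j = i then 1 else 0 := by
  ext x
  have : fderiv ℝ (fun x : Space n => x j) x = EuclideanSpace.proj j :=
    (EuclideanSpace.proj j : Space n →L[ℝ] ℝ).hasFDerivAt.fderiv
  simp only [partialDeriv, this]
  simp

theorem partialDeriv_const (i : Fin n) (c : ℝ) :
    partialDeriv i (fun _ : Space n => c) = fun _ => 0 := by
  ext x
  simp [partialDeriv]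

theorem partialDeriv_comm {h : Space n → ℝ} (hh : h.HasTemperateGrowth) (i j : Fin n) :
    partialDeriv i (partialDeriv j h) = partialDeriv j (partialDeriv i h) := by
  have key : ∀ v w : Space n, ∀ x,
      fderiv ℝ (fun y => fderiv ℝ h y v) x w = fderiv ℝ (fderiv ℝ h) x w v := by
    intro v w x
    have hd : DifferentiableAt ℝ (fderiv ℝ h) x :=
      ((hh.1.fderiv_right (m := ∞) (by simp)).differentiable (by simp)) x
    rw [fderiv_clm_apply hd (differentiableAt_const v)]
    simp
  ext x
  have hs : IsSymmSndFDerivAt ℝ h x := hh.1.contDiffAt.isSymmSndFDerivAt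
    (by simpa using ENat.LEInfty.out)
  unfold partialDeriv
  rw [key, key]
  exact hs.eq _ _

/-! ### Order of vanishing at the origin -/

/-- `h` has temperate growth and all its partial derivatives of order `< p` vanish at `0`. -/
def VanishesToOrder : ℕ → (Space n → ℝ) → Prop
  | 0, h => h.HasTemperateGrowth
  | p + 1, h => h.HasTemperateGrowth ∧ h 0 = 0 ∧ ∀ i, VanishesToOrder p (partialDeriv i h)

namespace VanishesToOrder

theorem hasTemperateGrowth {p : ℕ} {h : Space n → ℝ} (hh : VanishesToOrder p h) :
    h.HasTemperateGrowth := by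
  cases p with
  | zero => exact hh
  | succ p => exact hh.1

theorem of_succ {p : ℕ} {h : Space n → ℝ} (hh : VanishesToOrder (p + 1) h) :
    VanishesToOrder p h := by
  induction p generalizing h with
  | zero => exact hh.1
  | succ p ih => exact ⟨hh.1, hh.2.1, fun i => ih (hh.2.2 i)⟩

theorem mono {p q : ℕ} (hpq : q ≤ p) {h : Space n → ℝ} (hh : VanishesToOrder p h) :
    VanishesToOrder q h := by
  induction p, hpq using Nat.le_induction with
  | base => exact hh
  | succ p _ ih => exact ih hh.of_succ

theorem partialDeriv {p : ℕ} {h : Space n → ℝ} (hh : VanishesToOrder p h) (i : Fin n) :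
    VanishesToOrder (p - 1) (partialDeriv i h) := by
  cases p with
  | zero => exact hasTemperateGrowth_partialDeriv hh i
  | succ p => exact hh.2.2 i

theorem apply_zero {p : ℕ} (hp : p ≠ 0) {h : Space n → ℝ} (hh : VanishesToOrder p h) :
    h 0 = 0 := by
  cases p with
  | zero => exact absurd rfl hp
  | succ p => exact hh.2.1

theorem add {p : ℕ} {h₁ h₂ : Space n → ℝ} (hh₁ : VanishesToOrder p h₁)
    (hh₂ : VanishesToOrder p h₂) : VanishesToOrder p (fun x => h₁ x + h₂ x) := by
  induction p generalizing h₁ h₂ with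
  | zero => exact Function.HasTemperateGrowth.add hh₁ hh₂
  | succ p ih =>
    refine ⟨hh₁.1.add hh₂.1, by simp [hh₁.2.1, hh₂.2.1], fun i => ?_⟩
    rw [partialDeriv_add hh₁.1 hh₂.1]
    exact ih (hh₁.2.2 i) (hh₂.2.2 i)

theorem const_mul {p : ℕ} {h : Space n → ℝ} (hh : VanishesToOrder p h) (c : ℝ) :
    VanishesToOrder p (fun x => c * h x) := by
  induction p generalizing h with
  | zero => exact (Function.HasTemperateGrowth.const c).fun_mul hh
  | succ p ih =>
    refine ⟨(Function.HasTemperateGrowth.const c).fun_mul hh.1, by simp [hh.2.1], fun i => ?_⟩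
    rw [partialDeriv_const_mul hh.1]
    exact ih (hh.2.2 i)

theorem sub {p : ℕ} {h₁ h₂ : Space n → ℝ} (hh₁ : VanishesToOrder p h₁)
    (hh₂ : VanishesToOrder p h₂) : VanishesToOrder p (fun x => h₁ x - h₂ x) := by
  have := hh₁.add (hh₂.const_mul (-1))
  simpa only [neg_one_mul, ← sub_eq_add_neg] using this

theorem zero (p : ℕ) : VanishesToOrder p (fun _ : Space n => (0 : ℝ)) := by
  induction p with
  | zero => exact Function.HasTemperateGrowth.zero
  | succ p ih =>
    refine ⟨Function.HasTemperateGrowth.zero, rfl, fun i => ?_⟩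
    rwa [partialDeriv_const]

theorem sum {ι : Type*} (s : Finset ι) {p : ℕ} {h : ι → Space n → ℝ}
    (hh : ∀ j, VanishesToOrder p (h j)) : VanishesToOrder p (fun x => ∑ j ∈ s, h j x) := by
  classical
  induction s using Finset.induction_on with
  | empty => simpa using zero p
  | insert j s hj ih =>
    simp only [Finset.sum_insert hj]
    exact (hh j).add ih

theorem mul {p q : ℕ} {h₁ h₂ : Space n → ℝ} (hh₁ : VanishesToOrder p h₁)
    (hh₂ : VanishesToOrder q h₂) : VanishesToOrder (p + q) (fun x => h₁ x * h₂ x) := by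
  obtain ⟨r, hr⟩ : ∃ r, p + q = r := ⟨_, rfl⟩
  rw [hr]
  induction r generalizing p q h₁ h₂ with
  | zero => exact hh₁.hasTemperateGrowth.mul hh₂.hasTemperateGrowth
  | succ r ih =>
    refine ⟨hh₁.hasTemperateGrowth.mul hh₂.hasTemperateGrowth, ?_, fun i => ?_⟩
    · rcases Nat.eq_zero_or_pos p with rfl | hp
      · simp [hh₂.apply_zero (by omega)]
      · simp [hh₁.apply_zero (by omega)]
    · rw [partialDeriv_mul hh₁.hasTemperateGrowth hh₂.hasTemperateGrowth]
      refine add ?_ ?_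
      · rcases Nat.eq_zero_or_pos p with rfl | hp
        · exact ih (hh₁.partialDeriv i) (hh₂.mono (q := r) (by omega)) (by omega)
        · exact ih (hh₁.partialDeriv i) hh₂ (by omega)
      · rcases Nat.eq_zero_or_pos q with rfl | hq
        · exact ih (hh₁.mono (q := r) (by omega)) (hh₂.partialDeriv i) (by omega)
        · exact ih hh₁ (hh₂.partialDeriv i) (by omega)

theorem coord (i : Fin n) : VanishesToOrder 1 (fun x : Space n => x i) := by
  refine ⟨hasTemperateGrowth_coord i, by simp, fun j => ?_⟩
  rw [partialDeriv_coord]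
  exact Function.HasTemperateGrowth.const _

end VanishesToOrder

/-- The Euler operator `∑ xᵢ ∂ᵢ`. -/
noncomputable def euler (h : Space n → ℝ) : Space n → ℝ :=
  fun x => ∑ i, x i * partialDeriv i h x

theorem hasTemperateGrowth_euler {h : Space n → ℝ} (hh : h.HasTemperateGrowth) :
    (euler h).HasTemperateGrowth :=
  VanishesToOrder.sum (p := 0) _ fun i =>
    (hasTemperateGrowth_coord i).fun_mul (hasTemperateGrowth_partialDeriv hh i)

theorem partialDeriv_euler {h : Space n → ℝ} (hh : h.HasTemperateGrowth) (i : Fin n) :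
    partialDeriv i (euler h) = fun x => partialDeriv i h x + euler (partialDeriv i h) x := by
  unfold euler
  rw [partialDeriv_sum _ fun j =>
    (hasTemperateGrowth_coord j).fun_mul (hasTemperateGrowth_partialDeriv hh j)]
  ext x
  simp only [partialDeriv_mul (hasTemperateGrowth_coord _)
    (hasTemperateGrowth_partialDeriv hh _), partialDeriv_coord, Finset.sum_add_distrib,
    partialDeriv_comm hh i]
  simp

/-- The Euler operator acts on functions vanishing to order `p` as multiplication by `p`,
up to higher order. -/
theorem VanishesToOrder.euler_sub {p : ℕ} {h : Space n → ℝ} (hh : VanishesToOrder p h) :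
    VanishesToOrder (p + 1) (fun x => euler h x - p * h x) := by
  have htg := hh.hasTemperateGrowth
  have hm : (fun x => (p : ℝ) * h x).HasTemperateGrowth :=
    (Function.HasTemperateGrowth.const _).fun_mul htg
  induction p generalizing h with
  | zero =>
    have : (fun x => euler h x - (0 : ℕ) * h x) = euler h := by ext x; simp
    rw [this]
    exact ⟨hasTemperateGrowth_euler htg, by simp [euler],
      fun i => hasTemperateGrowth_partialDeriv (hasTemperateGrowth_euler htg) i⟩
  | succ p ih =>
    refine ⟨(hasTemperateGrowth_euler htg).sub hm, by simp [euler, hh.2.1], fun i => ?_⟩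
    have hp := hasTemperateGrowth_partialDeriv htg i
    have hEq : PrincipalType.partialDeriv i (fun x => euler h x - ((p + 1 : ℕ) : ℝ) * h x)
        = fun x => euler (PrincipalType.partialDeriv i h) x
          - p * PrincipalType.partialDeriv i h x := by
      rw [partialDeriv_sub (hasTemperateGrowth_euler htg) hm, partialDeriv_const_mul htg,
        partialDeriv_euler htg]
      ext x
      push_cast
      ring
    rw [hEq]
    exact ih (hh.2.2 i) hp ((Function.HasTemperateGrowth.const _).fun_mul hp)

/-! ### Taylor terms -/

/-- The homogeneous term of degree `p` in the Taylor expansion of `h` at `0`. -/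
noncomputable def taylorTerm : ℕ → (Space n → ℝ) → Space n → ℝ
  | 0, h => fun _ => h 0
  | p + 1, h => fun x => (1 / ((p : ℝ) + 1)) * ∑ i, x i * taylorTerm p (partialDeriv i h) x

theorem hasTemperateGrowth_taylorTerm (p : ℕ) (h : Space n → ℝ) :
    (taylorTerm p h).HasTemperateGrowth := by
  induction p generalizing h with
  | zero => exact Function.HasTemperateGrowth.const _
  | succ p ih =>
    exact (Function.HasTemperateGrowth.const _).fun_mul (VanishesToOrder.sum (p := 0) _ fun i =>
      (hasTemperateGrowth_coord i).fun_mul (ih _))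

theorem taylorTerm_smul (p : ℕ) (h : Space n → ℝ) (s : ℝ) (x : Space n) :
    taylorTerm p h (s • x) = s ^ p * taylorTerm p h x := by
  induction p generalizing h with
  | zero => simp [taylorTerm]
  | succ p ih =>
    simp only [taylorTerm, ih, Finset.mul_sum]
    refine Finset.sum_congr rfl fun i _ => ?_
    simp only [PiLp.smul_apply, smul_eq_mul]
    ring

theorem partialDeriv_taylorTerm_succ (p : ℕ) {h : Space n → ℝ} (hh : h.HasTemperateGrowth)
    (i : Fin n) : partialDeriv i (taylorTerm (p + 1) h) = taylorTerm p (partialDeriv i h) := by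
  induction p generalizing h with
  | zero =>
    ext x
    simp only [taylorTerm]
    rw [partialDeriv_const_mul (VanishesToOrder.sum (p := 0) _ fun i =>
      (hasTemperateGrowth_coord i).fun_mul (Function.HasTemperateGrowth.const _)),
      partialDeriv_sum _ fun i =>
      (hasTemperateGrowth_coord i).fun_mul (Function.HasTemperateGrowth.const _)]
    simp only [partialDeriv_mul (hasTemperateGrowth_coord _)
      (Function.HasTemperateGrowth.const _), partialDeriv_coord, partialDeriv_const]
    simp
  | succ p ih =>
    have hm : ∀ j, (fun x : Space n => x j * taylorTerm (p + 1) (partialDeriv j h) x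
        ).HasTemperateGrowth := fun j =>
      (hasTemperateGrowth_coord j).fun_mul (hasTemperateGrowth_taylorTerm _ _)
    have h1 : taylorTerm (p + 1 + 1) h = fun x => (1 / (((p + 1 : ℕ) : ℝ) + 1)) *
        ∑ j, x j * taylorTerm (p + 1) (partialDeriv j h) x := rfl
    rw [h1, partialDeriv_const_mul (VanishesToOrder.sum (p := 0) _ hm), partialDeriv_sum _ hm]
    ext x
    simp only [partialDeriv_mul (hasTemperateGrowth_coord _)
      (hasTemperateGrowth_taylorTerm _ _), partialDeriv_coord, Finset.sum_add_distrib,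
      ih (hasTemperateGrowth_partialDeriv hh _), partialDeriv_comm hh i]
    have h2 : ∑ j, x j * taylorTerm p (partialDeriv j (partialDeriv i h)) x
        = ((p : ℝ) + 1) * taylorTerm (p + 1) (partialDeriv i h) x := by
      simp only [taylorTerm]
      field_simp
    rw [h2]
    simp
    field_simp
    ring

/-- Subtracting its leading Taylor term raises the order of vanishing. -/
theorem VanishesToOrder.sub_taylorTerm {p : ℕ} {h : Space n → ℝ} (hh : VanishesToOrder p h) :
    VanishesToOrder (p + 1) (fun x => h x - taylorTerm p h x) := by
  induction p generalizing h with
  | zero =>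
    have hT := hh.hasTemperateGrowth.fun_sub (hasTemperateGrowth_taylorTerm 0 h)
    exact ⟨hT, by simp [taylorTerm], fun i => hasTemperateGrowth_partialDeriv hT i⟩
  | succ p ih =>
    have hT := hasTemperateGrowth_taylorTerm (p + 1) h
    refine ⟨hh.1.fun_sub hT, by simp [taylorTerm, hh.2.1], fun i => ?_⟩
    rw [partialDeriv_sub hh.1 hT, partialDeriv_taylorTerm_succ p hh.1]
    exact ih (hh.2.2 i)

/-! ### Growth at the origin -/

theorem fderiv_apply_eq_sum (h : Space n → ℝ) (x v : Space n) :
    fderiv ℝ h x v = ∑ i, v i * partialDeriv i h x := by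
  conv_lhs => rw [← (EuclideanSpace.basisFun (Fin n) ℝ).sum_repr v]
  simp [partialDeriv]

theorem norm_le_of_partialDeriv_le {h : Space n → ℝ} (hd : Differentiable ℝ h) (h0 : h 0 = 0)
    {p : ℕ} {C r : ℝ} (hC : 0 ≤ C)
    (hpd : ∀ i, ∀ x, ‖x‖ ≤ r → |partialDeriv i h x| ≤ C * ‖x‖ ^ p) (x : Space n)
    (hx : ‖x‖ ≤ r) : |h x| ≤ n * C * ‖x‖ ^ (p + 1) := by
  have hb : ∀ y ∈ Metric.closedBall (0 : Space n) ‖x‖,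
      ‖fderiv ℝ h y‖ ≤ n * C * ‖x‖ ^ p := by
    intro y hy
    have hy' : ‖y‖ ≤ ‖x‖ := by simpa using hy
    refine ContinuousLinearMap.opNorm_le_bound _ (by positivity) fun v => ?_
    rw [fderiv_apply_eq_sum]
    refine (norm_sum_le _ _).trans ?_
    have : ∀ i ∈ Finset.univ, ‖v i * partialDeriv i h y‖ ≤ ‖v‖ * (C * ‖x‖ ^ p) := by
      intro i _
      rw [norm_mul]
      gcongr
      · exact PiLp.norm_apply_le v i
      · exact (hpd i y (hy'.trans hx)).trans (by gcongr)
    refine (Finset.sum_le_sum this).trans (le_of_eq ?_)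
    simp
    ring
  have := (convex_closedBall (0 : Space n) ‖x‖).norm_image_sub_le_of_norm_fderiv_le
    (fun y _ => hd y) hb (x := 0) (y := x) (by simp) (by simp)
  rw [h0, sub_zero, sub_zero, Real.norm_eq_abs] at this
  rw [pow_succ]
  linarith

theorem VanishesToOrder.exists_bound {p : ℕ} {h : Space n → ℝ} (hh : VanishesToOrder p h)
    (r : ℝ) : ∃ C, 0 ≤ C ∧ ∀ x, ‖x‖ ≤ r → |h x| ≤ C * ‖x‖ ^ p := by
  induction p generalizing h with
  | zero =>
    obtain ⟨C, hC⟩ := (isCompact_closedBall (0 : Space n) r).exists_bound_of_continuousOn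
      hh.hasTemperateGrowth.1.continuous.continuousOn
    refine ⟨max C 0, le_max_right _ _, fun x hx => ?_⟩
    have := hC x (by simpa using hx)
    simp only [pow_zero, mul_one]
    exact this.trans (le_max_left _ _)
  | succ p ih =>
    choose C hC0 hC using fun i => ih (hh.2.2 i)
    have hS : 0 ≤ ∑ i, C i := Finset.sum_nonneg fun i _ => hC0 i
    refine ⟨n * ∑ i, C i, by positivity, fun x hx => ?_⟩
    refine norm_le_of_partialDeriv_le (hh.1.1.differentiable (by simp)) hh.2.1 hS
      (fun i y hy => (hC i y hy).trans ?_) x hx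
    gcongr
    exact Finset.single_le_sum (fun i _ => hC0 i) (Finset.mem_univ i)

/-! ### Amplitudes -/

open scoped SchwartzMap LineDeriv

/-- Schwartz functions of `(t, x) ∈ ℝ × ℝⁿ`. -/
abbrev Symb (n : ℕ) := 𝓢(ℝ × Space n, ℝ)

/-- The derivative in `t`. -/
noncomputable def dt (a : Symb n) : Symb n := ∂_{((1 : ℝ), (0 : Space n))} a

/-- The derivative in `xᵢ`. -/
noncomputable def dx (i : Fin n) (a : Symb n) : Symb n :=
  ∂_{((0 : ℝ), (EuclideanSpace.single i 1 : Space n))} a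

theorem dt_apply (a : Symb n) (q : ℝ × Space n) : dt a q = fderiv ℝ a q (1, 0) :=
  SchwartzMap.lineDerivOp_apply_eq_fderiv _ _ _

theorem dx_apply (i : Fin n) (a : Symb n) (q : ℝ × Space n) :
    dx i a q = fderiv ℝ a q (0, EuclideanSpace.single i 1) :=
  SchwartzMap.lineDerivOp_apply_eq_fderiv _ _ _

theorem hasTemperateGrowth_slice (a : Symb n) (t : ℝ) :
    (fun x => a (t, x)).HasTemperateGrowth := by
  have h1 : (fun x : Space n => (t, x)).HasTemperateGrowth := by
    have : (fun x : Space n => (t, x)) = fun x => (t, (0 : Space n)) +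
        ContinuousLinearMap.inr ℝ ℝ (Space n) x := by
      ext x <;> simp
    rw [this]
    exact (Function.HasTemperateGrowth.const _).add (ContinuousLinearMap.hasTemperateGrowth _)
  exact a.hasTemperateGrowth.comp h1

theorem partialDeriv_slice (a : Symb n) (t : ℝ) (i : Fin n) :
    partialDeriv i (fun x => a (t, x)) = fun x => dx i a (t, x) := by
  ext x
  rw [dx_apply]
  have h1 : HasFDerivAt (fun y : Space n => (t, y)) (ContinuousLinearMap.inr ℝ ℝ (Space n)) x :=
    hasFDerivAt_prodMk_right t x
  have h2 := (a.differentiable (t, x)).hasFDerivAt.comp x h1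
  unfold partialDeriv
  have h3 : fderiv ℝ (fun y => a (t, y)) x = _ := h2.fderiv
  rw [h3]
  simp

/-- An amplitude of order `p`, supported in `‖x‖ ≤ ρ`. -/
structure IsAmplitude (ρ : ℝ) (p : ℕ) (a : Symb n) : Prop where
  vanishes : ∀ t, VanishesToOrder p fun x => a (t, x)
  support : ∀ t x, ρ < ‖x‖ → a (t, x) = 0

theorem eventually_zero_of_support {ρ : ℝ} {a : Symb n}
    (ha : ∀ t x, ρ < ‖x‖ → a (t, x) = 0) (t : ℝ) (x : Space n) (hx : ρ < ‖x‖) :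
    (a : ℝ × Space n → ℝ) =ᶠ[nhds (t, x)] fun _ => 0 := by
  have ho : IsOpen {q : ℝ × Space n | ρ < ‖q.2‖} :=
    isOpen_lt continuous_const (by fun_prop)
  filter_upwards [ho.mem_nhds hx] with q hq
  exact ha q.1 q.2 hq

theorem IsAmplitude.mono {ρ : ℝ} {p q : ℕ} {a : Symb n} (ha : IsAmplitude ρ p a)
    (hpq : q ≤ p) : IsAmplitude ρ q a :=
  ⟨fun t => (ha.vanishes t).mono hpq, ha.support⟩

theorem IsAmplitude.dx {ρ : ℝ} {p : ℕ} {a : Symb n} (ha : IsAmplitude ρ p a) (i : Fin n) :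
    IsAmplitude ρ (p - 1) (dx i a) := by
  refine ⟨fun t => ?_, fun t x hx => ?_⟩
  · rw [← partialDeriv_slice]
    exact (ha.vanishes t).partialDeriv i
  · rw [dx_apply, (eventually_zero_of_support ha.support t x hx).fderiv_eq]
    simp

theorem dx_dt (i : Fin n) (a : Symb n) : dx i (dt a) = dt (dx i a) := by
  have key : ∀ v w q : ℝ × Space n,
      fderiv ℝ (fun y => fderiv ℝ a y v) q w = fderiv ℝ (fderiv ℝ a) q w v := by
    intro v w q
    have hd : DifferentiableAt ℝ (fderiv ℝ a) q :=
      (((a.smooth ⊤).fderiv_right (m := ∞) (by simp)).differentiable (by simp)) q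
    rw [fderiv_clm_apply hd (differentiableAt_const v)]
    simp
  have hs : ∀ q, IsSymmSndFDerivAt ℝ a q := fun q =>
    (a.smooth ⊤).contDiffAt.isSymmSndFDerivAt (by simpa using ENat.LEInfty.out)
  ext q
  have h1 : ((dt a : Symb n) : ℝ × Space n → ℝ) = fun q => fderiv ℝ a q (1, 0) :=
    funext (dt_apply a)
  have h2 : ((dx i a : Symb n) : ℝ × Space n → ℝ)
      = fun q => fderiv ℝ a q (0, EuclideanSpace.single i 1) := funext (dx_apply i a)
  rw [dx_apply, dt_apply, h1, h2, key, key]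
  exact (hs q).eq _ _

theorem IsAmplitude.dt {ρ : ℝ} {p : ℕ} {a : Symb n} (ha : IsAmplitude ρ p a) :
    IsAmplitude ρ p (dt a) := by
  refine ⟨fun t => ?_, fun t x hx => ?_⟩
  · have hv := ha.vanishes
    clear ha
    induction p generalizing a t with
    | zero => exact hasTemperateGrowth_slice _ _
    | succ p ih =>
      refine ⟨hasTemperateGrowth_slice _ _, ?_, fun i => ?_⟩
      · have h1 : HasFDerivAt (fun s : ℝ => (s, (0 : Space n)))
            (ContinuousLinearMap.inl ℝ ℝ (Space n)) t := hasFDerivAt_prodMk_left t 0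
        have h2 := ((a.differentiable (t, 0)).hasFDerivAt.comp t h1).fderiv
        have h3 : (a : ℝ × Space n → ℝ) ∘ (fun s : ℝ => (s, (0 : Space n))) = fun _ => 0 := by
          ext s
          exact (hv s).2.1
        rw [h3] at h2
        have h4 := congrArg (fun L : ℝ →L[ℝ] ℝ => L 1) h2
        beta_reduce
        rw [dt_apply]
        simpa using h4.symm
      · rw [partialDeriv_slice, dx_dt]
        refine ih t fun s => ?_
        rw [← partialDeriv_slice]
        exact (hv s).2.2 i
  · rw [dt_apply, (eventually_zero_of_support ha.support t x hx).fderiv_eq]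
    simp

theorem IsAmplitude.exists_bound {ρ : ℝ} {p : ℕ} {a : Symb n} (ha : IsAmplitude ρ p a) :
    ∃ C, 0 ≤ C ∧ ∀ t x, |a (t, x)| ≤ C * ‖x‖ ^ p := by
  have hv := ha.vanishes
  clear ha
  induction p generalizing a with
  | zero =>
    obtain ⟨C, hC, h⟩ := a.decay 0 0
    refine ⟨C, hC.le, fun t x => ?_⟩
    simpa using h (t, x)
  | succ p ih =>
    choose C hC0 hC using fun i => ih (a := PrincipalType.dx i a) fun t => by
      rw [← partialDeriv_slice]
      exact (hv t).2.2 i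
    have hS : 0 ≤ ∑ i, C i := Finset.sum_nonneg fun i _ => hC0 i
    refine ⟨n * ∑ i, C i, by positivity, fun t x => ?_⟩
    refine norm_le_of_partialDeriv_le (h := fun x => a (t, x)) (r := ‖x‖)
      ((hv t).1.1.differentiable (by simp)) (hv t).2.1 hS (fun i y _ => ?_) x le_rfl
    rw [partialDeriv_slice]
    refine (hC i t y).trans ?_
    gcongr
    exact Finset.single_le_sum (fun i _ => hC0 i) (Finset.mem_univ i)

/-- Multiplication by a function of `x`. -/
noncomputable def mulX (h : Space n → ℝ) (a : Symb n) : Symb n :=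
  SchwartzMap.smulLeftCLM ℝ (fun q : ℝ × Space n => h q.2) a

theorem mulX_apply {h : Space n → ℝ} (hh : h.HasTemperateGrowth) (a : Symb n) (t : ℝ)
    (x : Space n) : mulX h a (t, x) = h x * a (t, x) := by
  have : (fun q : ℝ × Space n => h q.2).HasTemperateGrowth :=
    hh.comp (ContinuousLinearMap.snd ℝ ℝ (Space n)).hasTemperateGrowth
  rw [mulX, SchwartzMap.smulLeftCLM_apply_apply this, smul_eq_mul]

/-- Multiplication by `t`. -/
noncomputable def mulT (a : Symb n) : Symb n :=
  SchwartzMap.smulLeftCLM ℝ (fun q : ℝ × Space n => q.1) a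

theorem mulT_apply (a : Symb n) (t : ℝ) (x : Space n) : mulT a (t, x) = t * a (t, x) := by
  have : (fun q : ℝ × Space n => q.1).HasTemperateGrowth :=
    (ContinuousLinearMap.fst ℝ ℝ (Space n)).hasTemperateGrowth
  rw [mulT, SchwartzMap.smulLeftCLM_apply_apply this, smul_eq_mul]

theorem IsAmplitude.mulT {ρ : ℝ} {p : ℕ} {a : Symb n} (ha : IsAmplitude ρ p a) :
    IsAmplitude ρ p (mulT a) := by
  refine ⟨fun t => ?_, fun t x hx => ?_⟩
  · simp only [mulT_apply]
    exact (ha.vanishes t).const_mul t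
  · rw [mulT_apply, ha.support t x hx, mul_zero]

theorem dt_mulT (a : Symb n) (t : ℝ) (x : Space n) :
    dt (mulT a) (t, x) = a (t, x) + t * dt a (t, x) := by
  have h1 : HasFDerivAt (mulT a) (fderiv ℝ (mulT a) (t, x)) (t, x) :=
    ((mulT a).differentiable (t, x)).hasFDerivAt
  have h2 : ((mulT a : Symb n) : ℝ × Space n → ℝ) = fun q => q.1 * a q := by
    ext q
    exact mulT_apply a q.1 q.2
  have h3 : HasFDerivAt (fun q : ℝ × Space n => q.1 * a q)
      (t • fderiv ℝ a (t, x) + a (t, x) • ContinuousLinearMap.fst ℝ ℝ (Space n)) (t, x) :=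
    hasFDerivAt_fst.mul (a.differentiable (t, x)).hasFDerivAt
  rw [dt_apply, dt_apply, h2, h3.fderiv]
  simp
  ring

theorem IsAmplitude.mulX {ρ : ℝ} {p r : ℕ} {a : Symb n} (ha : IsAmplitude ρ p a)
    {h : Space n → ℝ} (hh : VanishesToOrder r h) : IsAmplitude ρ (r + p) (mulX h a) := by
  refine ⟨fun t => ?_, fun t x hx => ?_⟩
  · simp only [mulX_apply hh.hasTemperateGrowth]
    exact hh.mul (ha.vanishes t)
  · rw [mulX_apply hh.hasTemperateGrowth, ha.support t x hx, mul_zero]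

theorem IsAmplitude.add {ρ : ℝ} {p : ℕ} {a₁ a₂ : Symb n} (h₁ : IsAmplitude ρ p a₁)
    (h₂ : IsAmplitude ρ p a₂) : IsAmplitude ρ p (a₁ + a₂) := by
  refine ⟨fun t => ?_, fun t x hx => ?_⟩
  · exact (h₁.vanishes t).add (h₂.vanishes t)
  · simp [h₁.support t x hx, h₂.support t x hx]

theorem IsAmplitude.smul {ρ : ℝ} {p : ℕ} {a : Symb n} (ha : IsAmplitude ρ p a) (s : ℝ) :
    IsAmplitude ρ p (s • a) := by
  refine ⟨fun t => ?_, fun t x hx => ?_⟩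
  · exact (ha.vanishes t).const_mul s
  · simp [ha.support t x hx]

theorem IsAmplitude.zero (ρ : ℝ) (p : ℕ) : IsAmplitude ρ p (0 : Symb n) :=
  ⟨fun _ => VanishesToOrder.zero p, fun _ _ _ => rfl⟩

theorem IsAmplitude.sum {ι : Type*} (s : Finset ι) {ρ : ℝ} {p : ℕ} {a : ι → Symb n}
    (ha : ∀ j, IsAmplitude ρ p (a j)) : IsAmplitude ρ p (∑ j ∈ s, a j) := by
  classical
  induction s using Finset.induction_on with
  | empty => simpa using IsAmplitude.zero ρ p
  | insert j s hj ih =>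
    rw [Finset.sum_insert hj]
    exact (ha j).add ih

theorem integrable_of_bounded_of_support {F : Space n → ℝ} (hF : Measurable F) {C ρ : ℝ}
    (hC : ∀ x, |F x| ≤ C) (hsupp : ∀ x, ρ < ‖x‖ → F x = 0) : Integrable F := by
  have hI : Integrable ((Metric.closedBall (0 : Space n) ρ).indicator fun _ => C) :=
    (integrable_indicator_iff measurableSet_closedBall).2
      (integrableOn_const (by exact measure_closedBall_lt_top.ne))
  refine hI.mono' hF.aestronglyMeasurable (Eventually.of_forall fun x => ?_)
  by_cases hx : x ∈ Metric.closedBall (0 : Space n) ρ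
  · rw [Set.indicator_of_mem hx]
    exact hC x
  · rw [Set.indicator_of_notMem hx, hsupp x (by simpa using hx), norm_zero]

/-! ### The phase and the integrals -/

/-- The squared length of the gradient. -/
noncomputable def gradSq (f : Space n → ℝ) : Space n → ℝ :=
  fun x => ∑ i, partialDeriv i f x * partialDeriv i f x

/-- `f` vanishes to order `q + 1` at `0` and its gradient is bounded below by a multiple of
`‖x‖ ^ q` on the ball of radius `ρ`. -/
structure IsPhase (f : Space n → ℝ) (q : ℕ) (ρ κ : ℝ) : Prop where
  vanishes : VanishesToOrder (q + 1) f
  one_le : 1 ≤ q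
  pos : 0 < κ
  radius_pos : 0 < ρ
  lower : ∀ x, ‖x‖ ≤ ρ → κ * ‖x‖ ^ (2 * q) ≤ gradSq f x

/-- The integral of `a (z f(x), x) / |∇f(x)| ^ (2 b)`. -/
noncomputable def oscInt (f : Space n → ℝ) (b : ℕ) (a : Symb n) (z : ℝ) : ℝ :=
  ∫ x, a (z * f x, x) / gradSq f x ^ b

namespace IsPhase

variable {f : Space n → ℝ} {q : ℕ} {ρ κ : ℝ}

theorem temperate (hf : IsPhase f q ρ κ) : f.HasTemperateGrowth := hf.vanishes.hasTemperateGrowth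

theorem vanishes_partialDeriv (hf : IsPhase f q ρ κ)
    (i : Fin n) : VanishesToOrder q (partialDeriv i f) :=
  hf.vanishes.2.2 i

theorem vanishes_gradSq (hf : IsPhase f q ρ κ) : VanishesToOrder (2 * q) (gradSq f) := by
  have := VanishesToOrder.sum Finset.univ fun i =>
    (hf.vanishes_partialDeriv i).mul (hf.vanishes_partialDeriv i)
  rw [two_mul]
  exact this

theorem gradSq_ne_zero (hf : IsPhase f q ρ κ)
    {x : Space n} (hx : ‖x‖ ≤ ρ) (h0 : x ≠ 0) : gradSq f x ≠ 0 := by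
  have h1 := hf.lower x hx
  have h2 := hf.pos
  have h3 : 0 < ‖x‖ := norm_pos_iff.2 h0
  have : 0 < κ * ‖x‖ ^ (2 * q) := by positivity
  exact (this.trans_le h1).ne'

theorem div_bound (hf : IsPhase f q ρ κ)
    {p b : ℕ} (hpb : 2 * q * b ≤ p) {C u : ℝ} (hC : 0 ≤ C) {x : Space n}
    (hx : ‖x‖ ≤ ρ) (hu : |u| ≤ C * ‖x‖ ^ p) :
    |u / gradSq f x ^ b| ≤ C / κ ^ b * ‖x‖ ^ (p - 2 * q * b) := by
  have hκ := hf.pos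
  rcases eq_or_ne x 0 with rfl | h0
  · rcases Nat.eq_zero_or_pos b with rfl | hb
    · simpa using hu
    · have : gradSq f (0 : Space n) = 0 :=
        hf.vanishes_gradSq.apply_zero (by have := hf.one_le; omega)
      rw [this, zero_pow hb.ne', div_zero, abs_zero]
      positivity
  · have h3 : 0 < ‖x‖ := norm_pos_iff.2 h0
    have h4 : 0 < κ ^ b * ‖x‖ ^ (2 * q * b) := by positivity
    have h5 : κ ^ b * ‖x‖ ^ (2 * q * b) ≤ gradSq f x ^ b := by
      rw [pow_mul, ← mul_pow]
      exact pow_le_pow_left₀ (by positivity) (hf.lower x hx) b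
    rw [abs_div, abs_of_pos (h4.trans_le h5)]
    calc |u| / gradSq f x ^ b ≤ C * ‖x‖ ^ p / (κ ^ b * ‖x‖ ^ (2 * q * b)) := by
          gcongr
      _ = C / κ ^ b * ‖x‖ ^ (p - 2 * q * b) := by
          have : ‖x‖ ^ p = ‖x‖ ^ (p - 2 * q * b) * ‖x‖ ^ (2 * q * b) := by
            rw [← pow_add, Nat.sub_add_cancel hpb]
          rw [this]
          field_simp

theorem exists_bound_div (hf : IsPhase f q ρ κ) {p b : ℕ} (hpb : 2 * q * b ≤ p) {a : Symb n}
    (ha : IsAmplitude ρ p a) :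
    ∃ C, ∀ t x, |a (t, x) / gradSq f x ^ b| ≤ C := by
  obtain ⟨C, hC0, hC⟩ := ha.exists_bound
  have hκ := hf.pos
  have hρ := hf.radius_pos
  refine ⟨C / κ ^ b * ρ ^ (p - 2 * q * b), fun t x => ?_⟩
  rcases le_or_gt ‖x‖ ρ with hx | hx
  · refine (hf.div_bound hpb hC0 hx (hC t x)).trans ?_
    gcongr
  · rw [ha.support t x hx]
    simp only [zero_div, abs_zero]
    positivity

theorem continuous (hf : IsPhase f q ρ κ) : Continuous f := hf.temperate.1.continuous

theorem continuous_gradSq (hf : IsPhase f q ρ κ) : Continuous (gradSq f) :=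
  hf.vanishes_gradSq.hasTemperateGrowth.1.continuous

theorem measurable_integrand (hf : IsPhase f q ρ κ) (b : ℕ) (a : Symb n) (z : ℝ) :
    Measurable fun x => a (z * f x, x) / gradSq f x ^ b := by
  have h1 : Continuous fun x => a (z * f x, x) :=
    a.continuous.comp ((continuous_const.mul hf.continuous).prodMk continuous_id)
  exact h1.measurable.div (hf.continuous_gradSq.measurable.pow_const b)

theorem integrable (hf : IsPhase f q ρ κ) {p b : ℕ} (hpb : 2 * q * b ≤ p) {a : Symb n}
    (ha : IsAmplitude ρ p a) (z : ℝ) :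
    Integrable fun x => a (z * f x, x) / gradSq f x ^ b := by
  obtain ⟨C, hC⟩ := hf.exists_bound_div hpb ha
  exact integrable_of_bounded_of_support (hf.measurable_integrand b a z) (fun x => hC _ x)
    fun x hx => by rw [ha.support _ x hx, zero_div]

theorem oscInt_bounded (hf : IsPhase f q ρ κ) {p b : ℕ} (hpb : 2 * q * b ≤ p) {a : Symb n}
    (ha : IsAmplitude ρ p a) : ∃ B, ∀ z, |oscInt f b a z| ≤ B := by
  obtain ⟨C, hC⟩ := hf.exists_bound_div hpb ha
  refine ⟨C * volume.real (Metric.closedBall (0 : Space n) ρ), fun z => ?_⟩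
  have h1 : oscInt f b a z
      = ∫ x in Metric.closedBall (0 : Space n) ρ, a (z * f x, x) / gradSq f x ^ b := by
    refine (setIntegral_eq_integral_of_forall_compl_eq_zero fun x hx => ?_).symm
    rw [ha.support _ x (by simpa using hx), zero_div]
  rw [h1]
  have h2 : ∀ x ∈ Metric.closedBall (0 : Space n) ρ,
      ‖a (z * f x, x) / gradSq f x ^ b‖ ≤ C := fun x _ => hC _ x
  exact norm_setIntegral_le_of_norm_le_const measure_closedBall_lt_top h2

theorem oscInt_add (hf : IsPhase f q ρ κ) {p b : ℕ} (hpb : 2 * q * b ≤ p) {a₁ a₂ : Symb n}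
    (h₁ : IsAmplitude ρ p a₁) (h₂ : IsAmplitude ρ p a₂) (z : ℝ) :
    oscInt f b (a₁ + a₂) z = oscInt f b a₁ z + oscInt f b a₂ z := by
  unfold oscInt
  rw [← integral_add (hf.integrable hpb h₁ z) (hf.integrable hpb h₂ z)]
  simp [add_div]

theorem oscInt_smul (b : ℕ) (a : Symb n) (s z : ℝ) :
    oscInt f b (s • a) z = s * oscInt f b a z := by
  unfold oscInt
  rw [← integral_const_mul]
  simp [mul_div_assoc]

theorem oscInt_sum (hf : IsPhase f q ρ κ) {p b : ℕ} (hpb : 2 * q * b ≤ p) {ι : Type*} (s : Finset ι)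
    {a : ι → Symb n} (h : ∀ j, IsAmplitude ρ p (a j)) (z : ℝ) :
    oscInt f b (∑ j ∈ s, a j) z = ∑ j ∈ s, oscInt f b (a j) z := by
  classical
  induction s using Finset.induction_on with
  | empty => simp [oscInt]
  | insert j s hj ih =>
    rw [Finset.sum_insert hj, Finset.sum_insert hj,
      hf.oscInt_add hpb (h j) (IsAmplitude.sum s h), ih]

theorem hasDerivAt_oscInt (hf : IsPhase f q ρ κ) {p b : ℕ} (hpb : 2 * q * b ≤ p) {a : Symb n}
    (ha : IsAmplitude ρ p a) (z : ℝ) :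
    HasDerivAt (oscInt f b a) (oscInt f b (mulX f (dt a)) z) z := by
  have ha' : IsAmplitude ρ p (mulX f (dt a)) :=
    (ha.dt.mulX hf.vanishes).mono (by omega)
  obtain ⟨C, hC⟩ := hf.exists_bound_div hpb ha'
  have hC0 : 0 ≤ C := (abs_nonneg _).trans (hC 0 0)
  refine (hasDerivAt_integral_of_dominated_loc_of_deriv_le (s := Set.univ)
    (F := fun z x => a (z * f x, x) / gradSq f x ^ b)
    (F' := fun z x => mulX f (dt a) (z * f x, x) / gradSq f x ^ b)
    (bound := (Metric.closedBall (0 : Space n) ρ).indicator fun _ => C)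
    univ_mem ?_ (hf.integrable hpb ha z) ?_ ?_ ?_ ?_).2
  · exact Eventually.of_forall fun y =>
      (hf.measurable_integrand b a y).aestronglyMeasurable
  · exact (hf.measurable_integrand b _ z).aestronglyMeasurable
  · refine Eventually.of_forall fun x y _ => ?_
    by_cases hx : x ∈ Metric.closedBall (0 : Space n) ρ
    · rw [Set.indicator_of_mem hx]
      exact hC _ x
    · rw [Set.indicator_of_notMem hx, ha'.support _ x (by simpa using hx), zero_div, norm_zero]
  · exact (integrable_indicator_iff measurableSet_closedBall).2
      (integrableOn_const (by exact measure_closedBall_lt_top.ne))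
  · refine Eventually.of_forall fun x y _ => ?_
    have h1 : HasDerivAt (fun s : ℝ => (s * f x, x)) (f x, (0 : Space n)) y := by
      have := (hasDerivAt_mul_const (x := y) (f x)).prodMk (hasDerivAt_const y x)
      simpa using this
    have h2 := (a.differentiable (y * f x, x)).hasFDerivAt.comp_hasDerivAt y h1
    have h3 := h2.div_const (gradSq f x ^ b)
    have h4 : fderiv ℝ a (y * f x, x) (f x, 0) = mulX f (dt a) (y * f x, x) := by
      rw [mulX_apply hf.temperate, dt_apply]
      have : ((f x, 0) : ℝ × Space n) = f x • (1, 0) := by ext <;> simp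
      rw [this, map_smul, smul_eq_mul]
    rw [h4] at h3
    exact h3

end IsPhase

/-! ### Integration by parts -/

theorem hasDerivAt_line {h : Space n → ℝ} {x : Space n} (hd : DifferentiableAt ℝ h x)
    (i : Fin n) :
    HasDerivAt (fun s : ℝ => h (x + s • EuclideanSpace.single i 1)) (partialDeriv i h x) 0 := by
  have h1 : HasDerivAt (fun s : ℝ => x + s • (EuclideanSpace.single i 1 : Space n))
      (EuclideanSpace.single i 1) 0 := by
    simpa using ((hasDerivAt_id (0 : ℝ)).smul_const
      (EuclideanSpace.single i 1 : Space n)).const_add x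
  have hx : HasFDerivAt h (fderiv ℝ h x) (x + (0 : ℝ) • (EuclideanSpace.single i 1 : Space n)) := by
    simpa using hd.hasFDerivAt
  exact hx.comp_hasDerivAt (0 : ℝ) h1

theorem differentiable_comp_phase (c : Symb n) {f : Space n → ℝ} (hf : f.HasTemperateGrowth)
    (z : ℝ) : Differentiable ℝ fun x => c (z * f x, x) := by
  have h1 : Differentiable ℝ f := fun x => differentiableAt_of_hasTemperateGrowth hf x
  exact c.differentiable.comp ((h1.const_mul z).prodMk differentiable_id)

theorem partialDeriv_comp_phase (c : Symb n) {f : Space n → ℝ} (hf : f.HasTemperateGrowth)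
    (z : ℝ) (i : Fin n) (x : Space n) :
    partialDeriv i (fun x => c (z * f x, x)) x
      = z * partialDeriv i f x * dt c (z * f x, x) + dx i c (z * f x, x) := by
  have h1 := ((differentiableAt_of_hasTemperateGrowth hf x).hasFDerivAt.const_mul z).prodMk
    (hasFDerivAt_id x)
  have h2 := HasFDerivAt.comp (g := c) (f := fun x => (z * f x, id x)) x
    (c.differentiable (z * f x, x)).hasFDerivAt h1
  have h3 : fderiv ℝ (fun x => c (z * f x, x)) x = _ := h2.fderiv
  rw [partialDeriv, h3, dt_apply, dx_apply]
  have : ((z * partialDeriv i f x, EuclideanSpace.single i 1) : ℝ × Space n)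
      = (z * partialDeriv i f x) • ((1 : ℝ), (0 : Space n))
        + ((0 : ℝ), EuclideanSpace.single i 1) := by
    ext <;> simp
  have h4 := congrArg (fderiv ℝ c (z * f x, x)) this
  rw [map_add, map_smul, smul_eq_mul] at h4
  rw [← h4]
  rfl

/-- The part of the divergence of `v c / |∇f| ^ (2 (b + 1))` in the direction `i` that does not
involve `∂ c / ∂ t`, multiplied by `|∇f| ^ (2 (b + 2))`. -/
noncomputable def flux (f : Space n → ℝ) (b : ℕ) (i : Fin n) (v : Space n → ℝ) (c : Symb n) :
    Symb n :=
  mulX (fun x => gradSq f x * partialDeriv i v x - (b + 1) * (v x * partialDeriv i (gradSq f) x)) c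
    + mulX (fun x => gradSq f x * v x) (dx i c)

namespace IsPhase

variable {f : Space n → ℝ} {q : ℕ} {ρ κ : ℝ}

theorem flux_coeff (hf : IsPhase f q ρ κ)
    {w : ℕ} {v : Space n → ℝ} (hv : VanishesToOrder w v) (hw : 1 ≤ w)
    (b : ℕ) (i : Fin n) : VanishesToOrder (2 * q + w - 1) (fun x => gradSq f x * partialDeriv i v x
      - (b + 1) * (v x * partialDeriv i (gradSq f) x)) := by
  have hq := hf.one_le
  refine VanishesToOrder.sub ?_ (VanishesToOrder.const_mul ?_ _)
  · exact (hf.vanishes_gradSq.mul (hv.partialDeriv i)).mono (by omega)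
  · exact (hv.mul (hf.vanishes_gradSq.partialDeriv i)).mono (by omega)

theorem flux_apply (hf : IsPhase f q ρ κ)
    {w : ℕ} {v : Space n → ℝ} (hv : VanishesToOrder w v) (hw : 1 ≤ w)
    (b : ℕ) (i : Fin n) (c : Symb n) (t : ℝ) (x : Space n) :
    flux f b i v c (t, x) = (gradSq f x * partialDeriv i v x
      - (b + 1) * (v x * partialDeriv i (gradSq f) x)) * c (t, x)
      + gradSq f x * v x * dx i c (t, x) := by
  rw [flux, add_apply, mulX_apply (hf.flux_coeff hv hw b i).hasTemperateGrowth,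
    mulX_apply (hf.vanishes_gradSq.mul hv).hasTemperateGrowth]

theorem isAmplitude_flux (hf : IsPhase f q ρ κ)
    {w p : ℕ} {v : Space n → ℝ} (hv : VanishesToOrder w v) (hw : 1 ≤ w)
    (b : ℕ) (i : Fin n) {c : Symb n} (hc : IsAmplitude ρ p c) :
    IsAmplitude ρ (2 * q + w + p - 1) (flux f b i v c) := by
  refine IsAmplitude.add ?_ ?_
  · exact (hc.mulX (hf.flux_coeff hv hw b i)).mono (by omega)
  · exact ((hc.dx i).mulX (hf.vanishes_gradSq.mul hv)).mono (by omega)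

/-- The integral of a partial derivative of `v c / |∇f| ^ (2 (b + 1))` is zero. -/
theorem component_ibp (hf : IsPhase f q ρ κ)
    (hn : 1 ≤ n) {w p b : ℕ} {v : Space n → ℝ} (hv : VanishesToOrder w v)
    (hw : 1 ≤ w) {c : Symb n} (hc : IsAmplitude ρ p c) (hwp : 2 * q * (b + 1) + 1 ≤ w + p)
    (z : ℝ) (i : Fin n)
    (h0 : DifferentiableAt ℝ (fun x => v x * c (z * f x, x) / gradSq f x ^ (b + 1)) 0) :
    z * oscInt f (b + 1) (mulX (fun x => v x * partialDeriv i f x) (dt c)) z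
      = - oscInt f (b + 2) (flux f b i v c) z := by
  have : Nontrivial (Space n) := by
    have : Nonempty (Fin n) := ⟨⟨0, hn⟩⟩
    infer_instance
  have hq := hf.one_le
  have hvf := hv.mul (hf.vanishes_partialDeriv i)
  have hD : ∀ x, DifferentiableAt ℝ (gradSq f) x :=
    differentiableAt_of_hasTemperateGrowth hf.vanishes_gradSq.hasTemperateGrowth
  have hvd : ∀ x, DifferentiableAt ℝ v x :=
    differentiableAt_of_hasTemperateGrowth hv.hasTemperateGrowth
  have hcd := differentiable_comp_phase c hf.temperate z
  have hA1 : IsAmplitude ρ (w + q + p) (mulX (fun x => v x * partialDeriv i f x) (dt c)) :=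
    hc.dt.mulX hvf
  have hA2 := hf.isAmplitude_flux hv hw b i hc
  have hb1 : 2 * q * (b + 1) ≤ w + q + p := by omega
  have hb2 : 2 * q * (b + 2) ≤ 2 * q + w + p - 1 := by
    have : 2 * q * (b + 2) = 2 * q * (b + 1) + 2 * q := by ring
    omega
  set φ : Space n → ℝ := fun x => v x * c (z * f x, x) / gradSq f x ^ (b + 1) with hφ
  set G : Space n → ℝ := fun x =>
    z * (mulX (fun x => v x * partialDeriv i f x) (dt c) (z * f x, x) / gradSq f x ^ (b + 1))
      + flux f b i v c (z * f x, x) / gradSq f x ^ (b + 2) with hG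
  have hGint : Integrable G :=
    ((hf.integrable hb1 hA1 z).const_mul z).add (hf.integrable hb2 hA2 z)
  have hφint : Integrable φ := by
    have h := hf.integrable (b := b + 1) (by omega) (hc.mulX hv) z
    simpa only [mulX_apply hv.hasTemperateGrowth] using h
  have hout : ∀ x, ρ < ‖x‖ → φ =ᶠ[nhds x] fun _ => 0 := by
    intro x hx
    have ho : IsOpen {y : Space n | ρ < ‖y‖} := isOpen_lt continuous_const continuous_norm
    filter_upwards [ho.mem_nhds hx] with y hy
    simp [hφ, hc.support _ y hy]
  have hin : ∀ x, ‖x‖ ≤ ρ → x ≠ 0 → DifferentiableAt ℝ φ x := by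
    intro x hx hx0
    have h1 : DifferentiableAt ℝ (fun y => gradSq f y ^ (b + 1)) x := (hD x).fun_pow _
    have h2 : gradSq f x ^ (b + 1) ≠ 0 := pow_ne_zero _ (hf.gradSq_ne_zero hx hx0)
    have h3 : DifferentiableAt ℝ (fun y => v y * c (z * f y, y)) x := (hvd x).fun_mul (hcd x)
    simpa only [hφ, div_eq_mul_inv] using h3.fun_mul (h1.fun_inv h2)
  have hdiff : Differentiable ℝ φ := by
    intro x
    rcases lt_or_ge ρ ‖x‖ with hx | hx
    · exact (differentiableAt_const (0 : ℝ)).congr_of_eventuallyEq (hout x hx)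
    · rcases eq_or_ne x 0 with rfl | hx0
      · exact h0
      · exact hin x hx hx0
  have hder : ∀ x, x ≠ 0 → partialDeriv i φ x = G x := by
    intro x hx0
    rcases lt_or_ge ρ ‖x‖ with hx | hx
    · have h1 : partialDeriv i φ x = 0 := by
        simp [partialDeriv, (hout x hx).fderiv_eq]
      rw [h1, hG]
      simp only [hA1.support _ x hx, hA2.support _ x hx, zero_div, mul_zero, add_zero]
    · have hne := hf.gradSq_ne_zero hx hx0
      have h1 := hasDerivAt_line (hvd x) i
      have h2 := hasDerivAt_line (hcd x) i
      have h3 := hasDerivAt_line (hD x) i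
      have h4 := (h1.mul h2).div (h3.pow (b + 1)) (by simpa using hne)
      have h5 := (hasDerivAt_line (hdiff x) i).unique h4
      rw [h5, hG]
      simp only [hf.flux_apply hv hw, mulX_apply hvf.hasTemperateGrowth,
        partialDeriv_comp_phase c hf.temperate,
        zero_smul, add_zero, Pi.mul_apply, Pi.pow_apply, Nat.add_sub_cancel]
      push_cast
      field_simp
      ring
  have hae : ∀ᵐ x : Space n, partialDeriv i φ x = G x := by
    have : ∀ᵐ x : Space n, x ≠ 0 := by
      simp [ae_iff]
    filter_upwards [this] with x hx using hder x hx
  have hdint : Integrable (partialDeriv i φ) := hGint.congr (hae.mono fun x hx => hx.symm)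
  have hzero : ∫ x, partialDeriv i φ x = 0 := by
    have := integral_mul_fderiv_eq_neg_fderiv_mul_of_integrable (μ := (volume : Measure (Space n)))
      (f := fun _ => (1 : ℝ)) (g := φ)
      (v := EuclideanSpace.single i 1) (by simp) (by simpa [partialDeriv] using! hdint)
      (by simpa using hφint)
      (fun x _ => differentiableAt_const _) (fun x _ => hdiff x)
    simpa [partialDeriv] using this
  rw [integral_congr_ae hae, hG,
    integral_add ((hf.integrable hb1 hA1 z).const_mul z) (hf.integrable hb2 hA2 z),
    integral_const_mul] at hzero
  exact eq_neg_of_add_eq_zero_left hzero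

theorem differentiableAt_zero (hf : IsPhase f q ρ κ)
    {w p b : ℕ} {v : Space n → ℝ} (hv : VanishesToOrder w v)
    {c : Symb n} (hc : IsAmplitude ρ p c) (hwp : 2 * q * b + 2 ≤ w + p) (z : ℝ) :
    DifferentiableAt ℝ (fun x => v x * c (z * f x, x) / gradSq f x ^ b) 0 := by
  obtain ⟨C, hC0, hC⟩ := (hc.mulX hv).exists_bound
  refine HasFDerivAt.differentiableAt (f' := 0) (Asymptotics.IsBigO.hasFDerivAt
    (n := w + p - 2 * q * b) (IsBigO.of_bound (C / κ ^ b) ?_) (by omega))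
  filter_upwards [Metric.closedBall_mem_nhds (0 : Space n) hf.radius_pos] with x hx
  have hx : ‖x‖ ≤ ρ := by simpa using hx
  have h1 := hC (z * f x) x
  rw [mulX_apply hv.hasTemperateGrowth] at h1
  have := hf.div_bound (b := b) (by omega) hC0 hx h1
  simpa only [sub_zero, Real.norm_eq_abs, abs_norm, abs_pow] using this

end IsPhase

/-- The defect in Euler's identity for `f` at degree `q + 1`. -/
noncomputable def eulerDefect (f : Space n → ℝ) (q : ℕ) : Space n → ℝ :=
  fun x => (q + 1) * f x - euler f x

/-- The components of a vector field `v` with `v · ∇f = (q + 1) f |∇f|²`. -/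
noncomputable def radialField (f : Space n → ℝ) (q : ℕ) (i : Fin n) : Space n → ℝ :=
  fun x => x i * gradSq f x + eulerDefect f q x * partialDeriv i f x

theorem sum_radialField_mul (f : Space n → ℝ) (q : ℕ) (x : Space n) :
    ∑ i, radialField f q i x * partialDeriv i f x = gradSq f x * ((q + 1) * f x) := by
  have h1 : ∀ i, radialField f q i x * partialDeriv i f x
      = gradSq f x * (x i * partialDeriv i f x)
        + eulerDefect f q x * (partialDeriv i f x * partialDeriv i f x) := by
    intro i
    simp only [radialField]
    ring
  simp only [h1, Finset.sum_add_distrib, ← Finset.mul_sum]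
  simp only [eulerDefect, euler, gradSq]
  ring

namespace IsPhase

variable {f : Space n → ℝ} {q : ℕ} {ρ κ : ℝ}

theorem ae_eq_of_support (hf : IsPhase f q ρ κ)
    (hn : 1 ≤ n) {F G : Space n → ℝ} (h1 : ∀ x, ρ < ‖x‖ → F x = G x)
    (h2 : ∀ x, gradSq f x ≠ 0 → F x = G x) : F =ᵐ[volume] G := by
  have : Nontrivial (Space n) := by
    have : Nonempty (Fin n) := ⟨⟨0, hn⟩⟩
    infer_instance
  have h0 : ∀ᵐ x : Space n, x ≠ 0 := by
    simp [ae_iff]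
  filter_upwards [h0] with x hx
  rcases lt_or_ge ρ ‖x‖ with h | h
  · exact h1 x h
  · exact h2 x (hf.gradSq_ne_zero h hx)

/-- Integration by parts along a vector field. -/
theorem ibp (hf : IsPhase f q ρ κ) (hn : 1 ≤ n) {w p b : ℕ} {v : Fin n → Space n → ℝ}
    (hv : ∀ i, VanishesToOrder w (v i))
    (hw : 1 ≤ w) {c : Symb n} (hc : IsAmplitude ρ p c) (hwp : 2 * q * (b + 1) + 1 ≤ w + p)
    (z : ℝ)
    (h0 : ∀ i, DifferentiableAt ℝ (fun x => v i x * c (z * f x, x) / gradSq f x ^ (b + 1)) 0)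
    {u : Space n → ℝ} (hu : u.HasTemperateGrowth)
    (huv : ∀ x, ∑ i, v i x * partialDeriv i f x = gradSq f x * u x) :
    z * oscInt f b (mulX u (dt c)) z = - oscInt f (b + 2) (∑ i, flux f b i (v i) c) z := by
  have hq := hf.one_le
  have hvf := fun i => (hv i).mul (hf.vanishes_partialDeriv i)
  have hA1 := fun i => hc.dt.mulX (hvf i)
  have hA2 := fun i => hf.isAmplitude_flux (hv i) hw b i hc
  have hb1 : 2 * q * (b + 1) ≤ w + q + p := by omega
  have hb2 : 2 * q * (b + 2) ≤ 2 * q + w + p - 1 := by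
    have : 2 * q * (b + 2) = 2 * q * (b + 1) + 2 * q := by ring
    omega
  have h1 : oscInt f b (mulX u (dt c)) z
      = oscInt f (b + 1) (∑ i, mulX (fun x => v i x * partialDeriv i f x) (dt c)) z := by
    refine integral_congr_ae (hf.ae_eq_of_support hn (fun x hx => ?_) fun x hx => ?_)
    · rw [(IsAmplitude.sum _ hA1).support _ x hx, mulX_apply hu, hc.dt.support _ x hx]
      simp
    · have h2 : (∑ i, mulX (fun x => v i x * partialDeriv i f x) (dt c)) (z * f x, x)
          = gradSq f x * u x * dt c (z * f x, x) := by
        rw [← huv, Finset.sum_mul, sum_apply]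
        exact Finset.sum_congr rfl fun i _ => mulX_apply (hvf i).hasTemperateGrowth _ _ _
      rw [h2, mulX_apply hu]
      field_simp
      ring
  rw [h1, hf.oscInt_sum hb1 _ hA1, hf.oscInt_sum hb2 _ hA2, Finset.mul_sum,
    ← Finset.sum_neg_distrib]
  exact Finset.sum_congr rfl fun i _ => hf.component_ibp hn (hv i) hw hc hwp z i (h0 i)

/-- Integration by parts along the gradient gains a factor `z⁻¹`. -/
theorem gradient_step (hf : IsPhase f q ρ κ)
    (hn : 1 ≤ n) {p b : ℕ} {a : Symb n} (ha : IsAmplitude ρ p a)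
    (hp : 2 * q * b + q + 2 ≤ p) :
    ∃ a', IsAmplitude ρ (3 * q + p - 1) a' ∧ ∀ z,
      z * (z * oscInt f b (mulX f (dt a)) z + oscInt f b a z) = oscInt f (b + 2) a' z := by
  have hq := hf.one_le
  have hexp : 2 * q * (b + 1) = 2 * q * b + 2 * q := by ring
  refine ⟨(-1 : ℝ) • ∑ i, flux f b i (partialDeriv i f) (mulT a), IsAmplitude.smul ?_ _,
    fun z => ?_⟩
  · exact IsAmplitude.sum _ fun i =>
      (hf.isAmplitude_flux (hf.vanishes_partialDeriv i) hq b i ha.mulT).mono (by omega)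
  · have h1 : VanishesToOrder 0 fun _ : Space n => (1 : ℝ) := Function.HasTemperateGrowth.const 1
    have key := hf.ibp hn (b := b) hf.vanishes_partialDeriv hq ha.mulT (by omega) z
      (fun i => hf.differentiableAt_zero (hf.vanishes_partialDeriv i) ha.mulT (by omega) z)
      h1 (fun x => by rw [mul_one]; rfl)
    rw [oscInt_smul, neg_one_mul, ← key]
    have hA : IsAmplitude ρ p (mulX f (dt a)) := (ha.dt.mulX hf.vanishes).mono (by omega)
    rw [← oscInt_smul, ← hf.oscInt_add (by omega) (hA.smul z) ha]
    congr 1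
    refine integral_congr_ae (Eventually.of_forall fun x => ?_)
    simp only [add_apply, smul_apply, smul_eq_mul, mulX_apply hf.temperate,
      mulX_apply h1, dt_mulT]
    ring

theorem vanishes_eulerDefect (hf : IsPhase f q ρ κ)
    : VanishesToOrder (q + 2) (eulerDefect f q) := by
  have := hf.vanishes.euler_sub.const_mul (-1)
  convert this using 2
  simp only [eulerDefect]
  push_cast
  ring

theorem vanishes_radialField (hf : IsPhase f q ρ κ)
    (i : Fin n) : VanishesToOrder (2 * q + 1) (radialField f q i) :=
  (((VanishesToOrder.coord i).mul hf.vanishes_gradSq).mono (by omega)).add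
    ((hf.vanishes_eulerDefect.mul (hf.vanishes_partialDeriv i)).mono (by omega))

theorem sum_partialDeriv_radialField (hf : IsPhase f q ρ κ) :
    ∃ S, VanishesToOrder (2 * q + 1) S ∧ ∀ x, ∑ i, partialDeriv i (radialField f q i) x
      = (n + 2 * q) * gradSq f x + S x := by
  have hD := hf.vanishes_gradSq
  have hR := hf.vanishes_eulerDefect
  refine ⟨fun x => (euler (gradSq f) x - (2 * q : ℕ) * gradSq f x)
    + ∑ i, (partialDeriv i (eulerDefect f q) x * partialDeriv i f x
      + eulerDefect f q x * partialDeriv i (partialDeriv i f) x), ?_, fun x => ?_⟩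
  · refine hD.euler_sub.add (VanishesToOrder.sum _ fun i => ?_)
    have hq := hf.one_le
    exact (((hR.partialDeriv i).mul (hf.vanishes_partialDeriv i)).mono (by omega)).add
      ((hR.mul ((hf.vanishes_partialDeriv i).partialDeriv i)).mono (by omega))
  · have h1 : ∀ i, partialDeriv i (radialField f q i) x
        = (gradSq f x + x i * partialDeriv i (gradSq f) x)
        + (partialDeriv i (eulerDefect f q) x * partialDeriv i f x
          + eulerDefect f q x * partialDeriv i (partialDeriv i f) x) := by
      intro i
      have hi := (hf.vanishes_partialDeriv i).hasTemperateGrowth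
      unfold radialField
      rw [partialDeriv_add ((hasTemperateGrowth_coord i).fun_mul hD.hasTemperateGrowth)
        (hR.hasTemperateGrowth.fun_mul hi),
        partialDeriv_mul (hasTemperateGrowth_coord i) hD.hasTemperateGrowth,
        partialDeriv_mul hR.hasTemperateGrowth hi, partialDeriv_coord]
      simp
    simp only [h1, Finset.sum_add_distrib]
    simp only [euler, Finset.sum_const, Finset.card_univ, Fintype.card_fin, nsmul_eq_mul]
    push_cast
    ring

theorem sum_radialField_mul_partialDeriv (hf : IsPhase f q ρ κ)
    {p : ℕ} {A : Space n → ℝ} (hA : VanishesToOrder p A) :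
    ∃ S, VanishesToOrder (2 * q + p + 1) S ∧ ∀ x,
      ∑ i, radialField f q i x * partialDeriv i A x = p * (gradSq f x * A x) + S x := by
  have hD := hf.vanishes_gradSq
  have hR := hf.vanishes_eulerDefect
  refine ⟨fun x => gradSq f x * (euler A x - p * A x)
    + ∑ i, eulerDefect f q x * (partialDeriv i f x * partialDeriv i A x), ?_, fun x => ?_⟩
  · refine ((hD.mul hA.euler_sub).mono (by omega)).add (VanishesToOrder.sum _ fun i => ?_)
    exact (hR.mul ((hf.vanishes_partialDeriv i).mul (hA.partialDeriv i))).mono (by omega)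
  · have h1 : ∀ i, radialField f q i x * partialDeriv i A x
        = gradSq f x * (x i * partialDeriv i A x)
          + eulerDefect f q x * (partialDeriv i f x * partialDeriv i A x) := by
      intro i
      simp only [radialField]
      ring
    simp only [h1, Finset.sum_add_distrib, ← Finset.mul_sum]
    simp only [euler]
    ring

/-- The total flux along the radial field is a multiple of the amplitude up to an amplitude of
higher order. -/
theorem isAmplitude_radial (hf : IsPhase f q ρ κ) {b i p : ℕ} (hp : p = i + 2 * q * b) {a : Symb n}
    (ha : IsAmplitude ρ p a) :
    IsAmplitude ρ (4 * q + p + 1)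
      (mulX (fun x => (n + i) * (gradSq f x * gradSq f x)) a
        + (-1 : ℝ) • ∑ j, flux f b j (radialField f q j) a) := by
  have hD := hf.vanishes_gradSq
  have hq := hf.one_le
  have hDD := (hD.mul hD).const_mul (n + i)
  have hfl := fun j => hf.isAmplitude_flux (hf.vanishes_radialField j) (by omega) b j ha
  constructor
  · intro t
    obtain ⟨S₁, hS₁, h₁⟩ := hf.sum_partialDeriv_radialField
    obtain ⟨S₂, hS₂, h₂⟩ := hf.sum_radialField_mul_partialDeriv hD
    obtain ⟨S₃, hS₃, h₃⟩ := hf.sum_radialField_mul_partialDeriv (ha.vanishes t)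
    have hfin : VanishesToOrder (4 * q + p + 1) fun x =>
        (-1) * (gradSq f x * (S₁ x * a (t, x)) + (-(b + 1)) * (S₂ x * a (t, x))
          + gradSq f x * S₃ x) := by
      refine VanishesToOrder.const_mul (VanishesToOrder.add (VanishesToOrder.add ?_
        (VanishesToOrder.const_mul ?_ _)) ?_) _
      · exact (hD.mul (hS₁.mul (ha.vanishes t))).mono (by omega)
      · exact (hS₂.mul (ha.vanishes t)).mono (by omega)
      · exact (hD.mul hS₃).mono (by omega)
    convert hfin using 2 with x
    have hsum : ∑ j, flux f b j (radialField f q j) a (t, x)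
        = gradSq f x * (∑ j, partialDeriv j (radialField f q j) x) * a (t, x)
          - (b + 1) * (∑ j, radialField f q j x * partialDeriv j (gradSq f) x) * a (t, x)
          + gradSq f x * ∑ j, radialField f q j x * partialDeriv j (fun x => a (t, x)) x := by
      simp only [Finset.mul_sum, Finset.sum_mul, ← Finset.sum_sub_distrib,
        ← Finset.sum_add_distrib]
      refine Finset.sum_congr rfl fun j _ => ?_
      rw [hf.flux_apply (hf.vanishes_radialField j) (by omega), partialDeriv_slice]
      ring
    rw [add_apply, smul_apply, sum_apply, hsum, h₁, h₂, h₃, mulX_apply hDD.hasTemperateGrowth, hp]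
    push_cast
    simp only [smul_eq_mul]
    ring
  · intro t x hx
    rw [add_apply, smul_apply, (IsAmplitude.sum _ hfl).support t x hx,
      (ha.mulX hDD).support t x hx]
    simp

theorem differentiableAt_zero_radial (hf : IsPhase f q ρ κ)
    {a : Symb n} (ha : IsAmplitude ρ 0 a) (z : ℝ) (i : Fin n) :
    DifferentiableAt ℝ
      (fun x => radialField f q i x * a (z * f x, x) / gradSq f x ^ (0 + 1)) 0 := by
  have hq := hf.one_le
  have h1 := hf.differentiableAt_zero (b := 1)
    (hf.vanishes_eulerDefect.mul (hf.vanishes_partialDeriv i)) ha (by omega) z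
  have h2 : DifferentiableAt ℝ (fun x : Space n => x i * a (z * f x, x)) 0 :=
    (differentiableAt_of_hasTemperateGrowth (hasTemperateGrowth_coord i) 0).fun_mul
      (differentiable_comp_phase a hf.temperate z 0)
  refine (h2.fun_add h1).congr_of_eventuallyEq ?_
  filter_upwards [Metric.closedBall_mem_nhds (0 : Space n) hf.radius_pos] with x hx
  rcases eq_or_ne x 0 with rfl | h0
  · have : gradSq f (0 : Space n) = 0 := hf.vanishes_gradSq.apply_zero (by omega)
    simp [this]
  · have := hf.gradSq_ne_zero (by simpa using hx) h0
    simp only [radialField]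
    field_simp
    ring

/-- Integration by parts along the radial field raises the order of the amplitude. -/
theorem radial_step (hf : IsPhase f q ρ κ)
    (hn : 1 ≤ n) {p b i : ℕ} (hp : p = i + 2 * q * b) {a : Symb n}
    (ha : IsAmplitude ρ p a) (hbi : b = 0 ∨ 1 ≤ i) :
    ∃ a', IsAmplitude ρ (4 * q + p + 1) a' ∧ ∀ z,
      (q + 1) * (z * oscInt f b (mulX f (dt a)) z) + (n + i) * oscInt f b a z
        = oscInt f (b + 2) a' z := by
  have hq := hf.one_le
  have hD := hf.vanishes_gradSq
  have hDD := (hD.mul hD).const_mul (n + i)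
  have hexp : 2 * q * (b + 1) = 2 * q * b + 2 * q := by ring
  have hexp2 : 2 * q * (b + 2) = 2 * q * b + 4 * q := by ring
  refine ⟨_, hf.isAmplitude_radial hp ha, fun z => ?_⟩
  have h0 : ∀ j, DifferentiableAt ℝ
      (fun x => radialField f q j x * a (z * f x, x) / gradSq f x ^ (b + 1)) 0 := by
    intro j
    rcases Nat.eq_zero_or_pos i with rfl | hi
    · obtain rfl : b = 0 := by omega
      obtain rfl : p = 0 := by simpa using hp
      exact hf.differentiableAt_zero_radial ha z j
    · exact hf.differentiableAt_zero (hf.vanishes_radialField j) ha (by omega) z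
  have hu : VanishesToOrder (q + 1) fun x => ((q : ℝ) + 1) * f x := hf.vanishes.const_mul _
  have key := hf.ibp hn (b := b) hf.vanishes_radialField (by omega) ha (by omega) z h0
    hu.hasTemperateGrowth (sum_radialField_mul f q)
  have hfl := fun j => hf.isAmplitude_flux (hf.vanishes_radialField j) (by omega) b j ha
  have hA : IsAmplitude ρ (4 * q + p) (mulX (fun x => (n + i) * (gradSq f x * gradSq f x)) a) :=
    (ha.mulX hDD).mono (by omega)
  have hB : IsAmplitude ρ (4 * q + p) ((-1 : ℝ) • ∑ j, flux f b j (radialField f q j) a) :=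
    ((IsAmplitude.sum _ hfl).smul _).mono (by omega)
  rw [hf.oscInt_add (by omega) hA hB, oscInt_smul, neg_one_mul, ← key, add_comm]
  congr 1
  · rw [← oscInt_smul]
    refine integral_congr_ae (hf.ae_eq_of_support hn (fun x hx => ?_) fun x hx => ?_)
    · rw [smul_apply, ha.support _ x hx, hA.support _ x hx]
      simp
    · rw [smul_apply, mulX_apply hDD.hasTemperateGrowth, smul_eq_mul]
      field_simp
      ring
  · rw [mul_left_comm, ← oscInt_smul]
    congr 1
    refine integral_congr_ae (Eventually.of_forall fun x => ?_)
    simp only [smul_apply, smul_eq_mul, mulX_apply hf.temperate,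
      mulX_apply hu.hasTemperateGrowth]
    ring

end IsPhase

/-! ### Asymptotic expansions and Euler-type equations -/

/-- The finite sum of the terms `z ^ (-l / k) (c l + d l log z)`, `l < K`. -/
noncomputable def logSum (k : ℝ) (K : ℕ) (c d : ℕ → ℝ) (z : ℝ) : ℝ :=
  ∑ l ∈ Finset.range K, z ^ (-(l : ℝ) / k) * (c l + d l * Real.log z)

/-- A function agreeing with a sum `logSum` up to `O(z ^ (-γ))`. -/
def HasLogExpansion (k : ℝ) (K : ℕ) (γ : ℝ) (y : ℝ → ℝ) (c d : ℕ → ℝ) : Prop :=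
  (fun z => y z - logSum k K c d z) =O[atTop] fun z => z ^ (-γ)

theorem hasDerivAt_rpow_mul_log {s a b z : ℝ} (hz : 0 < z) :
    HasDerivAt (fun z => z ^ s * (a + b * Real.log z))
      (z⁻¹ * (z ^ s * (s * (a + b * Real.log z) + b))) z := by
  have h1 := Real.hasDerivAt_rpow_const (x := z) (p := s) (Or.inl hz.ne')
  have h2 := ((Real.hasDerivAt_log hz.ne').const_mul b).const_add a
  have h3 := h1.fun_mul h2
  refine h3.congr_deriv ?_
  rw [Real.rpow_sub_one hz.ne']
  field_simp

/-- A function whose derivative is `O(z ^ (-β - 1))` has a limit up to `O(z ^ (-β))`; if `β < 0`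
this just bounds the growth. -/
theorem exists_sub_const_isBigO {w w' : ℝ → ℝ} (hw : ∀ z, 0 < z → HasDerivAt w (w' z) z) {β : ℝ}
    (hβ : β ≠ 0) (hO : w' =O[atTop] fun z => z ^ (-β - 1)) :
    ∃ c, (fun z => w z - c) =O[atTop] fun z => z ^ (-β) := by
  obtain ⟨C, hC0, hC⟩ := hO.exists_pos
  obtain ⟨Z₀, hZ₀⟩ := eventually_atTop.1 hC.bound
  set Z := max Z₀ 1 with hZ
  have hZ1 : 1 ≤ Z := le_max_right _ _
  have hb : ∀ z, Z ≤ z → |w' z| ≤ C * z ^ (-β - 1) := by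
    intro z hz
    have h1 : 0 < z := by linarith
    have := hZ₀ z ((le_max_left _ _).trans hz)
    rwa [Real.norm_eq_abs, Real.norm_eq_abs, abs_of_pos (Real.rpow_pos_of_pos h1 _)] at this
  set B := C / β with hB
  have hder : ∀ s z, 0 < z →
      HasDerivAt (fun z => w z + s * z ^ (-β)) (w' z + s * (-β * z ^ (-β - 1))) z := fun s z hz =>
    (hw z hz).fun_add ((Real.hasDerivAt_rpow_const (Or.inl hz.ne')).const_mul s)
  have hmono : MonotoneOn (fun z => w z + (-B) * z ^ (-β)) (Set.Ici Z) := by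
    refine monotoneOn_of_hasDerivWithinAt_nonneg (convex_Ici Z) ?_ (fun z hz =>
      (hder (-B) z ?_).hasDerivWithinAt) fun z hz => ?_
    · exact fun z hz =>
        (hder (-B) z (by linarith [Set.mem_Ici.1 hz])).continuousAt.continuousWithinAt
    · rw [interior_Ici] at hz
      linarith [Set.mem_Ioi.1 hz]
    · rw [interior_Ici] at hz
      have h1 := (abs_le.1 (hb z (le_of_lt hz))).1
      have h2 : -B * (-β * z ^ (-β - 1)) = C * z ^ (-β - 1) := by
        rw [hB]
        field_simp
      linarith
  have hanti : AntitoneOn (fun z => w z + B * z ^ (-β)) (Set.Ici Z) := by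
    refine antitoneOn_of_hasDerivWithinAt_nonpos (convex_Ici Z) ?_ (fun z hz =>
      (hder B z ?_).hasDerivWithinAt) fun z hz => ?_
    · exact fun z hz => (hder B z (by linarith [Set.mem_Ici.1 hz])).continuousAt.continuousWithinAt
    · rw [interior_Ici] at hz
      linarith [Set.mem_Ioi.1 hz]
    · rw [interior_Ici] at hz
      have h1 := (abs_le.1 (hb z (le_of_lt hz))).2
      have h2 : B * (-β * z ^ (-β - 1)) = -(C * z ^ (-β - 1)) := by
        rw [hB]
        field_simp
      linarith
  rcases lt_or_gt_of_ne hβ with hneg | hpos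
  · refine ⟨0, IsBigO.of_bound (|w Z + (-B) * Z ^ (-β)| + |w Z + B * Z ^ (-β)| - B) ?_⟩
    filter_upwards [eventually_ge_atTop Z] with z hz
    have hz1 : 1 ≤ z := hZ1.trans hz
    have h1 := hmono Set.self_mem_Ici hz hz
    have h2 := hanti Set.self_mem_Ici hz hz
    simp only at h1 h2
    have h3 : 1 ≤ z ^ (-β) := Real.one_le_rpow hz1 (by linarith)
    rw [sub_zero, Real.norm_eq_abs, Real.norm_eq_abs, abs_of_nonneg (by linarith : 0 ≤ z ^ (-β))]
    have h4 := neg_abs_le (w Z + (-B) * Z ^ (-β))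
    have h5 := le_abs_self (w Z + B * Z ^ (-β))
    have h6 := abs_nonneg (w Z + (-B) * Z ^ (-β))
    have h7 := abs_nonneg (w Z + B * Z ^ (-β))
    rw [abs_le]
    constructor <;> nlinarith
  · have hBpos : 0 < B := div_pos hC0 hpos
    have hle : ∀ z₁ z₂, Z ≤ z₁ → Z ≤ z₂ →
        w z₁ + (-B) * z₁ ^ (-β) ≤ w z₂ + B * z₂ ^ (-β) := by
      intro z₁ z₂ h₁ h₂
      have hm : Z ≤ max z₁ z₂ := h₁.trans (le_max_left _ _)
      have h3 := hmono h₁ hm (le_max_left _ _)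
      have h4 := hanti h₂ hm (le_max_right _ _)
      simp only at h3 h4
      have h5 : 0 < (max z₁ z₂) ^ (-β) := Real.rpow_pos_of_pos (by linarith) _
      nlinarith
    obtain ⟨c, hc1, hc2⟩ : ∃ c, (∀ z, Z ≤ z → w z + (-B) * z ^ (-β) ≤ c) ∧
        ∀ z, Z ≤ z → c ≤ w z + B * z ^ (-β) := by
      refine ⟨sSup ((fun z => w z + (-B) * z ^ (-β)) '' Set.Ici Z), fun z hz => ?_, fun z hz => ?_⟩
      · refine le_csSup ⟨w Z + B * Z ^ (-β), ?_⟩ ⟨z, hz, rfl⟩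
        rintro _ ⟨z', hz', rfl⟩
        exact hle z' Z hz' le_rfl
      · refine csSup_le ⟨_, Z, Set.self_mem_Ici, rfl⟩ ?_
        rintro _ ⟨z', hz', rfl⟩
        exact hle z' z hz' hz
    refine ⟨c, IsBigO.of_bound B ?_⟩
    filter_upwards [eventually_ge_atTop Z] with z hz
    have h3 : 0 < z ^ (-β) := Real.rpow_pos_of_pos (by linarith) _
    rw [Real.norm_eq_abs, Real.norm_eq_abs, abs_of_pos h3, abs_le]
    constructor <;> linarith [hc1 z hz, hc2 z hz]

theorem HasLogExpansion.const_mul {k γ : ℝ} {K : ℕ} {y : ℝ → ℝ} {c d : ℕ → ℝ}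
    (h : HasLogExpansion k K γ y c d) (s : ℝ) :
    HasLogExpansion k K γ (fun z => s * y z) (fun l => s * c l) (fun l => s * d l) := by
  refine (h.const_mul_left s).congr_left fun z => ?_
  rw [mul_sub, logSum, logSum, Finset.mul_sum]
  congr 1
  exact Finset.sum_congr rfl fun l _ => by ring

theorem HasLogExpansion.congr {k γ : ℝ} {K : ℕ} {y₁ y₂ : ℝ → ℝ} {c d : ℕ → ℝ}
    (h : HasLogExpansion k K γ y₁ c d) (he : ∀ z, 0 < z → y₁ z = y₂ z) :
    HasLogExpansion k K γ y₂ c d := by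
  refine h.congr' ?_ EventuallyEq.rfl
  filter_upwards [eventually_gt_atTop 0] with z hz
  rw [he z hz]

/-- Solving `z y' + (β / k) y = h` for expansions. -/
theorem HasLogExpansion.of_euler_equation {k γ : ℝ} (hk : 0 < k) {K β : ℕ} (hβ : β < K)
    (hγ : γ ≠ β / k) {y y' h : ℝ → ℝ} (hy : ∀ z, 0 < z → HasDerivAt y (y' z) z)
    (heq : ∀ z, 0 < z → z * y' z + β / k * y z = h z) {c d : ℕ → ℝ}
    (hexp : HasLogExpansion k K γ h c d) (hd : d β = 0) :
    ∃ c' d', HasLogExpansion k K γ y c' d' ∧ d' β = c β ∧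
      ∀ l, l ≠ β → d l = 0 → d' l = 0 ∧ (c l = 0 → c' l = 0) := by
  classical
  set d' : ℕ → ℝ := fun l => if l = β then c β else d l * k / (β - l) with hd'
  set c₀ : ℕ → ℝ := fun l => if l = β then 0 else (c l - d' l) * k / (β - l) with hc₀
  have hne : ∀ l : ℕ, l ≠ β → (β : ℝ) - l ≠ 0 := fun l hl =>
    sub_ne_zero.2 fun h => hl (by exact_mod_cast h.symm)
  set e : ℝ → ℝ := fun z => y z - logSum k K c₀ d' z with he
  set P' : ℝ → ℝ := fun z => ∑ l ∈ Finset.range K, z⁻¹ * (z ^ (-(l : ℝ) / k) *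
    (-(l : ℝ) / k * (c₀ l + d' l * Real.log z) + d' l)) with hP'
  have hPder : ∀ z, 0 < z → HasDerivAt (logSum k K c₀ d') (P' z) z := fun z hz =>
    HasDerivAt.fun_sum fun l _ => hasDerivAt_rpow_mul_log hz
  have hPeq : ∀ z, 0 < z → z * P' z + β / k * logSum k K c₀ d' z = logSum k K c d z := by
    intro z hz
    simp only [hP', logSum, Finset.mul_sum, ← Finset.sum_add_distrib]
    refine Finset.sum_congr rfl fun l _ => ?_
    rw [mul_inv_cancel_left₀ hz.ne']
    by_cases hl : l = β
    · subst hl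
      simp only [hc₀, hd', if_true, hd]
      ring
    · have h1 : ((β : ℝ) - l) / k * d' l = d l := by
        have := hne l hl
        simp only [hd', if_neg hl]
        field_simp
      have h2 : ((β : ℝ) - l) / k * c₀ l = c l - d' l := by
        have := hne l hl
        simp only [hc₀, if_neg hl]
        field_simp
      have h3 : c l = ((β : ℝ) - l) / k * c₀ l + d' l := by rw [h2]; ring
      rw [h3, ← h1]
      ring
  set w : ℝ → ℝ := fun z => z ^ ((β : ℝ) / k) * e z with hw
  set w' : ℝ → ℝ := fun z => z ^ ((β : ℝ) / k - 1) * (h z - logSum k K c d z) with hw'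
  have hwder : ∀ z, 0 < z → HasDerivAt w (w' z) z := by
    intro z hz
    have h1 := Real.hasDerivAt_rpow_const (x := z) (p := (β : ℝ) / k) (Or.inl hz.ne')
    have h2 := h1.fun_mul ((hy z hz).fun_sub (hPder z hz))
    refine h2.congr_deriv ?_
    simp only [hw']
    rw [← heq z hz, ← hPeq z hz, Real.rpow_sub_one hz.ne']
    field_simp
    ring
  have hwO : w' =O[atTop] fun z => z ^ (-(γ - β / k) - 1) := by
    have h1 := (isBigO_refl (fun z : ℝ => z ^ ((β : ℝ) / k - 1)) atTop).mul hexp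
    refine h1.congr' EventuallyEq.rfl ?_
    filter_upwards [eventually_gt_atTop 0] with z hz
    rw [← Real.rpow_add hz]
    congr 1
    ring
  obtain ⟨C, hC⟩ := exists_sub_const_isBigO hwder (sub_ne_zero.2 hγ) hwO
  refine ⟨fun l => if l = β then C else c₀ l, d', ?_, by simp [hd'], fun l hl hdl => ?_⟩
  · have h1 := (isBigO_refl (fun z : ℝ => z ^ (-(β : ℝ) / k)) atTop).mul hC
    refine h1.congr' ?_ ?_
    · filter_upwards [eventually_gt_atTop 0] with z hz
      have h2 : logSum k K (fun l => if l = β then C else c₀ l) d' z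
          = logSum k K c₀ d' z + z ^ (-(β : ℝ) / k) * C := by
        have h3 : z ^ (-(β : ℝ) / k) * C
            = ∑ l ∈ Finset.range K, if l = β then z ^ (-(l : ℝ) / k) * C else 0 := by
          rw [Finset.sum_ite_eq' _ β, if_pos (Finset.mem_range.2 hβ)]
        rw [h3, logSum, logSum, ← Finset.sum_add_distrib]
        refine Finset.sum_congr rfl fun l _ => ?_
        by_cases hl : l = β
        · simp only [hl, if_true, hc₀]
          ring
        · simp [hl]
      rw [h2]
      have h4 : z ^ (-(β : ℝ) / k) * z ^ ((β : ℝ) / k) = 1 := by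
        rw [← Real.rpow_add hz, neg_div, neg_add_cancel, Real.rpow_zero]
      simp only [hw, he]
      linear_combination (y z - logSum k K c₀ d' z) * h4
    · filter_upwards [eventually_gt_atTop 0] with z hz
      rw [← Real.rpow_add hz]
      congr 1
      ring
  · have h1 : d' l = 0 := by simp [hd', hl, hdl]
    exact ⟨h1, fun hcl => by simp [hl, hc₀, h1, hcl]⟩

/-- The order of the remainder reached after `J` integrations by parts along the gradient. -/
noncomputable def remainderOrder (q J : ℕ) : ℝ := J - 1 / (2 * ((q : ℝ) + 1))

theorem remainderOrder_ne (q J β : ℕ) : remainderOrder q J ≠ β / ((q : ℝ) + 1) := by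
  intro h
  have hq : (0 : ℝ) < (q : ℝ) + 1 := by positivity
  rw [remainderOrder] at h
  field_simp at h
  have h1 : 2 * (J * (q + 1)) = 2 * β + 1 := by
    have : (2 * (J * (q + 1)) : ℝ) = 2 * β + 1 := by linarith
    exact_mod_cast this
  omega

namespace IsPhase

variable {f : Space n → ℝ} {q : ℕ} {ρ κ : ℝ}

/-- Amplitudes of high order give expansions in integral powers. -/
theorem hasLogExpansion_of_large_order (hf : IsPhase f q ρ κ)
    (hn : 1 ≤ n) {K J : ℕ} (hK : (q + 1) * J < K) (r : ℕ) :
    ∀ (j b : ℕ) (a : Symb n), j + r = J → IsAmplitude ρ ((q + 1) * r + 1 + 2 * q * b) a →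
      ∃ c : ℕ → ℝ, HasLogExpansion (q + 1) K (remainderOrder q J)
        (fun z => z ^ (-(j : ℝ)) * oscInt f b a z) c 0 ∧
        ∀ l, c l ≠ 0 → (q + 1) ∣ l ∧ (q + 1) * j < l := by
  have hq := hf.one_le
  have hq0 : (0 : ℝ) < (q : ℝ) + 1 := by positivity
  induction r with
  | zero =>
    intro j b a hj ha
    refine ⟨0, ?_, fun l hl => absurd rfl hl⟩
    obtain ⟨B, hB⟩ := hf.oscInt_bounded (b := b) (by omega) ha
    refine IsBigO.of_bound |B| ?_
    filter_upwards [eventually_ge_atTop 1] with z hz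
    have hz0 : 0 < z := by linarith
    have h1 : logSum ((q : ℝ) + 1) K 0 0 z = 0 := by simp [logSum]
    rw [h1, sub_zero, norm_mul, mul_comm]
    gcongr
    · exact (hB z).trans (le_abs_self B)
    · rw [Real.norm_of_nonneg (Real.rpow_nonneg hz0.le _),
        Real.norm_of_nonneg (Real.rpow_nonneg hz0.le _)]
      refine Real.rpow_le_rpow_of_exponent_le hz (neg_le_neg ?_)
      obtain rfl : j = J := by simpa using hj
      rw [remainderOrder]
      have : 0 ≤ 1 / (2 * ((q : ℝ) + 1)) := by positivity
      linarith
  | succ r ih =>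
    intro j b a hj ha
    have hexp : (q + 1) * (r + 1) = (q + 1) * r + q + 1 := by ring
    have hexp2 : 2 * q * (b + 2) = 2 * q * b + 4 * q := by ring
    obtain ⟨a', ha', hstep⟩ := hf.gradient_step (b := b) hn ha (by rw [hexp]; omega)
    obtain ⟨c, hc, hcl⟩ := ih (j + 1) (b + 2) a' (by omega) (ha'.mono (by rw [hexp, hexp2]; omega))
    have hβ : (q + 1) * (j + 1) < K :=
      (Nat.mul_le_mul_left (q + 1) (show j + 1 ≤ J by omega)).trans_lt hK
    have hder : ∀ z, 0 < z → HasDerivAt (fun z => z ^ (-(j : ℝ)) * oscInt f b a z)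
        (-(j : ℝ) * z ^ (-(j : ℝ) - 1) * oscInt f b a z
          + z ^ (-(j : ℝ)) * oscInt f b (mulX f (dt a)) z) z := fun z hz =>
      (Real.hasDerivAt_rpow_const (Or.inl hz.ne')).fun_mul
        (hf.hasDerivAt_oscInt (b := b) (by omega) ha z)
    have heq : ∀ z, 0 < z → z * (-(j : ℝ) * z ^ (-(j : ℝ) - 1) * oscInt f b a z
          + z ^ (-(j : ℝ)) * oscInt f b (mulX f (dt a)) z)
        + ((q + 1) * (j + 1) : ℕ) / ((q : ℝ) + 1) * (z ^ (-(j : ℝ)) * oscInt f b a z)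
        = z ^ (-((j + 1 : ℕ) : ℝ)) * oscInt f (b + 2) a' z := by
      intro z hz
      have h1 := hstep z
      have h2 : z ^ (-((j + 1 : ℕ) : ℝ)) = z ^ (-(j : ℝ)) * z⁻¹ := by
        rw [← Real.rpow_neg_one z, ← Real.rpow_add hz]
        congr 1
        push_cast
        ring
      rw [h2, ← h1, Real.rpow_sub_one hz.ne']
      push_cast
      field_simp
      ring
    obtain ⟨c', d', hc', hd', hcd⟩ := HasLogExpansion.of_euler_equation hq0 hβ
      (remainderOrder_ne q J _) hder heq hc rfl
    have hc0 : c ((q + 1) * (j + 1)) = 0 := by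
      by_contra h
      exact lt_irrefl _ (hcl _ h).2
    have hd0 : d' = 0 := by
      ext l
      rcases eq_or_ne l ((q + 1) * (j + 1)) with rfl | hl
      · rw [hd', hc0]
        rfl
      · exact (hcd l hl rfl).1
    refine ⟨c', hd0 ▸ hc', fun l hl => ?_⟩
    rcases eq_or_ne l ((q + 1) * (j + 1)) with rfl | hne
    · exact ⟨dvd_mul_right _ _, Nat.mul_lt_mul_of_pos_left (Nat.lt_succ_self j) (Nat.succ_pos q)⟩
    · have h1 := hcl l fun h => hl ((hcd l hne rfl).2 h)
      exact ⟨h1.1, (Nat.mul_le_mul_left (q + 1) (Nat.le_succ j)).trans_lt h1.2⟩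

/-- Every admissible amplitude gives an expansion whose logarithms come with integral powers. -/
theorem hasLogExpansion_oscInt (hf : IsPhase f q ρ κ)
    (hn : 1 ≤ n) {K J : ℕ} (hK : n + (q + 1) * J + 1 < K) (s : ℕ) :
    ∀ (i b : ℕ) (a : Symb n), i + s = (q + 1) * J + 1 → IsAmplitude ρ (i + 2 * q * b) a →
      (b = 0 ∨ 1 ≤ i) →
      ∃ c d : ℕ → ℝ, HasLogExpansion (q + 1) K (remainderOrder q J) (oscInt f b a) c d ∧
        (∀ l, c l ≠ 0 → (q + 1) ∣ l ∨ n + i ≤ l) ∧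
        ∀ l, d l ≠ 0 → (q + 1) ∣ l ∧ n + i ≤ l := by
  have hq := hf.one_le
  have hq0 : (0 : ℝ) < (q : ℝ) + 1 := by positivity
  induction s with
  | zero =>
    intro i b a hi ha _
    obtain rfl : i = (q + 1) * J + 1 := by simpa using hi
    obtain ⟨c, hc, hcl⟩ := hf.hasLogExpansion_of_large_order hn (K := K) (J := J) (by omega) J 0 b a
      (by simp) ha
    refine ⟨c, 0, hc.congr fun z _ => by simp, fun l hl => Or.inl (hcl l hl).1,
      fun l hl => absurd rfl hl⟩
  | succ s ih =>
    intro i b a hi ha hbi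
    have hexp2 : 2 * q * (b + 2) = 2 * q * b + 4 * q := by ring
    obtain ⟨a', ha', hstep⟩ := hf.radial_step hn rfl ha hbi
    obtain ⟨c, d, hcd, hc, hd⟩ := ih (i + 1) (b + 2) a' (by omega)
      (ha'.mono (by rw [hexp2]; omega)) (Or.inr (by omega))
    have hdz : d (n + i) = 0 := by
      by_contra h
      have := (hd _ h).2
      omega
    have heq : ∀ z, 0 < z → z * oscInt f b (mulX f (dt a)) z
        + (n + i : ℕ) / ((q : ℝ) + 1) * oscInt f b a z
        = ((q : ℝ) + 1)⁻¹ * oscInt f (b + 2) a' z := by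
      intro z _
      rw [← hstep z]
      push_cast
      field_simp
    obtain ⟨c', d', hc', hd', hrest⟩ := HasLogExpansion.of_euler_equation (β := n + i) (K := K) hq0
      (by omega) (remainderOrder_ne q J _)
      (fun z _ => hf.hasDerivAt_oscInt (b := b) (by omega) ha z) heq
      (hcd.const_mul ((q : ℝ) + 1)⁻¹) (by simp [hdz])
    refine ⟨c', d', hc', fun l hl => ?_, fun l hl => ?_⟩
    · rcases eq_or_ne l (n + i) with rfl | hne
      · exact Or.inr le_rfl
      · by_cases hdl : d l = 0
        · have : c l ≠ 0 := fun h => hl ((hrest l hne (by simp [hdl])).2 (by simp [h]))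
          rcases hc l this with h | h
          · exact Or.inl h
          · exact Or.inr (by omega)
        · exact Or.inl (hd l hdl).1
    · rcases eq_or_ne l (n + i) with rfl | hne
      · refine ⟨?_, le_rfl⟩
        have : c (n + i) ≠ 0 := fun h => hl (by rw [hd', h, mul_zero])
        rcases hc _ this with h | h
        · exact h
        · omega
      · have : d l ≠ 0 := fun h => hl (hrest l hne (by simp [h])).1
        have h2 := hd l this
        exact ⟨h2.1, by omega⟩

end IsPhase

/-! ### Full expansions -/

theorem rpow_mul_log_isBigO {s t : ℝ} (hst : s ≤ t) (a b : ℝ) :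
    (fun z : ℝ => z ^ s * (a + b * Real.log z)) =O[atTop] fun z => z ^ t * Real.log z := by
  refine IsBigO.mul ?_ ?_
  · refine IsBigO.of_bound 1 ?_
    filter_upwards [eventually_ge_atTop 1] with z hz
    have hz0 : 0 ≤ z := by linarith
    rw [one_mul, Real.norm_of_nonneg (Real.rpow_nonneg hz0 _),
      Real.norm_of_nonneg (Real.rpow_nonneg hz0 _)]
    exact Real.rpow_le_rpow_of_exponent_le hz hst
  · exact (Real.isLittleO_const_log_atTop (c := a)).isBigO.add
      ((isBigO_refl Real.log atTop).const_mul_left b)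

/-- `y` agrees with the sum of its first `N + 1` terms up to `O(z ^ (-(N + 1) / k) log z)`. -/
def LogExpandsTo (k : ℝ) (N : ℕ) (y : ℝ → ℝ) (c d : ℕ → ℝ) : Prop :=
  (fun z => y z - logSum k (N + 1) c d z) =O[atTop] fun z => z ^ (-((N : ℝ) + 1) / k) * Real.log z

theorem HasLogExpansion.logExpandsTo {k γ : ℝ} (hk : 0 < k) {K N : ℕ} (hN : N + 1 ≤ K)
    (hγ : ((N : ℝ) + 1) / k ≤ γ) {y : ℝ → ℝ} {c d : ℕ → ℝ} (h : HasLogExpansion k K γ y c d) :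
    LogExpandsTo k N y c d := by
  have h1 : (fun z : ℝ => z ^ (-γ)) =O[atTop]
      fun z => z ^ (-((N : ℝ) + 1) / k) * Real.log z := by
    have := rpow_mul_log_isBigO (s := -γ) (t := -((N : ℝ) + 1) / k)
      (by rw [neg_div]; linarith) 1 0
    simpa using this
  have h2 : (fun z : ℝ => ∑ l ∈ Finset.Ico (N + 1) K,
      z ^ (-(l : ℝ) / k) * (c l + d l * Real.log z)) =O[atTop]
      fun z => z ^ (-((N : ℝ) + 1) / k) * Real.log z := by
    refine IsBigO.fun_sum fun l hl => rpow_mul_log_isBigO ?_ _ _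
    have : ((N : ℝ) + 1) ≤ l := by exact_mod_cast (Finset.mem_Ico.1 hl).1
    gcongr
  refine ((h.trans h1).add h2).congr_left fun z => ?_
  rw [logSum, logSum, ← Finset.sum_range_add_sum_Ico _ hN]
  ring

theorem LogExpandsTo.of_succ {k : ℝ} (hk : 0 < k) {N : ℕ} {y : ℝ → ℝ} {c d : ℕ → ℝ}
    (h : LogExpandsTo k (N + 1) y c d) : LogExpandsTo k N y c d := by
  have h1 := rpow_mul_log_isBigO (s := -(((N + 1 : ℕ) : ℝ) + 1) / k) (t := -((N : ℝ) + 1) / k)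
    (by push_cast; gcongr; linarith) 0 1
  have h2 := rpow_mul_log_isBigO (s := -((N + 1 : ℕ) : ℝ) / k) (t := -((N : ℝ) + 1) / k)
    (by push_cast; rfl) (c (N + 1)) (d (N + 1))
  simp only [zero_add, one_mul] at h1
  refine ((h.trans h1).add h2).congr_left fun z => ?_
  rw [logSum, Finset.sum_range_succ, ← logSum]
  ring

theorem LogExpandsTo.mono {k : ℝ} (hk : 0 < k) {M N : ℕ} (hMN : M ≤ N) {y : ℝ → ℝ} {c d : ℕ → ℝ}
    (h : LogExpandsTo k N y c d) : LogExpandsTo k M y c d := by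
  induction N, hMN using Nat.le_induction with
  | base => exact h
  | succ N _ ih => exact ih (h.of_succ hk)

theorem eq_zero_of_add_mul_log_tendsto {a b : ℝ}
    (h : Tendsto (fun z => a + b * Real.log z) atTop (nhds 0)) : a = 0 ∧ b = 0 := by
  have h1 : Tendsto (fun z => (a + b * Real.log z) * (Real.log z)⁻¹) atTop (nhds (0 * 0)) :=
    h.mul (tendsto_inv_atTop_zero.comp Real.tendsto_log_atTop)
  have h2 : Tendsto (fun z => (a + b * Real.log z) * (Real.log z)⁻¹) atTop
      (nhds (a * 0 + b)) := by
    have h3 := ((tendsto_inv_atTop_zero.comp Real.tendsto_log_atTop).const_mul a).add_const b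
    refine h3.congr' ?_
    filter_upwards [eventually_gt_atTop 1] with z hz
    have : Real.log z ≠ 0 := (Real.log_pos hz).ne'
    simp only [Function.comp]
    field_simp
  have hb : b = 0 := by simpa using tendsto_nhds_unique h2 h1
  subst hb
  simpa using h

theorem LogExpandsTo.eq_zero {k : ℝ} (hk : 0 < k) {N : ℕ} {c d : ℕ → ℝ}
    (h : LogExpandsTo k N (fun _ => 0) c d) : ∀ l ≤ N, c l = 0 ∧ d l = 0 := by
  have key : ∀ N : ℕ, LogExpandsTo k N (fun _ => 0) c d → (∀ l < N, c l = 0 ∧ d l = 0) →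
      c N = 0 ∧ d N = 0 := by
    intro N hN hl
    have h1 : ∀ z, logSum k (N + 1) c d z = z ^ (-(N : ℝ) / k) * (c N + d N * Real.log z) := by
      intro z
      rw [logSum, Finset.sum_range_succ, Finset.sum_eq_zero, zero_add]
      intro l hl'
      obtain ⟨hc, hd⟩ := hl l (Finset.mem_range.1 hl')
      simp [hc, hd]
    have h2 := ((isBigO_refl (fun z : ℝ => z ^ ((N : ℝ) / k)) atTop).mul hN).neg_left
    have h3 : (fun z => c N + d N * Real.log z) =O[atTop]
        fun z => z ^ (-(1 / k)) * Real.log z := by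
      refine h2.congr' ?_ ?_
      · filter_upwards [eventually_gt_atTop 0] with z hz
        have h4 : z ^ ((N : ℝ) / k) * z ^ (-(N : ℝ) / k) = 1 := by
          rw [← Real.rpow_add hz, neg_div, add_neg_cancel, Real.rpow_zero]
        rw [h1]
        linear_combination (c N + d N * Real.log z) * h4
      · filter_upwards [eventually_gt_atTop 0] with z hz
        rw [← mul_assoc, ← Real.rpow_add hz]
        congr 2
        ring
    refine eq_zero_of_add_mul_log_tendsto (h3.trans_tendsto ?_)
    have h5 := (isLittleO_log_rpow_atTop (r := 1 / k) (by positivity)).tendsto_div_nhds_zero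
    refine h5.congr' ?_
    filter_upwards [eventually_gt_atTop 0] with z hz
    rw [Real.rpow_neg hz.le]
    ring
  intro l
  induction l using Nat.strong_induction_on with
  | _ l ih =>
    intro hl
    exact key l (h.mono hk hl) fun m hm => ih m hm (by omega)

theorem LogExpandsTo.unique {k : ℝ} (hk : 0 < k) {N : ℕ} {y : ℝ → ℝ} {c d c' d' : ℕ → ℝ}
    (h : LogExpandsTo k N y c d) (h' : LogExpandsTo k N y c' d') :
    ∀ l ≤ N, c l = c' l ∧ d l = d' l := by
  have h1 : LogExpandsTo k N (fun _ => 0) (fun l => c l - c' l) (fun l => d l - d' l) := by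
    refine (h.sub h').congr_left fun z => ?_
    have : logSum k (N + 1) (fun l => c l - c' l) (fun l => d l - d' l) z
        = logSum k (N + 1) c d z - logSum k (N + 1) c' d' z := by
      rw [logSum, logSum, logSum, ← Finset.sum_sub_distrib]
      exact Finset.sum_congr rfl fun l _ => by ring
    rw [this]
    ring
  intro l hl
  have := h1.eq_zero hk l hl
  exact ⟨sub_eq_zero.1 this.1, sub_eq_zero.1 this.2⟩

/-- Expansions to every finite order come from one pair of coefficient sequences. -/
theorem exists_logExpandsTo_forall {k : ℝ} (hk : 0 < k) {y : ℝ → ℝ} {p : ℕ → Prop}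
    (h : ∀ N, ∃ c d : ℕ → ℝ, LogExpandsTo k N y c d ∧ ∀ l, d l ≠ 0 → p l) :
    ∃ c d : ℕ → ℝ, (∀ N, LogExpandsTo k N y c d) ∧ ∀ l, d l ≠ 0 → p l := by
  choose c d hcd hp using h
  refine ⟨fun l => c l l, fun l => d l l, fun N => ?_, fun l hl => hp l l hl⟩
  refine (hcd N).congr_left fun z => ?_
  congr 1
  refine Finset.sum_congr rfl fun l hl => ?_
  have hl : l ≤ N := by simpa [Nat.lt_succ_iff] using hl
  obtain ⟨h1, h2⟩ := ((hcd N).mono hk hl).unique hk (hcd l) l le_rfl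
  rw [h1, h2]

/-- When all logarithms come with integral powers of `z`, the logarithmic terms can be indexed by
these powers. -/
theorem logSum_eq_of_dvd {k : ℕ} (hk : 0 < k) {c d : ℕ → ℝ} (hd : ∀ l, d l ≠ 0 → k ∣ l) (N : ℕ)
    (z : ℝ) : logSum k (N + 1) c d z
      = ∑ j ∈ Finset.range (N + 1), c j * z ^ (-(j : ℝ) / k)
        + ∑ j ∈ Finset.range (N / k + 1), d (k * j) * z ^ (-(j : ℝ)) * Real.log z := by
  have h1 : logSum k (N + 1) c d z
      = ∑ j ∈ Finset.range (N + 1), c j * z ^ (-(j : ℝ) / k)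
        + ∑ l ∈ Finset.range (N + 1), d l * z ^ (-(l : ℝ) / k) * Real.log z := by
    rw [logSum, ← Finset.sum_add_distrib]
    exact Finset.sum_congr rfl fun l _ => by ring
  rw [h1]
  congr 1
  symm
  refine Finset.sum_of_injOn (fun j => k * j) ?_ ?_ ?_ ?_
  · intro i _ j _ hij
    exact Nat.eq_of_mul_eq_mul_left hk hij
  · intro j hj
    have hj : j ≤ N / k := by simpa [Nat.lt_succ_iff] using hj
    have := (Nat.le_div_iff_mul_le hk).1 hj
    simp only [Finset.coe_range, Set.mem_Iio]
    rw [mul_comm] at this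
    omega
  · intro l hl hl'
    by_cases hdl : d l = 0
    · simp [hdl]
    · obtain ⟨j, rfl⟩ := hd l hdl
      refine absurd ⟨j, ?_, rfl⟩ hl'
      have : k * j ≤ N := by simpa [Nat.lt_succ_iff] using hl
      simp only [Finset.coe_range, Set.mem_Iio, Nat.lt_succ_iff]
      exact (Nat.le_div_iff_mul_le hk).2 (by rwa [mul_comm])
  · intro j _
    have hk' : (k : ℝ) ≠ 0 := by exact_mod_cast hk.ne'
    have : -((k * j : ℕ) : ℝ) / k = -(j : ℝ) := by
      push_cast
      field_simp
    simp only [this]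

/-! ### The phase function defined by a principal-type jet -/

theorem eq_zero_of_abs_mul_pow_le {u C δ : ℝ} (hδ : 0 < δ) {p : ℕ}
    (h : ∀ s, 0 < s → s < δ → |u| * s ^ p ≤ C * s ^ (p + 1)) : u = 0 := by
  have h1 : ∀ s, 0 < s → s < δ → |u| ≤ C * s := fun s hs hsδ => by
    have := h s hs hsδ
    rw [pow_succ', ← mul_assoc] at this
    exact le_of_mul_le_mul_right this (pow_pos hs p)
  have h2 : Tendsto (fun s : ℝ => C * s) (nhdsWithin 0 (Set.Ioi 0)) (nhds (C * 0)) :=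
    ((continuous_const.mul continuous_id).tendsto 0).mono_left nhdsWithin_le_nhds
  have h3 : |u| ≤ C * 0 := by
    refine ge_of_tendsto h2 ?_
    filter_upwards [Ioo_mem_nhdsGT hδ] with s hs using h1 s hs.1 hs.2
  rw [mul_zero] at h3
  exact abs_nonpos_iff.1 h3

section Jet

variable {F fk : Space n → ℝ} {k : ℕ} {C δ : ℝ}

/-- A Taylor term of degree at most `k` is determined by the `k`-jet. -/
theorem taylorTerm_eq_of_jet {p : ℕ} (hp : VanishesToOrder p F) {Φ : Space n → ℝ}
    (hΦ : ∀ c : ℝ, 0 < c → ∀ x, Φ (c • x) = c ^ p * Φ x) (hδ : 0 < δ)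
    (hjet : ∀ v, ∃ C, ∀ s, 0 < s → s < δ → s * ‖v‖ < δ → s < 1 →
      |F (s • v) - Φ (s • v)| ≤ C * s ^ (p + 1)) : taylorTerm p F = Φ := by
  ext v
  obtain ⟨C₁, _, h₁⟩ := hp.sub_taylorTerm.exists_bound δ
  obtain ⟨C₂, h₂⟩ := hjet v
  refine sub_eq_zero.1 (eq_zero_of_abs_mul_pow_le (C := C₂ + C₁ * ‖v‖ ^ (p + 1)) (p := p)
    (δ := min (min δ 1) (δ / (‖v‖ + 1))) (by positivity) fun s hs hsδ => ?_)
  have hs1 : s < δ := hsδ.trans_le ((min_le_left _ _).trans (min_le_left _ _))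
  have hs2 : s < 1 := hsδ.trans_le ((min_le_left _ _).trans (min_le_right _ _))
  have hs3 : s * ‖v‖ < δ := by
    have h3 : s < δ / (‖v‖ + 1) := hsδ.trans_le (min_le_right _ _)
    rw [lt_div_iff₀ (by positivity)] at h3
    nlinarith
  have hnorm : ‖s • v‖ = s * ‖v‖ := by rw [norm_smul, Real.norm_of_nonneg hs.le]
  have h4 := h₁ (s • v) (by rw [hnorm]; exact hs3.le)
  have h5 := h₂ s hs hs1 hs3 hs2
  rw [taylorTerm_smul, hnorm] at h4
  rw [hΦ s hs] at h5
  have h6 : |taylorTerm p F v - Φ v| * s ^ p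
      = |(F (s • v) - s ^ p * Φ v) - (F (s • v) - s ^ p * taylorTerm p F v)| := by
    rw [← abs_of_pos (pow_pos hs p), ← abs_mul, abs_of_pos (pow_pos hs p)]
    congr 1
    ring
  rw [h6]
  calc _ ≤ |F (s • v) - s ^ p * Φ v| + |F (s • v) - s ^ p * taylorTerm p F v| := abs_sub _ _
    _ ≤ C₂ * s ^ (p + 1) + C₁ * (s * ‖v‖) ^ (p + 1) := add_le_add h5 h4
    _ = _ := by ring

theorem vanishesToOrder_of_jet (hF : F.HasTemperateGrowth)
    (hhom : ∀ c : ℝ, 0 < c → ∀ x, fk (c • x) = c ^ k * fk x) (hC : 0 < C) (hδ : 0 < δ)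
    (hjet : ∀ x, ‖x‖ < δ → |F x - fk x| ≤ C * ‖x‖ ^ (k + 1)) :
    VanishesToOrder k F ∧ taylorTerm k F = fk := by
  have hnorm : ∀ (s : ℝ) (v : Space n), 0 < s → ‖s • v‖ = s * ‖v‖ := fun s v hs => by
    rw [norm_smul, Real.norm_of_nonneg hs.le]
  have hord : ∀ p ≤ k, VanishesToOrder p F := by
    intro p
    induction p with
    | zero => exact fun _ => hF
    | succ p ih =>
      intro hp
      have hv := ih (by omega)
      have hT : taylorTerm p F = fun _ => 0 := by
        refine taylorTerm_eq_of_jet hv (by simp) hδ fun v =>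
          ⟨C * ‖v‖ ^ (k + 1) + |fk v|, fun s hs _ hsv hs1 => ?_⟩
        have h1 := hjet (s • v) (by rwa [hnorm s v hs])
        rw [hhom s hs, hnorm s v hs, mul_pow] at h1
        have h2 : s ^ (k + 1) ≤ s ^ (p + 1) := pow_le_pow_of_le_one hs.le hs1.le (by omega)
        have h3 : s ^ k ≤ s ^ (p + 1) := pow_le_pow_of_le_one hs.le hs1.le hp
        rw [sub_zero]
        calc |F (s • v)| = |(F (s • v) - s ^ k * fk v) + s ^ k * fk v| := by ring_nf
          _ ≤ |F (s • v) - s ^ k * fk v| + |s ^ k * fk v| := abs_add_le _ _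
          _ ≤ C * (s ^ (k + 1) * ‖v‖ ^ (k + 1)) + s ^ k * |fk v| := by
              rw [abs_mul, abs_of_pos (pow_pos hs k)]
              gcongr
          _ ≤ C * (s ^ (p + 1) * ‖v‖ ^ (k + 1)) + s ^ (p + 1) * |fk v| := by gcongr
          _ = _ := by ring
      have := hv.sub_taylorTerm
      simpa [hT] using this
  refine ⟨hord k le_rfl, taylorTerm_eq_of_jet (hord k le_rfl) hhom hδ fun v =>
    ⟨C * ‖v‖ ^ (k + 1), fun s hs _ hsv _ => ?_⟩⟩
  have h1 := hjet (s • v) (by rwa [hnorm s v hs])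
  rw [hnorm s v hs, mul_pow] at h1
  linarith

end Jet

theorem gradSq_taylorTerm_smul {F : Space n → ℝ} (hF : F.HasTemperateGrowth) (q : ℕ) (s : ℝ)
    (x : Space n) : gradSq (taylorTerm (q + 1) F) (s • x)
      = s ^ (2 * q) * gradSq (taylorTerm (q + 1) F) x := by
  simp only [gradSq, partialDeriv_taylorTerm_succ q hF, taylorTerm_smul, Finset.mul_sum]
  exact Finset.sum_congr rfl fun i _ => by ring

/-- The leading term of a principal-type function has no critical point outside `0`. -/
theorem gradSq_pos_of_principal_type {F : Space n → ℝ} (hF : F.HasTemperateGrowth) {q : ℕ}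
    (hH1 : ∀ x, x ≠ 0 → taylorTerm (q + 1) F x = 0 → gradient (taylorTerm (q + 1) F) x ≠ 0)
    {x : Space n} (hx : x ≠ 0) : 0 < gradSq (taylorTerm (q + 1) F) x := by
  have hnn : 0 ≤ gradSq (taylorTerm (q + 1) F) x :=
    Finset.sum_nonneg fun i _ => mul_self_nonneg _
  refine hnn.lt_of_ne fun h0 => ?_
  have h1 : ∀ i, partialDeriv i (taylorTerm (q + 1) F) x = 0 := fun i =>
    mul_self_eq_zero.1 ((Finset.sum_eq_zero_iff_of_nonneg fun i _ => mul_self_nonneg _).1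
      h0.symm i (Finset.mem_univ i))
  have h2 : taylorTerm (q + 1) F x = 0 := by
    have h3 : taylorTerm (q + 1) F x = (1 / ((q : ℝ) + 1))
        * ∑ i, x i * partialDeriv i (taylorTerm (q + 1) F) x := by
      simp only [partialDeriv_taylorTerm_succ q hF]
      rfl
    rw [h3]
    simp [h1]
  refine hH1 x hx h2 ?_
  have h4 : fderiv ℝ (taylorTerm (q + 1) F) x = 0 := by
    ext v
    rw [fderiv_apply_eq_sum]
    simp [h1]
  rw [gradient, h4, map_zero]

theorem exists_isPhase {F : Space n → ℝ} {q : ℕ} (hq : 1 ≤ q) (hF : VanishesToOrder (q + 1) F)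
    (hH1 : ∀ x, x ≠ 0 → taylorTerm (q + 1) F x = 0 → gradient (taylorTerm (q + 1) F) x ≠ 0) :
    ∃ ρ κ, ρ ≤ 1 ∧ IsPhase F q ρ κ := by
  set T := taylorTerm (q + 1) F with hT
  have hTt : T.HasTemperateGrowth := hasTemperateGrowth_taylorTerm _ _
  have hsub := hF.sub_taylorTerm
  have hTv : VanishesToOrder (q + 1) T := by
    have := hF.sub hsub.of_succ
    simpa using this
  have hcont : Continuous (gradSq T) := (VanishesToOrder.sum (p := 0) Finset.univ fun i =>
    (hTv.2.2 i).hasTemperateGrowth.fun_mul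
      (hTv.2.2 i).hasTemperateGrowth).hasTemperateGrowth.1.continuous
  obtain ⟨m, hm, hmin⟩ := (isCompact_sphere (0 : Space n) 1).exists_forall_le' (a := (0 : ℝ))
    hcont.continuousOn fun x hx => gradSq_pos_of_principal_type hF.hasTemperateGrowth hH1
      (fun h => by simp [h] at hx)
  have hlow : ∀ x, m * ‖x‖ ^ (2 * q) ≤ gradSq T x := by
    intro x
    rcases eq_or_ne x 0 with rfl | hx
    · have : 0 ≤ gradSq T (0 : Space n) := Finset.sum_nonneg fun i _ => mul_self_nonneg _
      simpa [zero_pow (show 2 * q ≠ 0 by omega)] using this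
    · have hx0 : 0 < ‖x‖ := norm_pos_iff.2 hx
      have h1 := hmin (‖x‖⁻¹ • x) (by simp [norm_smul, hx0.ne'])
      have h2 := gradSq_taylorTerm_smul hF.hasTemperateGrowth q ‖x‖ (‖x‖⁻¹ • x)
      rw [smul_inv_smul₀ hx0.ne', ← hT] at h2
      rw [h2, mul_comm]
      gcongr
  have hdiff : VanishesToOrder (2 * q + 1) fun x => gradSq F x - gradSq T x := by
    have h1 : ∀ i, VanishesToOrder (2 * q + 1) fun x =>
        (partialDeriv i F x - partialDeriv i T x) * (partialDeriv i F x + partialDeriv i T x) := by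
      intro i
      have h2 := hsub.2.2 i
      rw [partialDeriv_sub hF.hasTemperateGrowth hTt] at h2
      exact (h2.mul ((hF.2.2 i).add (hTv.2.2 i))).mono (by omega)
    refine (congrArg (VanishesToOrder (2 * q + 1)) ?_).mp (VanishesToOrder.sum Finset.univ h1)
    ext x
    rw [gradSq, gradSq, ← Finset.sum_sub_distrib]
    exact Finset.sum_congr rfl fun i _ => by ring
  obtain ⟨C, hC0, hC⟩ := hdiff.exists_bound 1
  refine ⟨min 1 (m / (2 * (C + 1))), m / 2, min_le_left _ _, hF, hq, by positivity,
    by positivity, fun x hx => ?_⟩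
  have hx1 : ‖x‖ ≤ 1 := hx.trans (min_le_left _ _)
  have hx2 : ‖x‖ ≤ m / (2 * (C + 1)) := hx.trans (min_le_right _ _)
  rw [le_div_iff₀ (by positivity)] at hx2
  have h1 := (abs_le.1 (hC x hx1)).1
  have h2 := hlow x
  have h3 : C * ‖x‖ ≤ m / 2 := by nlinarith [norm_nonneg x]
  have h4 : C * ‖x‖ ^ (2 * q + 1) ≤ m / 2 * ‖x‖ ^ (2 * q) := by
    rw [pow_succ', ← mul_assoc]
    gcongr
  linarith

/-- Near the critical point a principal-type function agrees with a phase function. -/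
theorem exists_isPhase_of_jet {f fk : Space n → ℝ} {q : ℕ} (hq : 1 ≤ q) (hf : ContDiff ℝ ∞ f)
    (hhom : ∀ c : ℝ, 0 < c → ∀ x, fk (c • x) = c ^ (q + 1) * fk x)
    (hH1 : ∀ x, x ≠ 0 → fk x = 0 → gradient fk x ≠ 0)
    (hjet : ∃ C δ : ℝ, 0 < C ∧ 0 < δ ∧ ∀ x : Space n,
      ‖x‖ < δ → |f x - fk x| ≤ C * ‖x‖ ^ (q + 1 + 1)) :
    ∃ (F : Space n → ℝ) (ρ κ : ℝ), IsPhase F q ρ κ ∧ ∀ x, ‖x‖ ≤ ρ → F x = f x := by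
  obtain ⟨C, δ, hC, hδ, hj⟩ := hjet
  let χ : ContDiffBump (0 : Space n) := ⟨1, 2, one_pos, one_lt_two⟩
  set F : Space n → ℝ := fun x => χ x * f x with hFdef
  have hFf : ∀ x, ‖x‖ ≤ 1 → F x = f x := fun x hx => by
    rw [hFdef]
    simp only
    rw [χ.one_of_mem_closedBall (by simpa using hx), one_mul]
  have hFt : F.HasTemperateGrowth :=
    HasCompactSupport.hasTemperateGrowth (χ.hasCompactSupport.mul_right) (χ.contDiff.mul hf)
  obtain ⟨h1, h2⟩ := vanishesToOrder_of_jet hFt hhom hC (lt_min hδ one_pos) fun x hx => by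
    rw [hFf x (hx.le.trans (min_le_right _ _))]
    exact hj x (hx.trans_le (min_le_left _ _))
  obtain ⟨ρ, κ, hρ, hph⟩ := exists_isPhase hq h1 (by rwa [h2])
  exact ⟨F, ρ, κ, hph, fun x hx => hFf x (hx.trans hρ)⟩

/-- The full expansion for a phase function and a compactly supported cut-off. -/
theorem IsPhase.exists_expansion {F : Space n → ℝ} {q : ℕ} {ρ κ : ℝ} (hF : IsPhase F q ρ κ)
    (hn : 1 ≤ n) {a : Symb n} (ha : IsAmplitude ρ 0 a) :
    ∃ c d : ℕ → ℝ, (∀ N, LogExpandsTo (q + 1) N (oscInt F 0 a) c d) ∧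
      ∀ l, d l ≠ 0 → (q + 1) ∣ l := by
  have hq0 : (0 : ℝ) < (q : ℝ) + 1 := by positivity
  refine exists_logExpandsTo_forall hq0 fun N => ?_
  obtain ⟨c, d, hcd, _, hd⟩ := hF.hasLogExpansion_oscInt hn (K := n + (q + 1) * (N + 2) + 2)
    (J := N + 2) (by omega) ((q + 1) * (N + 2) + 1) 0 0 a (by omega) (by simpa using ha)
    (Or.inl rfl)
  refine ⟨c, d, hcd.logExpandsTo hq0 ?_ ?_, fun l hl => (hd l hl).1⟩
  · nlinarith
  · rw [remainderOrder, div_le_iff₀ hq0, sub_mul]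
    have h1 : 1 / (2 * ((q : ℝ) + 1)) * (q + 1) = 1 / 2 := by field_simp
    rw [h1]
    push_cast
    have hN : (0 : ℝ) ≤ N := Nat.cast_nonneg N
    have hq : (0 : ℝ) ≤ q := Nat.cast_nonneg q
    nlinarith

end PrincipalType

/-- Theorem 1.5 (existence of the expansion under the principal-type condition (H1)):
if the `k`-jet `f_k` of `f` at the critical point has no critical points on `{f_k = 0} \ {0}`,
then `I_s(z)` admits a full expansion in powers `z^{-j/k}` and terms `z^{-j} log z`. -/
theorem principal_type_full_expansion
    (n k : ℕ) (hn : 1 ≤ n) (hk : 2 ≤ k)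
    (f fk : EuclideanSpace ℝ (Fin n) → ℝ)
    (hf : ContDiff ℝ (⊤ : ℕ∞) f) (hf0 : f 0 = 0) (hgrad0 : gradient f 0 = 0)
    (hfk_ne : fk ≠ 0)
    (hfk_hom : ∀ c : ℝ, 0 < c → ∀ x, fk (c • x) = c ^ k * fk x)
    (hfk_H1 : ∀ x : EuclideanSpace ℝ (Fin n), x ≠ 0 → fk x = 0 → gradient fk x ≠ 0)
    (hjet : ∃ C δ : ℝ, 0 < C ∧ 0 < δ ∧ ∀ x : EuclideanSpace ℝ (Fin n),
      ‖x‖ < δ → |f x - fk x| ≤ C * ‖x‖ ^ (k + 1))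
    (g : SchwartzMap (ℝ × EuclideanSpace ℝ (Fin n)) ℝ) :
    ∃ ε : ℝ, 0 < ε ∧ ∀ Θ : EuclideanSpace ℝ (Fin n) → ℝ,
      ContDiff ℝ (⊤ : ℕ∞) Θ → HasCompactSupport Θ →
      tsupport Θ ⊆ Metric.ball 0 ε → (∀ᶠ x in nhds 0, Θ x = 1) →
      (∀ x, 0 ≤ Θ x ∧ Θ x ≤ 1) →
      ∃ c d : ℕ → ℝ, ∀ N : ℕ,
        (fun z : ℝ =>
            (∫ x, g (z * f x, x) * Θ x) -
            (∑ j ∈ Finset.range (N + 1), c j * z ^ (-(j : ℝ) / k)) -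
            ∑ j ∈ Finset.range (N / k + 1), d j * z ^ (-(j : ℝ)) * Real.log z)
          =O[atTop] fun z : ℝ => z ^ (-((N : ℝ) + 1) / k) * Real.log z := by
  obtain ⟨q, rfl⟩ : ∃ q, k = q + 1 := ⟨k - 1, by omega⟩
  obtain ⟨F, ρ, κ, hF, hFf⟩ :=
    PrincipalType.exists_isPhase_of_jet (by omega) hf hfk_hom hfk_H1 hjet
  refine ⟨ρ, hF.radius_pos, fun Θ hΘ hΘc hΘs _ _ => ?_⟩
  have hΘt : Θ.HasTemperateGrowth := hΘc.hasTemperateGrowth hΘ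
  have hΘ0 : ∀ x, ρ < ‖x‖ → Θ x = 0 := fun x hx => by
    refine image_eq_zero_of_notMem_tsupport fun h => ?_
    have := hΘs h
    rw [mem_ball_zero_iff] at this
    linarith
  have ha : PrincipalType.IsAmplitude ρ 0 (PrincipalType.mulX Θ g) :=
    ⟨fun t => PrincipalType.hasTemperateGrowth_slice _ t, fun t x hx => by
      rw [PrincipalType.mulX_apply hΘt, hΘ0 x hx, zero_mul]⟩
  obtain ⟨c, d, hcd, hd⟩ := hF.exists_expansion hn ha
  refine ⟨c, fun j => d ((q + 1) * j), fun N => ?_⟩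
  have hosc : ∀ z : ℝ, PrincipalType.oscInt F 0 (PrincipalType.mulX Θ g) z
      = ∫ x, g (z * f x, x) * Θ x := by
    intro z
    refine integral_congr_ae (Eventually.of_forall fun x => ?_)
    simp only [PrincipalType.mulX_apply hΘt, pow_zero, div_one]
    rcases le_or_gt ‖x‖ ρ with hx | hx
    · rw [hFf x hx, mul_comm]
    · rw [hΘ0 x hx, zero_mul, mul_zero]
  have h1 := hcd N
  rw [PrincipalType.LogExpandsTo] at h1
  have hcast : ((q + 1 : ℕ) : ℝ) = (q : ℝ) + 1 := by push_cast; rfl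
  rw [← hcast] at h1
  refine h1.congr_left fun z => ?_
  rw [PrincipalType.logSum_eq_of_dvd (Nat.succ_pos q) hd, hosc, sub_sub]
end

section
/- Let n ≥ 1, k ∈ ℕ, C > 0 and z > 0. Let f : ℝⁿ → ℝ be measurable and let h : ℝ × ℝⁿ → ℂ be such that for each x, t ↦ h(t,x) is a Schwartz function of t, the partial derivatives ∂_t^j h belong to L¹(ℝ × ℝⁿ) for all j ≤ k, and |f(x)| ≥ C for every x for which h(·,x) is not identically zero. Then the error integral E(z) = ∫_{ℝⁿ} ∫_ℝ e^{i z t f(x)} h(t,x) dt dx satisfies |E(z)| ≤ (C z)^{-k} ‖∂_t^k h‖_{L¹(ℝ × ℝⁿ)}. In particular E(z) = O(z^{-k}) as z → ∞. -/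
open MeasureTheory Filter Asymptotics

open scoped FourierTransform

namespace SchwartzMap

theorem integrable_iteratedDeriv (s : SchwartzMap ℝ ℂ) (j : ℕ) :
    Integrable (iteratedDeriv j s) := by
  have hint := s.integrable_pow_mul_iteratedFDeriv volume 0 j
  simp only [pow_zero, one_mul, norm_iteratedFDeriv_eq_norm_iteratedDeriv] at hint
  exact (integrable_norm_iff
    ((s.smooth ⊤).continuous_iteratedDeriv j (mod_cast le_top)).aestronglyMeasurable).1 hint

theorem abs_pow_mul_norm_integral_exp_mul_le (s : SchwartzMap ℝ ℂ) (k : ℕ) (a : ℝ) :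
    |a| ^ k * ‖∫ t : ℝ, Complex.exp (Complex.I * a * t) * s t‖ ≤
      ∫ t, ‖iteratedDeriv k s t‖ := by
  have hpi := Real.pi_ne_zero
  have hfourier : 𝓕 (s : ℝ → ℂ) (-a / (2 * Real.pi)) =
      ∫ t : ℝ, Complex.exp (Complex.I * a * t) * s t := by
    rw [Real.fourier_real_eq_integral_exp_smul]
    congr 1 with t
    rw [smul_eq_mul, show -2 * Real.pi * t * (-a / (2 * Real.pi)) = a * t by field_simp]
    push_cast
    ring_nf
  have hderiv := congrFun (Real.fourier_iteratedDeriv (N := ⊤) (n := k) (s.smooth ⊤)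
    (fun j _ => s.integrable_iteratedDeriv j) le_top) (-a / (2 * Real.pi))
  have hfactor : ‖(2 * Real.pi * Complex.I * ((-a / (2 * Real.pi) : ℝ) : ℂ) : ℂ)‖ = |a| := by
    have habs : |Real.pi| ≠ 0 := abs_ne_zero.2 hpi
    simp only [norm_mul, Complex.norm_real, Complex.norm_I, RCLike.norm_ofNat, Real.norm_eq_abs,
      abs_div, abs_neg, abs_mul, Nat.abs_ofNat]
    field_simp
  calc |a| ^ k * ‖∫ t : ℝ, Complex.exp (Complex.I * a * t) * s t‖
      = ‖𝓕 (iteratedDeriv k s) (-a / (2 * Real.pi))‖ := by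
        rw [hderiv, norm_smul, norm_pow, hfactor, hfourier]
    _ ≤ ∫ t, ‖iteratedDeriv k s t‖ := by
        rw [Real.fourier_real_eq]
        refine (norm_integral_le_integral_norm _).trans_eq ?_
        simp only [Circle.norm_smul]

theorem norm_integral_exp_mul_le (s : SchwartzMap ℝ ℂ) (k : ℕ) {a b : ℝ} (hb : 0 < b)
    (hab : (∃ t, s t ≠ 0) → b ≤ |a|) :
    ‖∫ t : ℝ, Complex.exp (Complex.I * a * t) * s t‖ ≤
      (b ^ k)⁻¹ * ∫ t, ‖iteratedDeriv k s t‖ := by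
  by_cases hs : ∃ t, s t ≠ 0
  · rw [le_inv_mul_iff₀ (pow_pos hb k)]
    refine le_trans ?_ (s.abs_pow_mul_norm_integral_exp_mul_le k a)
    gcongr
    exact hab hs
  · push Not at hs
    simp only [hs, mul_zero, integral_zero, norm_zero]
    positivity

end SchwartzMap

/-- Localization lemma: if `|f| ≥ C` on the `t`-support of `h`, then the error integral
`E(z) = ∫∫ e^{iztf(x)} h(t,x) dt dx` satisfies `|E(z)| ≤ (Cz)^{-k} ‖∂_t^k h‖_{L¹}`,
so in particular `E(z) = O(z^{-k})` as `z → ∞`. -/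
theorem localization_error_bound
    (n k : ℕ) (hn : 1 ≤ n) (C : ℝ) (hC : 0 < C)
    (f : EuclideanSpace ℝ (Fin n) → ℝ) (hf : Measurable f)
    (h : ℝ × EuclideanSpace ℝ (Fin n) → ℂ)
    (hschwartz : ∀ x, ∃ s : SchwartzMap ℝ ℂ, ∀ t, h (t, x) = s t)
    (hL1 : ∀ j ≤ k, Integrable (fun p : ℝ × EuclideanSpace ℝ (Fin n) =>
      iteratedDeriv j (fun t => h (t, p.2)) p.1))
    (hlower : ∀ x, (∃ t, h (t, x) ≠ 0) → C ≤ |f x|) :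
    (∀ z : ℝ, 0 < z →
      ‖∫ x, ∫ t : ℝ, Complex.exp (Complex.I * z * t * f x) * h (t, x)‖ ≤
        ((C * z) ^ k)⁻¹ *
          ∫ p : ℝ × EuclideanSpace ℝ (Fin n),
            ‖iteratedDeriv k (fun t => h (t, p.2)) p.1‖) ∧
    (fun z : ℝ => ∫ x, ∫ t : ℝ, Complex.exp (Complex.I * z * t * f x) * h (t, x))
      =O[atTop] fun z : ℝ => z ^ (-(k : ℝ)) := by
  have hbound : ∀ z : ℝ, 0 < z →
      ‖∫ x, ∫ t : ℝ, Complex.exp (Complex.I * z * t * f x) * h (t, x)‖ ≤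
        ((C * z) ^ k)⁻¹ *
          ∫ p : ℝ × EuclideanSpace ℝ (Fin n),
            ‖iteratedDeriv k (fun t => h (t, p.2)) p.1‖ := by
    intro z hz
    have hint := hL1 k le_rfl
    rw [Measure.volume_eq_prod] at hint ⊢
    rw [integral_prod_symm _ hint.norm, ← integral_const_mul]
    refine norm_integral_le_of_norm_le (hint.integral_norm_prod_right.const_mul _)
      (Eventually.of_forall fun x => ?_)
    obtain ⟨s, hs⟩ := hschwartz x
    have hlower_x : (∃ t, s t ≠ 0) → C * z ≤ |z * f x| := by
      rintro ⟨t, ht⟩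
      rw [abs_mul, abs_of_pos hz, mul_comm C]
      gcongr
      exact hlower x ⟨t, by rwa [hs]⟩
    have hle := s.norm_integral_exp_mul_le k (mul_pos hC hz) hlower_x
    have hexp : ∀ t : ℝ, Complex.exp (Complex.I * z * t * f x) =
        Complex.exp (Complex.I * (z * f x : ℝ) * t) := fun t => by
      push_cast
      ring_nf
    simpa only [hs, hexp] using hle
  refine ⟨hbound, IsBigO.of_bound ((C ^ k)⁻¹ * ∫ p : ℝ × EuclideanSpace ℝ (Fin n),
    ‖iteratedDeriv k (fun t => h (t, p.2)) p.1‖) ?_⟩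
  filter_upwards [eventually_gt_atTop 0] with z hz
  refine (hbound z hz).trans_eq ?_
  rw [Real.rpow_neg hz.le, Real.rpow_natCast, norm_inv, norm_pow, Real.norm_of_nonneg hz.le,
    mul_pow, mul_inv]
  ring
end

section
/- Let k ≥ 1 be an integer and let a : ℝ × ℝ → ℝ be smooth and compactly supported. Then the integral J(z) = ∫_0^∞ a(z u^k, u) du admits the full asymptotic expansion, as z → ∞: for every N ∈ ℕ, J(z) = Σ_{j=0}^{N} (1/(k · j!)) z^{-(j+1)/k} ∫_0^∞ τ^{(j+1−k)/k} (∂₂^j a)(τ, 0) dτ + O(z^{-(N+2)/k}), where ∂₂^j a denotes the j-th partial derivative of a in its second argument. (In distributional language, the j-th coefficient is the universal distribution d_j = (1/k)(1/j!)(τ₊^{(j+1−k)/k} ⊗ δ₀^{(j)}) applied to a.) -/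
open MeasureTheory Filter Asymptotics

/-- The partial derivative of a function on `ℝ × ℝ` in its second argument. -/
noncomputable def partialSnd (f : ℝ × ℝ → ℝ) : ℝ × ℝ → ℝ := fun p => fderiv ℝ f p (0, 1)

theorem ContDiff.partialSnd {f : ℝ × ℝ → ℝ} (hf : ContDiff ℝ (⊤ : ℕ∞) f) :
    ContDiff ℝ (⊤ : ℕ∞) (partialSnd f) :=
  (hf.fderiv_right (m := ((⊤ : ℕ∞) : WithTop ℕ∞)) (by simp)).clm_apply contDiff_const

theorem HasCompactSupport.partialSnd {f : ℝ × ℝ → ℝ} (hf : HasCompactSupport f) :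
    HasCompactSupport (partialSnd f) :=
  hf.fderiv_apply ℝ (0, 1)

theorem ContDiff.iterate_partialSnd {f : ℝ × ℝ → ℝ} (hf : ContDiff ℝ (⊤ : ℕ∞) f) (j : ℕ) :
    ContDiff ℝ (⊤ : ℕ∞) (_root_.partialSnd^[j] f) := by
  induction j generalizing f with
  | zero => exact hf
  | succ j ih => exact ih hf.partialSnd

theorem HasCompactSupport.iterate_partialSnd {f : ℝ × ℝ → ℝ} (hf : HasCompactSupport f) (j : ℕ) :
    HasCompactSupport (_root_.partialSnd^[j] f) := by
  induction j generalizing f with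
  | zero => exact hf
  | succ j ih => exact ih hf.partialSnd

theorem iteratedDeriv_slice {f : ℝ × ℝ → ℝ} (hf : ContDiff ℝ (⊤ : ℕ∞) f) (j : ℕ) (τ : ℝ) :
    iteratedDeriv j (fun u => f (τ, u)) = fun u => (partialSnd^[j] f) (τ, u) := by
  induction j generalizing f with
  | zero => simp
  | succ j ih =>
    have hderiv : deriv (fun u => f (τ, u)) = fun u => partialSnd f (τ, u) := by
      funext u
      have hfu : HasFDerivAt f (fderiv ℝ f (τ, u)) (τ, u) :=
        (hf.differentiable (by simp) (τ, u)).hasFDerivAt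
      exact (hfu.comp_hasDerivAt u ((hasDerivAt_const u τ).prodMk (hasDerivAt_id u))).deriv
    rw [iteratedDeriv_succ', hderiv, ih hf.partialSnd, Function.iterate_succ_apply]

/-- Taylor's formula in the second argument at `0`, with a remainder uniform in the first one. -/
theorem exists_taylor_slice_bound {a : ℝ × ℝ → ℝ} (ha : ContDiff ℝ (⊤ : ℕ∞) a)
    (hasupp : HasCompactSupport a) (N : ℕ) :
    ∃ C, 0 ≤ C ∧ ∀ τ u : ℝ, 0 < u →
      ‖a (τ, u) - ∑ j ∈ Finset.range (N + 1),
        (1 / (j.factorial : ℝ)) * (u ^ j * (partialSnd^[j] a) (τ, 0))‖ ≤ C * u ^ (N + 1) := by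
  obtain ⟨C, hC⟩ := (ha.iterate_partialSnd (N + 1)).continuous.bounded_above_of_compact_support
    (hasupp.iterate_partialSnd (N + 1))
  have hC0 : 0 ≤ C := (norm_nonneg _).trans (hC 0)
  refine ⟨C / N.factorial, by positivity, fun τ u hu => ?_⟩
  have hslice : ContDiff ℝ (⊤ : ℕ∞) (fun u => a (τ, u)) := by fun_prop
  have hwithin : ∀ j : ℕ, ∀ y ∈ Set.Icc 0 u,
      iteratedDerivWithin j (fun u => a (τ, u)) (Set.Icc 0 u) y = (partialSnd^[j] a) (τ, y) := by
    intro j y hy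
    rw [iteratedDerivWithin_eq_iteratedDeriv (uniqueDiffOn_Icc hu)
      ((hslice.of_le (by exact_mod_cast le_top)).contDiffAt) hy, iteratedDeriv_slice ha]
  have htaylor := taylor_mean_remainder_bound (n := N) (C := C) hu.le
    ((hslice.of_le (by exact_mod_cast le_top)).contDiffOn) (Set.right_mem_Icc.2 hu.le)
    (fun y hy => by rw [hwithin _ y hy]; exact hC _)
  rw [taylor_within_apply] at htaylor
  have hsum : ∀ j ∈ Finset.range (N + 1),
      (1 / (j.factorial : ℝ)) * (u ^ j * (partialSnd^[j] a) (τ, 0)) =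
        ((j.factorial : ℝ)⁻¹ * (u - 0) ^ j) •
          iteratedDerivWithin j (fun u => a (τ, u)) (Set.Icc 0 u) 0 := by
    intro j _
    rw [hwithin j 0 (Set.left_mem_Icc.2 hu.le), sub_zero, smul_eq_mul]
    ring
  rw [Finset.sum_congr rfl hsum]
  refine htaylor.trans_eq ?_
  rw [sub_zero]
  ring

/-- The substitution `τ = (c u) ^ k` in a half-line integral with a power weight. -/
theorem integral_pow_mul_comp_mul_pow {k : ℕ} (hk : 1 ≤ k) {c : ℝ} (hc : 0 < c) (j : ℕ)
    (b : ℝ → ℝ) :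
    ∫ u in Set.Ioi (0 : ℝ), u ^ j * b (c ^ k * u ^ k) =
      1 / k * (c ^ (j + 1))⁻¹ *
        ∫ τ in Set.Ioi (0 : ℝ), τ ^ (((j : ℝ) + 1 - k) / k) * b τ := by
  have hk0 : (k : ℝ) ≠ 0 := by positivity
  have hpow : ∫ τ in Set.Ioi (0 : ℝ), τ ^ (((j : ℝ) + 1 - k) / k) * b τ =
      k * ∫ x in Set.Ioi (0 : ℝ), x ^ j * b (x ^ k) := by
    rw [← integral_comp_rpow_Ioi _ hk0, ← integral_const_mul]
    refine setIntegral_congr_fun measurableSet_Ioi fun x (hx : 0 < x) => ?_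
    simp only [smul_eq_mul, Nat.abs_cast]
    rw [← Real.rpow_mul hx.le, mul_div_cancel₀ _ hk0, Real.rpow_natCast, mul_assoc (k : ℝ),
      ← mul_assoc (x ^ _), ← Real.rpow_add hx, ← Real.rpow_natCast x j]
    congr 4
    ring
  have hscale := integral_comp_mul_left_Ioi (fun x => x ^ j * b (x ^ k)) 0 hc
  simp only [mul_zero, mul_pow, smul_eq_mul, mul_assoc] at hscale
  rw [integral_const_mul] at hscale
  rw [hpow, pow_succ]
  field_simp at hscale ⊢
  linarith

theorem extremum_model_expansion_of_pow {k : ℕ} (hk : 1 ≤ k) {a : ℝ × ℝ → ℝ}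
    (ha : ContDiff ℝ (⊤ : ℕ∞) a) (hasupp : HasCompactSupport a) (N : ℕ) :
    ∃ C, ∀ c : ℝ, 0 < c →
      ‖(∫ u in Set.Ioi (0 : ℝ), a (c ^ k * u ^ k, u)) -
        ∑ j ∈ Finset.range (N + 1), (1 / (j.factorial : ℝ)) *
          ∫ u in Set.Ioi (0 : ℝ), u ^ j * (partialSnd^[j] a) (c ^ k * u ^ k, 0)‖ ≤
        C * (c ^ (N + 2))⁻¹ := by
  obtain ⟨C, hC0, hC⟩ := exists_taylor_slice_bound ha hasupp N
  have hsupp : ∃ r : ℝ, 1 ≤ r ∧ ∀ τ, r < τ → ∀ (j : ℕ) (u : ℝ), (partialSnd^[j] a) (τ, u) = 0 := by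
    obtain ⟨r, hr⟩ := hasupp.isBounded.exists_norm_le
    refine ⟨max r 1, le_max_right _ _, fun τ hτ j u => ?_⟩
    have hzero : (fun v => a (τ, v)) = fun _ => 0 := by
      funext v
      refine image_eq_zero_of_notMem_tsupport fun hmem => ?_
      have h1 : ‖τ‖ ≤ ‖((τ, v) : ℝ × ℝ)‖ := norm_fst_le (τ, v)
      have h2 := hr _ hmem
      have h3 := le_max_left r 1
      have h4 := Real.le_norm_self τ
      linarith
    have hslice := congrFun (iteratedDeriv_slice ha j τ) u
    rw [← hslice, hzero]
    simp
  obtain ⟨r, hr1, hr⟩ := hsupp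
  refine ⟨C * r ^ (N + 2), fun c hc => ?_⟩
  have hL : 0 ≤ r / c := by positivity
  have hrestrict : ∀ g : ℝ → ℝ, (∀ u, r < c ^ k * u ^ k → g u = 0) →
      ∫ u in Set.Ioi (0 : ℝ), g u = ∫ u in Set.Ioc 0 (r / c), g u := by
    intro g hg
    refine setIntegral_eq_of_subset_of_forall_sdiff_eq_zero measurableSet_Ioi
      Set.Ioc_subset_Ioi_self fun u hu => hg u ?_
    have hu0 : 0 < u := hu.1
    have hlt : r / c < u := by
      by_contra! hle
      exact hu.2 ⟨hu0, hle⟩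
    rw [div_lt_iff₀ hc, mul_comm] at hlt
    rw [← mul_pow]
    exact hlt.trans_le (le_self_pow₀ (hr1.trans hlt.le) (by omega))
  have hint : ∀ g : ℝ → ℝ, Continuous g → IntegrableOn g (Set.Ioc 0 (r / c)) := fun g hg =>
    (hg.integrableOn_Icc).mono_set Set.Ioc_subset_Icc_self
  have hcont : ∀ j, Continuous fun u : ℝ => u ^ j * (partialSnd^[j] a) (c ^ k * u ^ k, 0) := by
    intro j
    have := (ha.iterate_partialSnd j).continuous
    fun_prop
  have hacont : Continuous fun u : ℝ => a (c ^ k * u ^ k, u) := by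
    have := ha.continuous
    fun_prop
  rw [hrestrict (fun u => a (c ^ k * u ^ k, u)) fun u hu => hr _ hu 0 u,
    Finset.sum_congr rfl fun j _ => by
      rw [hrestrict _ fun u hu => by rw [hr _ hu j 0, mul_zero], ← integral_const_mul],
    ← integral_finsetSum _ fun j _ => (hint _ (hcont j)).const_mul _,
    ← integral_sub (hint _ hacont)
      (integrable_finsetSum _ fun j _ => (hint _ (hcont j)).const_mul _)]
  refine (norm_setIntegral_le_of_norm_le_const (C := C * (r / c) ^ (N + 1))
    measure_Ioc_lt_top fun u hu => (hC _ u hu.1).trans ?_).trans_eq ?_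
  · have := hu.1.le
    have := hu.2
    gcongr
  · rw [Real.volume_real_Ioc_of_le hL, sub_zero, mul_assoc, ← pow_succ, div_pow, div_eq_mul_inv, mul_assoc]

/-- For `a` smooth compactly supported, `J(z) = ∫_0^∞ a(zu^k, u) du` has the full asymptotic
expansion `J(z) ~ Σ_j (1/(k j!)) z^{-(j+1)/k} ∫_0^∞ τ^{(j+1-k)/k} ∂₂^j a(τ,0) dτ`. -/
theorem extremum_model_expansion
    (k : ℕ) (hk : 1 ≤ k) (a : ℝ × ℝ → ℝ)
    (ha : ContDiff ℝ (⊤ : ℕ∞) a) (hasupp : HasCompactSupport a) :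
    ∀ N : ℕ,
      (fun z : ℝ =>
          (∫ u in Set.Ioi (0:ℝ), a (z * u ^ k, u)) -
          ∑ j ∈ Finset.range (N + 1),
            (1 / (k * (Nat.factorial j) : ℝ)) * z ^ (-((j : ℝ) + 1) / k) *
              ∫ τ in Set.Ioi (0:ℝ),
                τ ^ (((j : ℝ) + 1 - k) / k) * iteratedDeriv j (fun u => a (τ, u)) 0)
        =O[atTop] fun z : ℝ => z ^ (-((N : ℝ) + 2) / k) := by
  intro N
  obtain ⟨C, hC⟩ := extremum_model_expansion_of_pow hk ha hasupp N
  refine IsBigO.of_bound C ?_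
  filter_upwards [eventually_gt_atTop 0] with z hz
  have hk0 : (k : ℝ) ≠ 0 := by positivity
  obtain ⟨c, hc, rfl⟩ : ∃ c : ℝ, 0 < c ∧ c ^ k = z :=
    ⟨z ^ (k⁻¹ : ℝ), by positivity, Real.rpow_inv_natCast_pow hz.le (by omega)⟩
  have hrpow : ∀ m : ℕ, (c ^ k) ^ (-(m : ℝ) / k) = (c ^ m)⁻¹ := by
    intro m
    rw [← Real.rpow_natCast c k, ← Real.rpow_mul hc.le, mul_div_cancel₀ _ hk0,
      Real.rpow_neg hc.le, Real.rpow_natCast]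
  have hN := hrpow (N + 2)
  push_cast at hN
  rw [hN, Real.norm_of_nonneg (by positivity : 0 ≤ (c ^ (N + 2))⁻¹)]
  convert hC c hc using 3
  refine Finset.sum_congr rfl fun j _ => ?_
  have hj := hrpow (j + 1)
  push_cast at hj
  rw [integral_pow_mul_comp_mul_pow hk hc j (fun τ => (partialSnd^[j] a) (τ, 0)), hj]
  simp only [iteratedDeriv_slice ha]
  field_simp
end
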